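/- Let 𝔞 be an ideal of the ring O(ℝⁿ) of real-analytic functions on ℝⁿ. Define the saturation 𝔞~ of 𝔞 as the set of g ∈ O(ℝⁿ) such that for every x ∈ ℝⁿ there exist an open neighbourhood U of x, finitely many a₁, …, a_r ∈ 𝔞 and real-analytic functions c₁, …, c_r on U with g = c₁a₁ + ⋯ + c_r a_r on U. Define C₁(𝔞) := {g ∈ O(ℝⁿ) : for every compact K ⊆ ℝⁿ there exists h ∈ O(ℝⁿ) with h having no zeros on K and h·g ∈ 𝔞} and C₂(𝔞) := {g ∈ O(ℝⁿ) : for every x ∈ ℝⁿ there exists h ∈ O(ℝⁿ) with h(x) ≠ 0 and h·g ∈ 𝔞}. Then 𝔞~ = C₁(𝔞) = C₂(𝔞). -/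

import Mathlib

/-!
Three of the inclusions are elementary. Taking `K = {x}` gives `C₁(𝔞) ⊆ C₂(𝔞)`. Conversely a compact
set is covered by finitely many of the open sets `{hₓ ≠ 0}`, and `∑ hₓ²` is a multiplier without
zeros on it. If `h g ∈ 𝔞` and `h x ≠ 0`, then `g = h⁻¹ (h g)` near `x`, so `C₂(𝔞) ⊆ 𝔞~`.

The content is `𝔞~ ⊆ C₂(𝔞)`. A local expression `g = ∑ cᵢ aᵢ` near `x` says that `(1, c₁, …, c_r)` is
a local syzygy of `(g, -a₁, …, -a_r)` whose first entry does not vanish at `x`. It is enough to find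
a *global* real-analytic syzygy `(h, s₁, …, s_r)` with `h x ≠ 0` (`global_syzygy`), since then
`h g = ∑ sᵢ aᵢ ∈ 𝔞`. This is an instance of Theorem A for the coherent sheaf of relations, and it is
proved by complex-analytic means:

* the functions `g, aᵢ` extend holomorphically to an open neighbourhood `O` of `ℝⁿ` in `ℂⁿ`
  (`exists_complexification`);
* there is a holomorphic map from the open unit polydisc into `O` with a real-analytic right inverse
  over `ℝⁿ` (`straighten`). It is the composite of a product of conformal maps of the disc onto a
  thin strip with `w ↦ w · v(∑ wⱼ²)`, where `v` is chosen so that the image of the strip gets thin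
  as fast as prescribed while the map remains a bijection of `ℝⁿ`. So it suffices to work on
  a polydisc;
* the kernel of a matrix of holomorphic functions is locally finitely generated: Oka's coherence
  theorem (`oka`), by induction on the dimension from Weierstrass preparation and division;
* on a compact polydisc, such a kernel has finitely many generators on a whole neighbourhood, and a
  locally solvable holomorphic linear system is solvable on a whole neighbourhood (`propAB_PD`).
  Local data are merged across vertical segments in one complex variable, by an additive splitting
  (`cousin`) and by Cartan's multiplicative splitting (`cartan_slice`); sweeping a convex compact
  planar set by vertical lines, after sweeping each vertical segment by points, raises
  the dimension one variable at a time (`propAB_convex`);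
* polynomial approximation and exhaustion by compact polydiscs yield a section of the kernel on the
  open polydisc whose chosen entry does not vanish at the given point (`exists_global_section`).

Composing with the real-analytic right inverse and taking the real part of a suitable constant
multiple gives the real syzygy.
-/

/-- The ring of real-analytic functions on `ℝⁿ`, as a subring of the pointwise function ring. -/
noncomputable def ORn (n : ℕ) : Subring ((Fin n → ℝ) → ℝ) where
  carrier := {f | ∀ x, AnalyticAt ℝ f x}
  mul_mem' hf hg x := (hf x).mul (hg x)
  one_mem' _ := analyticAt_const
  add_mem' hf hg x := (hf x).add (hg x)
  zero_mem' _ := analyticAt_const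
  neg_mem' hf x := (hf x).neg

/-- The saturation of a set of global real-analytic functions on `ℝⁿ`:
`g` belongs to it if, locally at every point, `g` is a finite combination of elements of the set
with locally defined real-analytic coefficients. -/
def saturation (n : ℕ) (a : Set (ORn n)) : Set (ORn n) :=
  {g | ∀ x : Fin n → ℝ, ∃ U : Set (Fin n → ℝ), IsOpen U ∧ x ∈ U ∧
    ∃ (r : ℕ) (A : Fin r → ORn n) (c : Fin r → ((Fin n → ℝ) → ℝ)),
      (∀ i, A i ∈ a) ∧ (∀ i, ∀ y ∈ U, AnalyticAt ℝ (c i) y) ∧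
      ∀ y ∈ U, (g : (Fin n → ℝ) → ℝ) y = ∑ i, c i y * (A i : (Fin n → ℝ) → ℝ) y}

/-- `C₁(𝔞)`: the elements `g` such that for each compact `K` there is `h` without zeros on `K`
with `h·g ∈ 𝔞`. -/
def C1 (n : ℕ) (a : Set (ORn n)) : Set (ORn n) :=
  {g | ∀ K : Set (Fin n → ℝ), IsCompact K →
    ∃ h : ORn n, (∀ x ∈ K, (h : (Fin n → ℝ) → ℝ) x ≠ 0) ∧ h * g ∈ a}

/-- `C₂(𝔞)`: the elements `g` such that for each point `x` there is `h` with `h(x) ≠ 0`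
and `h·g ∈ 𝔞`. -/
def C2 (n : ℕ) (a : Set (ORn n)) : Set (ORn n) :=
  {g | ∀ x : Fin n → ℝ,
    ∃ h : ORn n, (h : (Fin n → ℝ) → ℝ) x ≠ 0 ∧ h * g ∈ a}

set_option autoImplicit false
set_option linter.unusedSectionVars false
open Filter Topology Set MeasureTheory Metric

/-! ### Osgood's lemma and holomorphic dependence on parameters -/

/-- The Cauchy integral formula on a polydisc, for a continuous separately holomorphic function. -/
theorem cauchy_torus (n : ℕ) : ∀ (f : (Fin n → ℂ) → ℂ) (c : Fin n → ℂ) (R : ℝ), 0 < R →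
    ContinuousOn f (closedBall c R) →
    (∀ z ∈ closedBall c R, ∀ i, DifferentiableAt ℂ (fun t => f (Function.update z i t)) (z i)) →
    ∀ w ∈ ball c R,
    (∯ ζ in T(c, fun _ => R), (∏ i, (ζ i - w i)⁻¹) * f ζ) =
      (2 * Real.pi * Complex.I) ^ n * f w := by
  induction n with
  | zero =>
    intro f c R _ _ _ w _
    rw [torusIntegral_dim0]
    simp [Subsingleton.elim c w]
  | succ n ih =>
    intro f c R hR hf hd w hw
    have hmem : ∀ θ, torusMap c (fun _ => R) θ ∈ closedBall c R := by
      intro θ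
      rw [mem_closedBall, dist_pi_le_iff hR.le]
      intro i
      simp [torusMap, dist_eq_norm, abs_of_pos hR]
    have hne : ∀ θ i, torusMap c (fun _ => R) θ i - w i ≠ 0 := by
      intro θ i h
      have h1 : dist (w i) (c i) < R := (dist_pi_lt_iff hR).1 hw i
      rw [← sub_eq_zero.1 h] at h1
      simp [torusMap, dist_eq_norm, abs_of_pos hR] at h1
    have hcm : Continuous (torusMap c (fun _ => R)) := by
      unfold torusMap; fun_prop
    have hInt : TorusIntegrable (fun ζ => (∏ i, (ζ i - w i)⁻¹) * f ζ) c (fun _ => R) := by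
      apply Continuous.integrableOn_Icc
      refine Continuous.mul ?_ (hf.comp_continuous hcm hmem)
      refine continuous_finsetProd _ fun i _ => Continuous.inv₀ ?_ (fun θ => hne θ i)
      exact (((continuous_apply i).comp hcm).sub continuous_const)
    rw [torusIntegral_succ hInt]
    have hcons : ∀ x ∈ closedBall (c 0) R, ∀ y ∈ closedBall (c ∘ Fin.succ) R,
        (Fin.cons x y : Fin (n+1) → ℂ) ∈ closedBall c R := by
      intro x hx y hy
      rw [mem_closedBall, dist_pi_le_iff hR.le] at hy ⊢
      intro i
      refine Fin.cases ?_ (fun j => ?_) i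
      · simpa using! hx
      · simpa using! hy j
    have hw' : w ∘ Fin.succ ∈ ball (c ∘ Fin.succ) R := by
      rw [mem_ball, dist_pi_lt_iff hR] at hw ⊢
      exact fun i => hw i.succ
    have hw0 : w 0 ∈ ball (c 0) R := (dist_pi_lt_iff hR).1 hw 0
    have key : ∀ x ∈ sphere (c 0) R,
        (∯ y in T(c ∘ Fin.succ, (fun _ => R) ∘ Fin.succ),
          (∏ i, ((Fin.cons x y : Fin (n+1) → ℂ) i - w i)⁻¹) * f (Fin.cons x y)) =
        (x - w 0)⁻¹ • ((2 * Real.pi * Complex.I) ^ n * f (Fin.cons x (w ∘ Fin.succ))) := by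
      intro x hx
      have hx' := sphere_subset_closedBall hx
      have := ih (fun y => f (Fin.cons x y)) (c ∘ Fin.succ) R hR ?_ ?_ _ hw'
      · rw [← this, smul_eq_mul, ← torusIntegral_const_mul]
        congr 1
        funext y
        rw [Fin.prod_univ_succ]
        simp [mul_assoc]
      · refine hf.comp ?_ (hcons x hx')
        apply Continuous.continuousOn
        exact continuous_const.finCons continuous_id
      · intro z hz i
        have := hd _ (hcons x hx' z hz) i.succ
        simpa using this
    rw [circleIntegral.integral_congr hR.le key]
    rw [Complex.circleIntegral_sub_inv_smul_of_differentiable_on_off_countable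
      countable_empty hw0]
    · rw [smul_eq_mul, pow_succ']
      have : (Fin.cons (w 0) (w ∘ Fin.succ) : Fin (n+1) → ℂ) = w := Fin.cons_self_tail w
      rw [this]; ring
    · refine continuousOn_const.mul (hf.comp ?_ fun x hx => hcons x hx _ (ball_subset_closedBall hw'))
      apply Continuous.continuousOn
      exact Continuous.finCons (A := fun _ => ℂ) (f := fun z : ℂ => z) continuous_id continuous_const
    · intro x hx
      have h := hd _ (hcons x (ball_subset_closedBall hx.1) _ (ball_subset_closedBall hw')) 0
      simp only [Fin.update_cons_zero, Fin.cons_zero] at h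
      exact h.const_mul _

/-- Osgood's lemma: a continuous, separately holomorphic function is jointly analytic. The Cauchy
kernel is an analytic map into the Banach algebra of continuous functions on the torus. -/
theorem osgood_pi {n : ℕ} {f : (Fin n → ℂ) → ℂ} {U : Set (Fin n → ℂ)} (hU : IsOpen U)
    (hf : ContinuousOn f U)
    (hd : ∀ z ∈ U, ∀ i, DifferentiableAt ℂ (fun t => f (Function.update z i t)) (z i)) :
    AnalyticOnNhd ℂ f U := by
  intro c hc
  obtain ⟨R, hR, hRU⟩ := Metric.nhds_basis_closedBall.mem_iff.1 (hU.mem_nhds hc)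
  have hcau := cauchy_torus n f c R hR (hf.mono hRU) (fun z hz => hd z (hRU hz))
  let T : Type := (Icc (0 : Fin n → ℝ) (fun _ => 2 * Real.pi) : Set (Fin n → ℝ))
  let μ : Measure T := Measure.comap Subtype.val volume
  have hμ : IsFiniteMeasure μ := by
    constructor
    show μ univ < ⊤
    rw [Measure.comap_apply _ Subtype.val_injective
      (fun s hs => (measurableSet_Icc.subtype_image hs)) _ MeasurableSet.univ]
    simpa using! isCompact_Icc.measure_lt_top
  have hcT : CompactSpace T := isCompact_iff_compactSpace.1 isCompact_Icc
  have hcm : Continuous (torusMap c (fun _ => R)) := by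
    unfold torusMap; fun_prop
  have hmem : ∀ θ, torusMap c (fun _ => R) θ ∈ closedBall c R := by
    intro θ
    rw [mem_closedBall, dist_pi_le_iff hR.le]
    intro i
    simp [torusMap, dist_eq_norm, abs_of_pos hR]
  let ζ : Fin n → C(T, ℂ) := fun i => ⟨fun θ => torusMap c (fun _ => R) θ.1 i,
    (continuous_apply i).comp (hcm.comp continuous_subtype_val)⟩
  let G : C(T, ℂ) := ⟨fun θ => (∏ i, (R : ℂ) * Complex.exp (θ.1 i * Complex.I) * Complex.I) *
    f (torusMap c (fun _ => R) θ.1), by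
      refine Continuous.mul (continuous_finsetProd _ fun i _ => ?_) ?_
      · have h : Continuous fun θ : T => θ.1 i := (continuous_apply i).comp continuous_subtype_val
        exact (continuous_const.mul (Complex.continuous_exp.comp
          ((Complex.continuous_ofReal.comp h).mul continuous_const))).mul continuous_const
      exact ((hf.mono hRU).comp_continuous hcm hmem).comp continuous_subtype_val⟩
  let L : C(T, ℂ) →L[ℂ] ℂ := LinearMap.mkContinuous
    { toFun := fun φ => ∫ θ, φ θ * G θ ∂μ
      map_add' := by
        intro a b
        simp only [ContinuousMap.add_apply, add_mul]
        exact integral_add ((a * G).continuous.integrable_of_hasCompactSupport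
          (HasCompactSupport.of_compactSpace _)) ((b * G).continuous.integrable_of_hasCompactSupport
          (HasCompactSupport.of_compactSpace _))
      map_smul' := by
        intro a b
        simp only [ContinuousMap.smul_apply, smul_eq_mul, mul_assoc, RingHom.id_apply]
        exact integral_const_mul _ _ }
    (‖G‖ * μ.real univ) (by
      intro φ
      refine (norm_integral_le_of_norm_le_const (C := ‖φ‖ * ‖G‖) (Eventually.of_forall
        fun θ => ?_)).trans (le_of_eq (by ring))
      rw [norm_mul]
      exact mul_le_mul (φ.norm_coe_le_norm θ) (G.norm_coe_le_norm θ) (norm_nonneg _)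
        (norm_nonneg _))
  let κ : (Fin n → ℂ) → C(T, ℂ) := fun w => ∏ i, Ring.inverse (ζ i - algebraMap ℂ C(T, ℂ) (w i))
  have hne : ∀ w ∈ ball c R, ∀ i (θ : T), (ζ i - algebraMap ℂ C(T, ℂ) (w i)) θ ≠ 0 := by
    intro w hw i θ h
    have h1 : dist (w i) (c i) < R := (dist_pi_lt_iff hR).1 hw i
    have h2 : torusMap c (fun _ => R) θ.1 i = w i := by
      rw [← sub_eq_zero]; simpa [ζ] using h
    rw [← h2] at h1
    simp [torusMap, dist_eq_norm, abs_of_pos hR] at h1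
  have hunit : ∀ w ∈ ball c R, ∀ i, IsUnit (ζ i - algebraMap ℂ C(T, ℂ) (w i)) := by
    intro w hw i
    exact ContinuousMap.isUnit_iff_forall_ne_zero _ |>.2 (hne w hw i)
  have hκ : AnalyticAt ℂ κ c := by
    refine Finset.analyticAt_fun_prod _ fun i _ => ?_
    obtain ⟨u, hu⟩ := hunit c (mem_ball_self hR) i
    have h1 : AnalyticAt ℂ Ring.inverse (ζ i - algebraMap ℂ C(T, ℂ) (c i)) := by
      rw [← hu]; exact analyticAt_inverse u
    have h2 : AnalyticAt ℂ (fun w : Fin n → ℂ => ζ i - algebraMap ℂ C(T, ℂ) (w i)) c := by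
      refine analyticAt_const.sub ?_
      have h3 := ((Algebra.linearMap ℂ C(T, ℂ)).mkContinuous 1 (by
        intro x; simp [Algebra.linearMap_apply, norm_algebraMap]
        exact mul_le_of_le_one_right (norm_nonneg _)
          ((ContinuousMap.norm_le _ zero_le_one).2 (by simp)))).comp
        (ContinuousLinearMap.proj (R := ℂ) (φ := fun _ : Fin n => ℂ) i) |>.analyticAt c
      exact h3
    exact AnalyticAt.comp (g := Ring.inverse) (f := fun w : Fin n → ℂ => ζ i - algebraMap ℂ C(T, ℂ) (w i)) h1 h2
  have hmain : AnalyticAt ℂ (fun w => ((2 * Real.pi * Complex.I) ^ n)⁻¹ * L (κ w)) c :=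
    analyticAt_const.mul ((L.analyticAt _).comp hκ)
  refine hmain.congr ?_
  filter_upwards [ball_mem_nhds c hR] with w hw
  have hpi : (2 * Real.pi * Complex.I : ℂ) ^ n ≠ 0 := pow_ne_zero _ Complex.two_pi_I_ne_zero
  rw [inv_mul_eq_iff_eq_mul₀ hpi, ← hcau w hw]
  have hinv : ∀ i (θ : T), Ring.inverse (ζ i - algebraMap ℂ C(T, ℂ) (w i)) θ =
      (torusMap c (fun _ => R) θ.1 i - w i)⁻¹ := by
    intro i θ
    have h := congrArg (fun g : C(T, ℂ) => g θ) (Ring.mul_inverse_cancel _ (hunit w hw i))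
    simp only [ContinuousMap.mul_apply, ContinuousMap.one_apply] at h
    have := eq_inv_of_mul_eq_one_right h
    simpa [ζ] using this
  have h1 : L (κ w) = ∫ θ, κ w θ * G θ ∂μ := rfl
  have h2 : ∀ θ : T, κ w θ * G θ = (fun θ : Fin n → ℝ =>
      (∏ i, (R : ℂ) * Complex.exp (θ i * Complex.I) * Complex.I) •
      ((∏ i, (torusMap c (fun _ => R) θ i - w i)⁻¹) * f (torusMap c (fun _ => R) θ))) θ.1 := by
    intro θ
    have : κ w θ = ∏ i, (torusMap c (fun _ => R) θ.1 i - w i)⁻¹ := by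
      simp only [κ, ContinuousMap.coe_prod, Finset.prod_apply, hinv]
    rw [this]
    simp only [G, ContinuousMap.coe_mk, smul_eq_mul]
    ring
  rw [h1]
  simp_rw [h2]
  rw [integral_subtype_comap measurableSet_Icc (fun θ : Fin n → ℝ =>
      (∏ i, (R : ℂ) * Complex.exp (θ i * Complex.I) * Complex.I) •
      ((∏ i, (torusMap c (fun _ => R) θ i - w i)⁻¹) * f (torusMap c (fun _ => R) θ)))]
  rfl

section Osgood

variable {E : Type*} [NormedAddCommGroup E] [NormedSpace ℂ E] [FiniteDimensional ℂ E]

/-- Osgood's lemma in coordinate-free form. -/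
theorem osgood {f : E → ℂ} {U : Set E} (hU : IsOpen U) (hf : ContinuousOn f U)
    (hd : ∀ x ∈ U, ∀ v, DifferentiableAt ℂ (fun t : ℂ => f (x + t • v)) 0) :
    AnalyticOnNhd ℂ f U := by
  let e : E ≃L[ℂ] (Fin (Module.finrank ℂ E) → ℂ) :=
    ContinuousLinearEquiv.ofFinrankEq (by simp)
  have h1 : AnalyticOnNhd ℂ (fun z => f (e.symm z)) (e.symm ⁻¹' U) := by
    refine osgood_pi (hU.preimage e.symm.continuous)
      (hf.comp e.symm.continuous.continuousOn (fun z hz => hz)) ?_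
    intro z hz i
    have h2 := hd (e.symm z) hz (e.symm (Pi.single i 1))
    have h3 : DifferentiableAt ℂ (fun t : ℂ => t - z i) (z i) := by fun_prop
    have h4 := DifferentiableAt.comp (z i)
      (g := fun t : ℂ => f (e.symm z + t • e.symm (Pi.single i 1)))
      (by simpa using h2) h3
    refine h4.congr_of_eventuallyEq (Eventually.of_forall fun t => ?_)
    show f _ = f _
    congr 1
    rw [← map_smul, ← map_add]
    congr 1
    ext j
    by_cases hj : j = i
    · subst hj; simp
    · simp [hj]
  intro x hx
  have h5 : AnalyticAt ℂ (fun z => f (e.symm z)) (e x) := h1 _ (by simpa using hx)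
  have h6 := h5.comp (f := fun y => e y) (e.toContinuousLinearMap.analyticAt x)
  simpa [Function.comp_def] using h6

theorem AnalyticOnNhd.along_line {f : E → ℂ} {U : Set E} (hf : AnalyticOnNhd ℂ f U) (x v : E) :
    DifferentiableOn ℂ (fun t : ℂ => f (x + t • v)) ((fun t : ℂ => x + t • v) ⁻¹' U) := by
  intro t ht
  have h1 : DifferentiableAt ℂ f (x + t • v) := (hf _ ht).differentiableAt
  exact (h1.comp t (f := fun t : ℂ => x + t • v) (by fun_prop)).differentiableWithinAt

/-- An integral of holomorphic functions dominated by an integrable function is holomorphic. -/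
theorem analyticOnNhd_integral {α : Type*} [MeasurableSpace α] {μ : Measure α} {F : E → α → ℂ}
    {b : α → ℝ} {U : Set E} (hU : IsOpen U)
    (hF : ∀ᵐ a ∂μ, AnalyticOnNhd ℂ (fun x => F x a) U)
    (hm : ∀ x ∈ U, AEStronglyMeasurable (F x) μ)
    (hb : ∀ᵐ a ∂μ, ∀ x ∈ U, ‖F x a‖ ≤ b a) (hbi : Integrable b μ) :
    AnalyticOnNhd ℂ (fun x => ∫ a, F x a ∂μ) U := by
  refine osgood hU ?_ ?_
  · refine continuousOn_of_dominated (bound := b) hm ?_ hbi ?_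
    · intro x hx
      filter_upwards [hb] with a ha using ha x hx
    · filter_upwards [hF] with a ha using ha.continuousOn
  · intro x hx v
    have hline : Continuous fun t : ℂ => x + t • v := by fun_prop
    have hO : IsOpen ((fun t : ℂ => x + t • v) ⁻¹' U) := hU.preimage hline
    obtain ⟨r, hr, hrU⟩ := Metric.isOpen_iff.1 hO 0 (by simpa using hx)
    have hin : ∀ t ∈ ball (0 : ℂ) r, x + t • v ∈ U := fun t ht => hrU ht
    have hdo : ∀ᵐ a ∂μ, DifferentiableOn ℂ (fun t : ℂ => F (x + t • v) a) (ball 0 r) := by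
      filter_upwards [hF] with a ha using (ha.along_line x v).mono hrU
    have hderiv : ∀ᵐ a ∂μ, ∀ t ∈ ball (0 : ℂ) (r / 2),
        HasDerivAt (fun t : ℂ => F (x + t • v) a) (deriv (fun t : ℂ => F (x + t • v) a) t) t := by
      filter_upwards [hdo] with a ha t ht
      exact (ha.differentiableAt (isOpen_ball.mem_nhds (ball_subset_ball (by linarith) ht))).hasDerivAt
    have h0 : (0 : ℂ) ∈ ball (0 : ℂ) (r / 2) := mem_ball_self (by linarith)
    refine ((hasDerivAt_integral_of_dominated_loc_of_deriv_le (μ := μ)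
      (F := fun t a => F (x + t • v) a)
      (F' := fun t a => deriv (fun t : ℂ => F (x + t • v) a) t)
      (bound := fun a => b a / (r / 2 / 2)) (s := ball 0 (r / 2 / 2))
      (ball_mem_nhds _ (by linarith)) ?_ ?_ ?_ ?_ ?_ ?_).2).differentiableAt
    · filter_upwards [ball_mem_nhds (0 : ℂ) hr] with t ht using hm _ (hin t ht)
    · refine hbi.mono' (hm _ (by simpa using hx)) ?_
      filter_upwards [hb] with a ha using ha _ (by simpa using hx)
    · have hseq : Tendsto (fun k : ℕ => (r / 2 : ℂ) * ((1 / ((k : ℝ) + 1) : ℝ) : ℂ)) atTop (𝓝[≠] 0) := by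
        refine tendsto_nhdsWithin_iff.2 ⟨?_, Eventually.of_forall fun k => ?_⟩
        · have := tendsto_one_div_add_atTop_nhds_zero_nat (𝕜 := ℝ)
          have h2 := (Complex.continuous_ofReal.tendsto 0).comp this
          simpa using h2.const_mul (r / 2 : ℂ)
        · have : (r : ℂ) ≠ 0 := by exact_mod_cast hr.ne'
          have h2 : ((1 / ((k : ℝ) + 1) : ℝ) : ℂ) ≠ 0 := by
            exact_mod_cast (by positivity : (1 / ((k : ℝ) + 1) : ℝ) ≠ 0)
          exact mul_ne_zero (div_ne_zero this two_ne_zero) h2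
      refine aestronglyMeasurable_of_tendsto_ae atTop (f := fun k : ℕ => fun a =>
        slope (fun t : ℂ => F (x + t • v) a) 0 ((r / 2 : ℂ) * ((1 / ((k : ℝ) + 1) : ℝ) : ℂ))) ?_ ?_
      · intro k
        simp only [slope, vsub_eq_sub, smul_eq_mul]
        refine AEStronglyMeasurable.const_mul ((hm _ (hin _ ?_)).sub (hm _ (by simpa using hx))) _
        rw [mem_ball_zero_iff, norm_mul, Complex.norm_real, norm_div, Complex.norm_real]
        have h1 : ‖(1 / ((k : ℝ) + 1) : ℝ)‖ ≤ 1 := by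
          rw [Real.norm_of_nonneg (by positivity)]
          exact div_le_one_of_le₀ (by linarith [(Nat.cast_nonneg k : (0 : ℝ) ≤ k)]) (by positivity)
        rw [Real.norm_of_nonneg hr.le]
        have h2 : ‖(2 : ℂ)‖ = 2 := by simp
        rw [h2]
        nlinarith
      · filter_upwards [hderiv] with a ha
        exact (hasDerivAt_iff_tendsto_slope.1 (ha 0 h0)).comp hseq
    · filter_upwards [hb, hdo] with a ha hda t ht
      refine Complex.norm_deriv_le_of_forall_mem_sphere_norm_le (by linarith) ?_ ?_
      · refine DifferentiableOn.diffContOnCl (hda.mono ?_)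
        refine closure_ball_subset_closedBall.trans ?_
        refine closedBall_subset_ball' ?_
        rw [mem_ball] at ht; linarith
      · intro z hz
        refine ha _ (hin z ?_)
        rw [mem_sphere] at hz; rw [mem_ball] at ht ⊢
        linarith [dist_triangle z t 0]
    · exact hbi.div_const _
    · filter_upwards [hderiv] with a ha t ht using ha t (ball_subset_ball (by linarith) ht)

theorem analyticOnNhd_circleIntegral {F : E → ℂ → ℂ} {U : Set E} {c : ℂ} {R : ℝ} (hR : 0 ≤ R)
    (hU : IsOpen U) (hF : ∀ ζ ∈ sphere c R, AnalyticOnNhd ℂ (fun x => F x ζ) U)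
    (hc : ContinuousOn (fun q : E × ℂ => F q.1 q.2) (U ×ˢ sphere c R)) :
    AnalyticOnNhd ℂ (fun x => ∮ ζ in C(c, R), F x ζ) U := by
  intro x hx
  have := FiniteDimensional.proper ℂ E
  obtain ⟨r, hr, hrU⟩ := Metric.nhds_basis_closedBall.mem_iff.1 (hU.mem_nhds hx)
  obtain ⟨B, hB⟩ := ((isCompact_closedBall x r).prod (isCompact_sphere c R)).exists_bound_of_continuousOn
    (hc.mono (prod_mono hrU subset_rfl))
  have hsub := (ball_subset_closedBall (x := x) (ε := r)).trans hrU
  simp only [circleIntegral, intervalIntegral.integral_of_le Real.two_pi_pos.le]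
  refine analyticOnNhd_integral (E := E) (U := ball x r) (b := fun _ => R * B) isOpen_ball ?_ ?_ ?_ ?_ x
    (mem_ball_self hr)
  · refine Eventually.of_forall fun θ => ?_
    exact analyticOnNhd_const.smul ((hF _ (circleMap_mem_sphere c hR θ)).mono hsub)
  · intro y hy
    refine Continuous.aestronglyMeasurable ?_
    rw [show deriv (circleMap c R) = _ from funext (deriv_circleMap c R)]
    have h1 : Continuous fun θ => circleMap 0 R θ * Complex.I := by fun_prop
    refine h1.smul ?_
    exact hc.comp_continuous (f := fun θ => (y, circleMap c R θ)) (by fun_prop)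
      (fun θ => ⟨hsub hy, circleMap_mem_sphere c hR θ⟩)
  · refine Eventually.of_forall fun θ y hy => ?_
    rw [norm_smul]
    refine mul_le_mul ?_ (hB (y, circleMap c R θ)
      ⟨ball_subset_closedBall hy, circleMap_mem_sphere c hR θ⟩) (norm_nonneg _) hR
    simp [abs_of_nonneg hR]
  · exact integrable_const _

theorem analyticOnNhd_of_tendsto {ι : Type*} {l : Filter ι} [l.NeBot] {f : ι → E → ℂ} {g : E → ℂ}
    {U : Set E} (hU : IsOpen U) (hf : ∀ k, AnalyticOnNhd ℂ (f k) U)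
    (h : TendstoLocallyUniformlyOn f g l U) : AnalyticOnNhd ℂ g U := by
  refine osgood hU (h.continuousOn (Frequently.of_forall fun k => (hf k).continuousOn)) ?_
  intro x hx v
  have hline : Continuous fun t : ℂ => x + t • v := by fun_prop
  have hO : IsOpen ((fun t : ℂ => x + t • v) ⁻¹' U) := hU.preimage hline
  have h2 : TendstoLocallyUniformlyOn (fun k => f k ∘ (fun t : ℂ => x + t • v))
      (g ∘ (fun t : ℂ => x + t • v)) l ((fun t : ℂ => x + t • v) ⁻¹' U) :=
    h.comp _ (fun t ht => ht) hline.continuousOn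
  have h3 := h2.differentiableOn (Eventually.of_forall fun k => (hf k).along_line x v) hO
  exact h3.differentiableAt (hO.mem_nhds (by simpa using hx))

theorem analyticOnNhd_tsum {f : ℕ → E → ℂ} {u : ℕ → ℝ} {U : Set E} (hU : IsOpen U)
    (hf : ∀ k, AnalyticOnNhd ℂ (f k) U) (hu : Summable u) (hb : ∀ k, ∀ x ∈ U, ‖f k x‖ ≤ u k) :
    AnalyticOnNhd ℂ (fun x => ∑' k, f k x) U := by
  refine analyticOnNhd_of_tendsto (l := atTop) hU (f := fun (s : Finset ℕ) x => ∑ k ∈ s, f k x) ?_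
    (tendstoUniformlyOn_tsum hu hb).tendstoLocallyUniformlyOn
  intro s
  exact Finset.analyticOnNhd_fun_sum _ fun k _ => hf k

end Osgood

/-! ### Division by a monic polynomial with holomorphic coefficients -/

/-- The polynomial function `∑ v k * w ^ k` of degree `< d`. -/
noncomputable def pe {d : ℕ} (v : Fin d → ℂ) (w : ℂ) : ℂ := ∑ k, v k * w ^ (k : ℕ)

/-- The monic polynomial function of degree `d` with lower coefficients `b`. -/
noncomputable def Wm {d : ℕ} (b : Fin d → ℂ) (w : ℂ) : ℂ := w ^ d + pe b w

/-- The coefficient of `w ^ k` in `(ζ ^ j - w ^ j) / (ζ - w)`. -/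
noncomputable def dq (j k : ℕ) (ζ : ℂ) : ℂ := if k < j then ζ ^ (j - 1 - k) else 0

theorem pow_sub_dq {d j : ℕ} (hj : j ≤ d) (ζ w : ℂ) :
    ζ ^ j - w ^ j = (ζ - w) * ∑ k : Fin d, dq j k ζ * w ^ (k : ℕ) := by
  have h := (Commute.all w ζ).mul_geom_sum₂ j
  have h2 : ∑ k : Fin d, dq j k ζ * w ^ (k : ℕ) = ∑ i ∈ Finset.range j, w ^ i * ζ ^ (j - 1 - i) := by
    rw [Fin.sum_univ_eq_sum_range (fun k => dq j k ζ * w ^ k) d,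
      ← Finset.sum_subset (Finset.range_mono hj)]
    · refine Finset.sum_congr rfl fun i hi => ?_
      simp [dq, Finset.mem_range.1 hi, mul_comm]
    · intro i _ hi
      simp [dq, Finset.mem_range.not.1 hi]
  rw [h2]
  linear_combination h

/-- The coefficients of the divided difference of `pe v`. -/
noncomputable def ddc {d : ℕ} (v : Fin d → ℂ) (ζ : ℂ) (k : Fin d) : ℂ := ∑ j : Fin d, v j * dq j k ζ

theorem pe_sub {d : ℕ} (v : Fin d → ℂ) (ζ w : ℂ) :
    pe v ζ - pe v w = (ζ - w) * pe (ddc v ζ) w := by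
  simp only [pe, ddc, ← Finset.sum_sub_distrib, ← mul_sub]
  rw [Finset.sum_congr rfl fun (j : Fin d) _ => by rw [pow_sub_dq j.2.le ζ w]]
  simp only [Finset.mul_sum, Finset.sum_mul]
  rw [Finset.sum_comm]
  exact Finset.sum_congr rfl fun _ _ => Finset.sum_congr rfl fun _ _ => by ring

/-- The coefficients of the divided difference of `Wm b`. -/
noncomputable def ddm {d : ℕ} (b : Fin d → ℂ) (ζ : ℂ) (k : Fin d) : ℂ := dq d k ζ + ddc b ζ k

theorem pe_add {d : ℕ} (u v : Fin d → ℂ) (w : ℂ) : pe (u + v) w = pe u w + pe v w := by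
  simp [pe, add_mul, Finset.sum_add_distrib]

theorem Wm_sub {d : ℕ} (b : Fin d → ℂ) (ζ w : ℂ) :
    Wm b ζ - Wm b w = (ζ - w) * pe (ddm b ζ) w := by
  have h1 := pe_sub b ζ w
  have h2 := pow_sub_dq le_rfl (d := d) ζ w
  have h3 : pe (ddm b ζ) w = (∑ k : Fin d, dq d k ζ * w ^ (k : ℕ)) + pe (ddc b ζ) w := by
    exact pe_add (fun k : Fin d => dq d k ζ) (ddc b ζ) w
  rw [h3]
  unfold Wm
  linear_combination h1 + h2

theorem analyticAt_dq {j k : ℕ} (ζ : ℂ) : AnalyticAt ℂ (dq j k) ζ := by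
  unfold dq
  split_ifs <;> fun_prop

section Division

variable {E : Type*} [NormedAddCommGroup E] [NormedSpace ℂ E]

theorem analyticAt_pe {F : Type*} [NormedAddCommGroup F] [NormedSpace ℂ F] {d : ℕ} {v : F → Fin d → ℂ} {w : F → ℂ} {x : F}
    (hv : AnalyticAt ℂ v x) (hw : AnalyticAt ℂ w x) : AnalyticAt ℂ (fun z => pe (v z) (w z)) x := by
  unfold pe
  rw [analyticAt_pi_iff] at hv
  exact Finset.analyticAt_fun_sum _ fun k _ => (hv k).mul (hw.pow _)

theorem analyticAt_Wm {F : Type*} [NormedAddCommGroup F] [NormedSpace ℂ F] {d : ℕ} {v : F → Fin d → ℂ} {w : F → ℂ} {x : F}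
    (hv : AnalyticAt ℂ v x) (hw : AnalyticAt ℂ w x) : AnalyticAt ℂ (fun z => Wm (v z) (w z)) x := by
  unfold Wm
  exact (hw.pow _).add (analyticAt_pe hv hw)

theorem analyticAt_ddc {F : Type*} [NormedAddCommGroup F] [NormedSpace ℂ F] {d : ℕ} {v : F → Fin d → ℂ} {w : F → ℂ} {x : F}
    (hv : AnalyticAt ℂ v x) (hw : AnalyticAt ℂ w x) (k : Fin d) :
    AnalyticAt ℂ (fun z => ddc (v z) (w z) k) x := by
  unfold ddc
  rw [analyticAt_pi_iff] at hv
  exact Finset.analyticAt_fun_sum _ fun k _ => (hv k).mul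
    (AnalyticAt.fun_comp (g := dq _ _) (analyticAt_dq _) hw)

theorem analyticAt_ddm {F : Type*} [NormedAddCommGroup F] [NormedSpace ℂ F] {d : ℕ} {v : F → Fin d → ℂ} {w : F → ℂ} {x : F}
    (hv : AnalyticAt ℂ v x) (hw : AnalyticAt ℂ w x) (k : Fin d) :
    AnalyticAt ℂ (fun z => ddm (v z) (w z) k) x := by
  unfold ddm
  exact (AnalyticAt.fun_comp (g := dq _ _) (analyticAt_dq _) hw).add (analyticAt_ddc hv hw k)

theorem Wm_eq_eval {d : ℕ} (b : Fin d → ℂ) (w : ℂ) :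
    Wm b w = (Polynomial.X ^ d + ∑ k : Fin d, Polynomial.C (b k) * Polynomial.X ^ (k : ℕ)).eval w := by
  simp [Wm, pe, Polynomial.eval_finsetSum]

theorem Wm_poly_monic {d : ℕ} (b : Fin d → ℂ) :
    (Polynomial.X ^ d + ∑ k : Fin d, Polynomial.C (b k) * Polynomial.X ^ (k : ℕ)).Monic := by
  refine Polynomial.monic_X_pow_add ?_
  rw [Polynomial.degree_lt_iff_coeff_zero]
  intro m hm
  simp only [Polynomial.finsetSum_coeff, Polynomial.coeff_C_mul, Polynomial.coeff_X_pow]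
  refine Finset.sum_eq_zero fun k _ => ?_
  have := k.2
  rw [if_neg (by omega), mul_zero]

theorem Wm_eventually_ne {d : ℕ} (b : Fin d → ℂ) (w : ℂ) : ∀ᶠ ζ in 𝓝[≠] w, Wm b ζ ≠ 0 := by
  have h1 : {ζ | Wm b ζ = 0}.Finite := by
    have := Polynomial.finite_setOfPred_isRoot (Wm_poly_monic b).ne_zero
    simpa only [Polynomial.IsRoot, ← Wm_eq_eval] using this
  have h2 : (({ζ | Wm b ζ = 0} \ {w})ᶜ) ∈ 𝓝 w := (h1.sdiff).isClosed.isOpen_compl.mem_nhds (by simp)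
  filter_upwards [mem_nhdsWithin_of_mem_nhds h2, self_mem_nhdsWithin] with ζ h3 h4 h5
  exact h3 ⟨h5, h4⟩

/-- A circle around `w₀` and a neighbourhood of `y` on which the contour integrals used in the
division by `Wm b` make sense. -/
theorem division_nhds {d : ℕ} {b : E → Fin d → ℂ} {P : ℂ × E → Prop}
    {w₀ : ℂ} {y : E} (hb : ∀ᶠ z in 𝓝 y, AnalyticAt ℂ b z) (hP : ∀ᶠ z in 𝓝 (w₀, y), P z) :
    ∃ ε > 0, ∃ U : Set E, IsOpen U ∧ y ∈ U ∧
      (∀ z ∈ closedBall w₀ ε ×ˢ U, P z) ∧ ∀ ζ ∈ sphere w₀ ε, ∀ z ∈ U, Wm (b z) ζ ≠ 0 := by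
  rw [nhds_prod_eq] at hP
  obtain ⟨s, hs, t, ht, hst⟩ := Filter.eventually_prod_iff.1 hP |> fun ⟨a, ha, b, hb, h⟩ =>
    (⟨{x | a x}, ha, {x | b x}, hb, fun x hx y hy => h hx hy⟩ :
      ∃ s ∈ 𝓝 w₀, ∃ t ∈ 𝓝 y, ∀ x ∈ s, ∀ y ∈ t, P (x, y))
  obtain ⟨ε₁, hε₁, h₁⟩ := Metric.nhds_basis_closedBall.mem_iff.1 hs
  obtain ⟨ε₂, hε₂, h₂⟩ := Metric.mem_nhdsWithin_iff.1 (Wm_eventually_ne (b y) w₀)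
  let ε := min ε₁ (ε₂ / 2)
  have hε : 0 < ε := lt_min hε₁ (by linarith)
  have hne : ∀ ζ ∈ sphere w₀ ε, Wm (b y) ζ ≠ 0 := by
    intro ζ hζ
    refine h₂ ⟨?_, ?_⟩
    · rw [mem_ball, mem_sphere.1 hζ]
      exact (min_le_right _ _).trans_lt (by linarith)
    · rintro rfl
      rw [mem_sphere, dist_self] at hζ
      exact hε.ne hζ
  have h3 : ∀ᶠ z in 𝓝 y, ∀ ζ ∈ sphere w₀ ε, Wm (b z) ζ ≠ 0 := by
    refine (isCompact_sphere w₀ ε).eventually_forall_of_forall_eventually ?_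
    intro ζ hζ
    have : ContinuousAt (fun z : E × ℂ => Wm (b z.1) z.2) (y, ζ) :=
      (analyticAt_Wm (F := E × ℂ) (AnalyticAt.fun_comp hb.self_of_nhds analyticAt_fst)
        analyticAt_snd).continuousAt
    exact this.eventually_ne (hne ζ hζ)
  have h4 : ∀ᶠ z in 𝓝 y, z ∈ t ∧ ∀ ζ ∈ sphere w₀ ε, Wm (b z) ζ ≠ 0 :=
    (eventually_mem_set.2 ht).and h3
  obtain ⟨U, hU, hUo, hyU⟩ := _root_.eventually_nhds_iff.1 h4
  refine ⟨ε, hε, U, hUo, hyU, ?_, fun ζ hζ z hz => (hU z hz).2 ζ hζ⟩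
  rintro ⟨w, z⟩ ⟨hw, hz⟩
  exact hst w (h₁ (closedBall_subset_closedBall (min_le_left _ _) hw)) z (hU z hz).1

theorem circ_lin {ι : Type*} [Fintype ι] {c : ℂ} {R : ℝ} (hR : 0 ≤ R) (a : ι → ℂ) (f : ι → ℂ → ℂ)
    (hf : ∀ x, ContinuousOn (f x) (sphere c R)) :
    ∑ x, a x * ∮ ζ in C(c, R), f x ζ = ∮ ζ in C(c, R), ∑ x, a x * f x ζ := by
  rw [circleIntegral.integral_fun_sum]
  · exact Finset.sum_congr rfl fun x _ => (circleIntegral.integral_const_mul _ _ _ _).symm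
  · intro x _
    exact ((continuousOn_const.mul (hf x))).circleIntegrable hR

/-- Weierstrass division by a monic polynomial `Wm b` at an arbitrary point `(w₀, y)`, by contour
integrals over a small circle around `w₀`. The remainders are adapted to the zeros of `Wm b` near
`w₀` only, so that a relation with polynomial coefficients between the `c i` modulo `Wm b` near
`(w₀, y)` passes to the remainders as a relation modulo `Wm b` in the polynomial ring. -/
theorem division [FiniteDimensional ℂ E] {p : Type*} [Fintype p] {d : ℕ} {b : E → Fin d → ℂ}
    {c : p → ℂ × E → ℂ} {R : p → E → Fin d → ℂ} {c₀ : ℂ × E → ℂ}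
    {w₀ : ℂ} {y : E} (hb : AnalyticAt ℂ b y) (hc : ∀ i, AnalyticAt ℂ (c i) (w₀, y))
    (hR : ∀ i, AnalyticAt ℂ (R i) y) (hc₀ : AnalyticAt ℂ c₀ (w₀, y))
    (hrel : ∀ᶠ z in 𝓝 (w₀, y),
      Wm (b z.2) z.1 * c₀ z + ∑ i, pe (R i z.2) z.1 * c i z = 0) :
    ∃ (Λ : p → E → Fin d → ℂ) (Q : p → ℂ × E → ℂ) (q : E → Fin d → ℂ),
      (∀ i, AnalyticAt ℂ (Λ i) y) ∧ (∀ i, AnalyticAt ℂ (Q i) (w₀, y)) ∧ AnalyticAt ℂ q y ∧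
      (∀ᶠ z in 𝓝 (w₀, y), ∀ i, c i z = pe (Λ i z.2) z.1 + Wm (b z.2) z.1 * Q i z) ∧
      ∀ᶠ z in 𝓝 y, ∀ w, ∑ i, pe (R i z) w * pe (Λ i z) w = Wm (b z) w * pe (q z) w := by
  have hbe : ∀ᶠ z in 𝓝 (w₀, y), AnalyticAt ℂ b z.2 :=
    (continuous_snd.tendsto (w₀, y)).eventually hb.eventually_analyticAt
  have hRe : ∀ᶠ z in 𝓝 (w₀, y), ∀ i, AnalyticAt ℂ (R i) z.2 :=
    (continuous_snd.tendsto (w₀, y)).eventually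
      (eventually_all.2 fun i => (hR i).eventually_analyticAt)
  obtain ⟨ε, hε, U, hU, hyU, hP, hW⟩ := division_nhds (b := b) hb.eventually_analyticAt
    ((eventually_all.2 fun i => (hc i).eventually_analyticAt).and
      (hc₀.eventually_analyticAt.and (hrel.and (hbe.and hRe))))
  have hw0 : w₀ ∈ closedBall w₀ ε := mem_closedBall_self hε.le
  have hbU : ∀ z ∈ U, AnalyticAt ℂ b z := fun z hz => (hP (w₀, z) ⟨hw0, hz⟩).2.2.2.1
  have hRU : ∀ z ∈ U, ∀ i, AnalyticAt ℂ (R i) z := fun z hz => (hP (w₀, z) ⟨hw0, hz⟩).2.2.2.2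
  have hsc : sphere w₀ ε ⊆ closedBall w₀ ε := sphere_subset_closedBall
  -- analyticity of the integrands in both variables
  have hcx : ∀ i, ∀ x : E × ℂ, x.1 ∈ U → x.2 ∈ closedBall w₀ ε →
      AnalyticAt ℂ (fun x : E × ℂ => c i (x.2, x.1)) x := by
    intro i x h1 h2
    exact AnalyticAt.fun_comp (g := c i) (f := fun x : E × ℂ => (x.2, x.1))
      ((hP (x.2, x.1) ⟨h2, h1⟩).1 i) (analyticAt_snd.prod analyticAt_fst)
  have hWx : ∀ x : E × ℂ, x.1 ∈ U → AnalyticAt ℂ (fun x : E × ℂ => Wm (b x.1) x.2) x :=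
    fun x h1 => analyticAt_Wm (AnalyticAt.fun_comp (hbU _ h1) analyticAt_fst) analyticAt_snd
  have hmx : ∀ x : E × ℂ, x.1 ∈ U → ∀ k, AnalyticAt ℂ (fun x : E × ℂ => ddm (b x.1) x.2 k) x :=
    fun x h1 => analyticAt_ddm (AnalyticAt.fun_comp (hbU _ h1) analyticAt_fst) analyticAt_snd
  have hrx : ∀ i, ∀ x : E × ℂ, x.1 ∈ U → ∀ k,
      AnalyticAt ℂ (fun x : E × ℂ => ddc (R i x.1) x.2 k) x :=
    fun i x h1 => analyticAt_ddc (AnalyticAt.fun_comp (hRU _ h1 i) analyticAt_fst) analyticAt_snd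
  have hLx : ∀ i k, ∀ x ∈ U ×ˢ sphere w₀ ε, AnalyticAt ℂ
      (fun x : E × ℂ => c i (x.2, x.1) * ddm (b x.1) x.2 k / Wm (b x.1) x.2) x :=
    fun i k x hx => ((hcx i x hx.1 (hsc hx.2)).mul (hmx x hx.1 k)).div (hWx x hx.1)
      (hW _ hx.2 _ hx.1)
  have hqx : ∀ i k, ∀ x ∈ U ×ˢ sphere w₀ ε, AnalyticAt ℂ
      (fun x : E × ℂ => c i (x.2, x.1) * ddc (R i x.1) x.2 k / Wm (b x.1) x.2) x :=
    fun i k x hx => ((hcx i x hx.1 (hsc hx.2)).mul (hrx i x hx.1 k)).div (hWx x hx.1)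
      (hW _ hx.2 _ hx.1)
  have hpar : ∀ G : E × ℂ → ℂ, (∀ x ∈ U ×ˢ sphere w₀ ε, AnalyticAt ℂ G x) →
      AnalyticOnNhd ℂ (fun z => ∮ ζ in C(w₀, ε), G (z, ζ)) U := by
    intro G hG
    refine analyticOnNhd_circleIntegral hε.le hU ?_
      (fun x hx => (hG x hx).continuousAt.continuousWithinAt)
    intro ζ hζ z hz
    exact AnalyticAt.fun_comp (g := G) (f := fun z => (z, ζ)) (hG (z, ζ) ⟨hz, hζ⟩)
      (analyticAt_id.prod analyticAt_const)
  have hcs : ∀ G : E × ℂ → ℂ, (∀ x ∈ U ×ˢ sphere w₀ ε, AnalyticAt ℂ G x) → ∀ z ∈ U,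
      ContinuousOn (fun ζ => G (z, ζ)) (sphere w₀ ε) := by
    intro G hG z hz ζ hζ
    exact ((hG (z, ζ) ⟨hz, hζ⟩).continuousAt.comp
      (f := fun ζ => (z, ζ)) (by fun_prop)).continuousWithinAt
  let κ : ℂ := (2 * Real.pi * Complex.I)⁻¹
  refine ⟨fun i z k => κ * ∮ ζ in C(w₀, ε), c i (ζ, z) * ddm (b z) ζ k / Wm (b z) ζ,
    fun i x => κ * ∮ ζ in C(w₀, ε), c i (ζ, x.2) / (Wm (b x.2) ζ * (ζ - x.1)),
    fun z k => κ * ∑ i, ∮ ζ in C(w₀, ε), c i (ζ, z) * ddc (R i z) ζ k / Wm (b z) ζ,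
    ?_, ?_, ?_, ?_, ?_⟩
  · intro i
    rw [analyticAt_pi_iff]
    exact fun k => analyticAt_const.mul (hpar _ (hLx i k) y hyU)
  · intro i
    refine analyticAt_const.mul ?_
    refine analyticOnNhd_circleIntegral (U := ball w₀ ε ×ˢ U) hε.le (isOpen_ball.prod hU)
      (F := fun x ζ => c i (ζ, x.2) / (Wm (b x.2) ζ * (ζ - x.1))) ?_ ?_ (w₀, y)
      ⟨mem_ball_self hε, hyU⟩
    all_goals
      have hQx : ∀ x ∈ (ball w₀ ε ×ˢ U) ×ˢ sphere w₀ ε, AnalyticAt ℂ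
          (fun x : (ℂ × E) × ℂ => c i (x.2, x.1.2) / (Wm (b x.1.2) x.2 * (x.2 - x.1.1))) x := by
        intro x hx
        have h0 : AnalyticAt ℂ (fun x : (ℂ × E) × ℂ => x.1.2) x :=
          AnalyticAt.fun_comp (g := fun x : ℂ × E => x.2) analyticAt_snd analyticAt_fst
        have h0' : AnalyticAt ℂ (fun x : (ℂ × E) × ℂ => x.1.1) x :=
          AnalyticAt.fun_comp (g := fun x : ℂ × E => x.1) analyticAt_fst analyticAt_fst
        have h1 : AnalyticAt ℂ (fun x : (ℂ × E) × ℂ => (x.1.2, x.2)) x := h0.prod analyticAt_snd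
        refine (AnalyticAt.fun_comp (g := fun x : E × ℂ => c i (x.2, x.1))
          (f := fun x : (ℂ × E) × ℂ => (x.1.2, x.2))
          (hcx i (x.1.2, x.2) hx.1.2 (hsc hx.2)) h1).div
          ((AnalyticAt.fun_comp (g := fun x : E × ℂ => Wm (b x.1) x.2)
          (f := fun x : (ℂ × E) × ℂ => (x.1.2, x.2)) (hWx (x.1.2, x.2) hx.1.2) h1).mul
          (analyticAt_snd.sub h0')) ?_
        refine mul_ne_zero (hW _ hx.2 _ hx.1.2) (sub_ne_zero.2 ?_)
        intro h
        have h2 := mem_ball.1 hx.1.1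
        rw [← h, mem_sphere.1 hx.2] at h2
        exact lt_irrefl _ h2
    · intro ζ hζ x hx
      exact AnalyticAt.fun_comp (f := fun x => (x, ζ)) (hQx (x, ζ) ⟨hx, hζ⟩)
        (analyticAt_id.prod analyticAt_const)
    · exact fun x hx => (hQx x hx).continuousAt.continuousWithinAt
  · rw [analyticAt_pi_iff]
    exact fun k => analyticAt_const.mul
      (Finset.analyticAt_fun_sum _ fun i _ => hpar _ (hqx i k) y hyU)
  · have hnb : ball w₀ ε ×ˢ U ∈ 𝓝 (w₀, y) :=
      (isOpen_ball.prod hU).mem_nhds ⟨mem_ball_self hε, hyU⟩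
    filter_upwards [hnb] with x hx i
    obtain ⟨w, z⟩ := x
    have hd : DifferentiableOn ℂ (fun ζ => c i (ζ, z)) (closedBall w₀ ε) := by
      intro ζ hζ
      exact (AnalyticAt.fun_comp (g := c i) (f := fun ζ => (ζ, z)) ((hP (ζ, z) ⟨hζ, hx.2⟩).1 i)
        (analyticAt_id.prod analyticAt_const)).differentiableAt.differentiableWithinAt
    have hcau := (hd.diffContOnCl_ball subset_rfl).two_pi_i_inv_smul_circleIntegral_sub_inv_smul hx.1
    have hne : ∀ ζ ∈ sphere w₀ ε, ζ - w ≠ 0 := by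
      intro ζ hζ h
      have h2 := mem_ball.1 hx.1
      rw [← sub_eq_zero.1 h, mem_sphere.1 hζ] at h2
      exact lt_irrefl _ h2
    have hlin := circ_lin (ι := Option (Fin d)) hε.le
      (fun o => o.elim (Wm (b z) w) (fun k => w ^ (k : ℕ)))
      (fun o ζ => o.elim (c i (ζ, z) / (Wm (b z) ζ * (ζ - w)))
        (fun k => c i (ζ, z) * ddm (b z) ζ k / Wm (b z) ζ)) (by
        rintro (_ | k)
        · refine ContinuousOn.div (hd.continuousOn.mono hsc) (ContinuousOn.mul ?_ (by fun_prop)) ?_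
          · exact hcs (fun x => Wm (b x.1) x.2) (fun x hx => hWx x hx.1) z hx.2
          · exact fun ζ hζ => mul_ne_zero (hW ζ hζ z hx.2) (hne ζ hζ)
        · exact hcs _ (hLx i k) z hx.2)
    simp only [Fintype.sum_option, Option.elim] at hlin
    have hInt : ∀ ζ ∈ sphere w₀ ε, (Wm (b z) w * (c i (ζ, z) / (Wm (b z) ζ * (ζ - w))) +
        ∑ k : Fin d, w ^ (k : ℕ) * (c i (ζ, z) * ddm (b z) ζ k / Wm (b z) ζ)) =
        (ζ - w)⁻¹ • c i (ζ, z) := by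
      intro ζ hζ
      have h1 := Wm_sub (b z) ζ w
      have h2 : ∑ k : Fin d, w ^ (k : ℕ) * (c i (ζ, z) * ddm (b z) ζ k / Wm (b z) ζ) =
          c i (ζ, z) / Wm (b z) ζ * pe (ddm (b z) ζ) w := by
        rw [pe, Finset.mul_sum]
        exact Finset.sum_congr rfl fun k _ => by ring
      have h3 := hne ζ hζ
      have h4 := hW ζ hζ z hx.2
      rw [h2, smul_eq_mul]
      field_simp
      linear_combination -(c i (ζ, z)) * h1
    rw [circleIntegral.integral_congr hε.le hInt] at hlin
    rw [← hcau, ← hlin, smul_eq_mul, pe]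
    rw [mul_add, Finset.mul_sum, add_comm]
    congr 1
    · exact Finset.sum_congr rfl fun k _ => by ring
    · ring
  · filter_upwards [hU.mem_nhds hyU] with z hz w
    have hlin := circ_lin (ι := (p × Fin d) ⊕ (p × Fin d)) hε.le
      (Sum.elim (fun ik => pe (R ik.1 z) w * w ^ (ik.2 : ℕ)) (fun ik => - Wm (b z) w * w ^ (ik.2 : ℕ)))
      (Sum.elim (fun ik ζ => c ik.1 (ζ, z) * ddm (b z) ζ ik.2 / Wm (b z) ζ)
        (fun ik ζ => c ik.1 (ζ, z) * ddc (R ik.1 z) ζ ik.2 / Wm (b z) ζ)) (by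
        rintro (⟨i, k⟩ | ⟨i, k⟩)
        · exact hcs _ (hLx i k) z hz
        · exact hcs _ (hqx i k) z hz)
    simp only [Fintype.sum_sum_type, Sum.elim_inl, Sum.elim_inr, Fintype.sum_prod_type] at hlin
    have hInt : ∀ ζ ∈ sphere w₀ ε,
        ((∑ i, ∑ k : Fin d, pe (R i z) w * w ^ (k : ℕ) *
          (c i (ζ, z) * ddm (b z) ζ k / Wm (b z) ζ)) +
        ∑ i, ∑ k : Fin d, -Wm (b z) w * w ^ (k : ℕ) *
          (c i (ζ, z) * ddc (R i z) ζ k / Wm (b z) ζ)) =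
        - c₀ (ζ, z) * pe (ddm (b z) ζ) w - ∑ i, c i (ζ, z) * pe (ddc (R i z) ζ) w := by
      intro ζ hζ
      have h4 := hW ζ hζ z hz
      have h5 := (hP (ζ, z) ⟨hsc hζ, hz⟩).2.2.1
      have h1 := Wm_sub (b z) ζ w
      have h2 : ∀ (a : ℂ) (i : p) (v : Fin d → ℂ), ∑ k : Fin d, a * w ^ (k : ℕ) *
          (c i (ζ, z) * v k / Wm (b z) ζ) = a * (c i (ζ, z) * pe v w / Wm (b z) ζ) := by
        intro a i v
        rw [pe, Finset.mul_sum, Finset.sum_div, Finset.mul_sum]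
        exact Finset.sum_congr rfl fun k _ => by ring
      simp only [h2]
      rw [← Finset.sum_add_distrib]
      have h6 : - c₀ (ζ, z) * pe (ddm (b z) ζ) w =
          ∑ i, pe (R i z) ζ * c i (ζ, z) * pe (ddm (b z) ζ) w / Wm (b z) ζ := by
        rw [← Finset.sum_div, ← Finset.sum_mul, eq_div_iff h4]
        simp only at h5
        linear_combination -(pe (ddm (b z) ζ) w) * h5
      rw [h6, ← Finset.sum_sub_distrib]
      refine Finset.sum_congr rfl fun i _ => ?_
      have h7 := pe_sub (R i z) ζ w
      field_simp
      linear_combination (-(pe (ddm (b z) ζ) w)) * c i (ζ, z) * h7 +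
        c i (ζ, z) * pe (ddc (R i z) ζ) w * h1
    rw [circleIntegral.integral_congr hε.le hInt] at hlin
    have hzero : (∮ ζ in C(w₀, ε), (- c₀ (ζ, z) * pe (ddm (b z) ζ) w -
        ∑ i, c i (ζ, z) * pe (ddc (R i z) ζ) w)) = 0 := by
      refine DiffContOnCl.circleIntegral_eq_zero hε.le (DifferentiableOn.diffContOnCl_ball (U := closedBall w₀ ε) ?_ subset_rfl)
      intro ζ hζ
      have hl : AnalyticAt ℂ (fun ζ : ℂ => (ζ, z)) ζ := analyticAt_id.prod analyticAt_const
      have ha : AnalyticAt ℂ (fun ζ => - c₀ (ζ, z) * pe (ddm (b z) ζ) w -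
        ∑ i, c i (ζ, z) * pe (ddc (R i z) ζ) w) ζ := by
        refine AnalyticAt.sub (AnalyticAt.mul (AnalyticAt.neg ?_) ?_)
          (Finset.analyticAt_fun_sum _ fun i _ => AnalyticAt.mul ?_ ?_)
        · exact AnalyticAt.fun_comp (g := c₀) (hP (ζ, z) ⟨hζ, hz⟩).2.1 hl
        · refine analyticAt_pe ?_ analyticAt_const
          rw [analyticAt_pi_iff]
          exact fun k => analyticAt_ddm analyticAt_const analyticAt_id k
        · exact AnalyticAt.fun_comp (g := c i) ((hP (ζ, z) ⟨hζ, hz⟩).1 i) hl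
        · refine analyticAt_pe ?_ analyticAt_const
          rw [analyticAt_pi_iff]
          exact fun k => analyticAt_ddc analyticAt_const analyticAt_id k
      exact ha.differentiableAt.differentiableWithinAt
    rw [hzero] at hlin
    rw [← sub_eq_zero, ← mul_zero κ, ← hlin]
    have e1 : ∀ i, pe (fun k => κ * ∮ ζ in C(w₀, ε), c i (ζ, z) * ddm (b z) ζ k / Wm (b z) ζ) w =
      κ * ∑ k : Fin d, w ^ (k : ℕ) * ∮ ζ in C(w₀, ε), c i (ζ, z) * ddm (b z) ζ k / Wm (b z) ζ := by
      intro i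
      rw [pe, Finset.mul_sum]
      exact Finset.sum_congr rfl fun k _ => by ring
    have e2 : pe (fun k => κ * ∑ i, ∮ ζ in C(w₀, ε), c i (ζ, z) * ddc (R i z) ζ k / Wm (b z) ζ) w =
      κ * ∑ i, ∑ k : Fin d, w ^ (k : ℕ) * ∮ ζ in C(w₀, ε), c i (ζ, z) * ddc (R i z) ζ k / Wm (b z) ζ := by
      rw [pe, Finset.sum_comm, Finset.mul_sum]
      refine Finset.sum_congr rfl fun k _ => ?_
      rw [mul_assoc, ← Finset.mul_sum]; ring
    simp only [e1, e2]
    rw [mul_add, sub_eq_add_neg]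
    congr 1
    · rw [Finset.mul_sum]
      refine Finset.sum_congr rfl fun i _ => ?_
      simp only [Finset.mul_sum]
      exact Finset.sum_congr rfl fun k _ => by ring
    · simp only [Finset.mul_sum, ← Finset.sum_neg_distrib]
      exact Finset.sum_congr rfl fun i _ => Finset.sum_congr rfl fun k _ => by ring

end Division

/-! ### Weierstrass preparation -/

/-- The polynomial whose evaluation is `pe v`. -/
noncomputable def pp {d : ℕ} (v : Fin d → ℂ) : Polynomial ℂ :=
  ∑ k : Fin d, Polynomial.C (v k) * Polynomial.X ^ (k : ℕ)

theorem pp_eval {d : ℕ} (v : Fin d → ℂ) (w : ℂ) : (pp v).eval w = pe v w := by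
  simp [pp, pe, Polynomial.eval_finsetSum]

theorem pp_coeff {d : ℕ} (v : Fin d → ℂ) (k : Fin d) : (pp v).coeff k = v k := by
  simp only [pp, Polynomial.finsetSum_coeff, Polynomial.coeff_C_mul, Polynomial.coeff_X_pow]
  rw [Finset.sum_eq_single k]
  · simp
  · intro j _ hj
    rw [if_neg (fun h => hj (Fin.ext h.symm)), mul_zero]
  · simp

theorem pp_degree {d : ℕ} (v : Fin d → ℂ) : (pp v).degree < d := by
  rw [Polynomial.degree_lt_iff_coeff_zero]
  intro m hm
  simp only [pp, Polynomial.finsetSum_coeff, Polynomial.coeff_C_mul, Polynomial.coeff_X_pow]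
  refine Finset.sum_eq_zero fun k _ => ?_
  have := k.2
  rw [if_neg (by omega), mul_zero]

/-- A polynomial of degree less than `d` that is divisible by `w ^ d` near `0` vanishes. -/
theorem pe_eq_zero_of_pow {d : ℕ} {v : Fin d → ℂ} {h : ℂ → ℂ} (hc : ContinuousAt h 0)
    (he : ∀ᶠ w in 𝓝 0, pe v w = w ^ d * h w) : v = 0 := by
  by_contra hv
  have hp : pp v ≠ 0 := by
    intro h0
    refine hv (funext fun k => ?_)
    rw [← pp_coeff v k, h0]; simp
  obtain ⟨q, hq, hnd⟩ := Polynomial.exists_eq_pow_rootMultiplicity_mul_and_not_dvd (pp v) hp 0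
  set m := (pp v).rootMultiplicity 0
  have hmd : m < d := by
    have h1 : m ≤ (pp v).natDegree := by
      have := Polynomial.natDegree_le_of_dvd (Dvd.intro _ hq.symm) hp
      rwa [Polynomial.natDegree_pow, Polynomial.natDegree_X_sub_C, mul_one] at this
    have h2 := (Polynomial.natDegree_lt_iff_degree_lt hp).2 (pp_degree v)
    omega
  have hq0 : q.eval 0 ≠ 0 := by
    intro h0
    exact hnd (Polynomial.dvd_iff_isRoot.2 h0)
  have hev : ∀ᶠ w in 𝓝[≠] (0 : ℂ), q.eval w = w ^ (d - m) * h w := by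
    filter_upwards [mem_nhdsWithin_of_mem_nhds he, self_mem_nhdsWithin] with w hw hw0
    have h1 : w ^ m * q.eval w = w ^ d * h w := by
      rw [← show pe v w = w ^ d * h w from hw, ← pp_eval, hq]; simp
    have h2 : w ^ d = w ^ m * w ^ (d - m) := by rw [← pow_add]; congr 1; omega
    rw [h2, mul_assoc] at h1
    exact mul_left_cancel₀ (pow_ne_zero _ hw0) h1
  have t1 : Tendsto (fun w => q.eval w) (𝓝[≠] (0 : ℂ)) (𝓝 (q.eval 0)) :=
    (q.continuous.tendsto 0).mono_left nhdsWithin_le_nhds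
  have t2 : Tendsto (fun w : ℂ => w ^ (d - m) * h w) (𝓝[≠] (0 : ℂ)) (𝓝 (0 ^ (d - m) * h 0)) :=
    (((continuous_pow (d - m)).tendsto (0 : ℂ)).mul hc).mono_left nhdsWithin_le_nhds
  have := tendsto_nhds_unique (t1.congr' hev) t2
  rw [zero_pow (by omega), zero_mul] at this
  exact hq0 this

/-- Weierstrass preparation. The division theorem is applied with the coefficients of the monic
divisor as extra parameters; the remainder vanishes along a graph given by the implicit function
theorem, and substituting that graph leaves a factorization of `g`. -/
theorem weierstrass_prep {E : Type*} [NormedAddCommGroup E] [NormedSpace ℂ E]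
    [FiniteDimensional ℂ E] {g : ℂ × E → ℂ} (hg : AnalyticAt ℂ g (0, 0))
    (hne : ¬ ∀ᶠ w in 𝓝 0, g (w, 0) = 0) :
    ∃ (d : ℕ) (b : E → Fin d → ℂ) (u : ℂ × E → ℂ), AnalyticAt ℂ b 0 ∧ AnalyticAt ℂ u (0, 0) ∧
      u (0, 0) ≠ 0 ∧ ∀ᶠ z in 𝓝 ((0, 0) : ℂ × E), g z = u z * Wm (b z.2) z.1 := by
  have hg1 : AnalyticAt ℂ (fun w : ℂ => g (w, 0)) 0 :=
    AnalyticAt.fun_comp (g := g) (f := fun w : ℂ => (w, (0 : E))) hg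
      (analyticAt_id.prod analyticAt_const)
  obtain ⟨d, g0, hg0, hg0n, hg0e⟩ := hg1.exists_eventuallyEq_pow_smul_nonzero_iff.2 hne
  have hfst : AnalyticAt ℂ (fun x : ℂ × (E × (Fin d → ℂ)) => (x.1, x.2.1)) (0, (0, 0)) :=
    analyticAt_fst.prod (AnalyticAt.fun_comp (g := fun x : E × (Fin d → ℂ) => x.1)
      analyticAt_fst analyticAt_snd)
  obtain ⟨Λ, Q', -, hΛ', hQ', -, hdiv', -⟩ := division (E := E × (Fin d → ℂ)) (p := Unit) (d := d)
    (b := fun y => y.2) (c := fun _ x => g (x.1, x.2.1)) (R := fun _ _ => 0) (c₀ := fun _ => 0)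
    (w₀ := 0) (y := (0, 0)) analyticAt_snd
    (fun _ => AnalyticAt.fun_comp (g := g) (f := fun x : ℂ × (E × (Fin d → ℂ)) => (x.1, x.2.1))
      hg hfst)
    (fun _ => analyticAt_const) analyticAt_const (by simp [pe])
  let Ψ := Λ ()
  let Q := Q' ()
  have hΛ : AnalyticAt ℂ Ψ (0, 0) := hΛ' ()
  have hQ : AnalyticAt ℂ Q (0, (0, 0)) := hQ' ()
  have hdiv : ∀ᶠ x in 𝓝 ((0, (0, 0)) : ℂ × (E × (Fin d → ℂ))),
      g (x.1, x.2.1) = pe (Ψ x.2) x.1 + Wm x.2.2 x.1 * Q x := hdiv'.mono fun x hx => hx ()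
  have hW0 : ∀ w : ℂ, Wm (0 : Fin d → ℂ) w = w ^ d := by intro w; simp [Wm, pe]
  have hline : Tendsto (fun w : ℂ => (w, ((0, 0) : E × (Fin d → ℂ)))) (𝓝 0) (𝓝 (0, (0, 0))) :=
    Continuous.tendsto' (by fun_prop) _ _ rfl
  have hlinea : AnalyticAt ℂ (fun w : ℂ => (w, ((0, 0) : E × (Fin d → ℂ)))) 0 :=
    analyticAt_id.prod analyticAt_const
  have hQl : AnalyticAt ℂ (fun w : ℂ => Q (w, (0, 0))) 0 :=
    AnalyticAt.fun_comp (g := Q) (f := fun w : ℂ => (w, ((0, 0) : E × (Fin d → ℂ)))) hQ hlinea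
  have h0 : ∀ᶠ w in 𝓝 (0 : ℂ), g (w, 0) = pe (Ψ (0, 0)) w + w ^ d * Q (w, (0, 0)) := by
    filter_upwards [hline.eventually hdiv] with w hw
    simpa [hW0] using hw
  have hΨ0 : Ψ (0, 0) = 0 := by
    refine pe_eq_zero_of_pow (h := fun w => g0 w - Q (w, (0, 0)))
      (hg0.continuousAt.sub hQl.continuousAt) ?_
    filter_upwards [h0, hg0e] with w h1 h2
    rw [h2, sub_zero, smul_eq_mul] at h1
    linear_combination -h1
  have hQ0 : Q (0, (0, 0)) ≠ 0 := by
    have h1 : ∀ᶠ w in 𝓝[≠] (0 : ℂ), g0 w = Q (w, (0, 0)) := by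
      filter_upwards [mem_nhdsWithin_of_mem_nhds h0, mem_nhdsWithin_of_mem_nhds hg0e,
        self_mem_nhdsWithin] with w h1 h2 h3
      replace h1 : g (w, 0) = pe (Ψ (0, 0)) w + w ^ d * Q (w, (0, 0)) := h1
      replace h2 : g (w, 0) = (w - 0) ^ d • g0 w := h2
      rw [hΨ0, h2, sub_zero, smul_eq_mul] at h1
      refine mul_left_cancel₀ (pow_ne_zero d h3) ?_
      simpa [pe] using h1
    have := tendsto_nhds_unique ((hg0.continuousAt.mono_left nhdsWithin_le_nhds).congr' h1)
      (hQl.continuousAt.mono_left nhdsWithin_le_nhds)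
    exact fun h => hg0n (this.trans h)
  have hinj : Function.Injective (fderiv ℂ Ψ (0, 0) ∘L .inr ℂ E (Fin d → ℂ)) := by
    rw [injective_iff_map_eq_zero]
    intro a ha
    have ha' : fderiv ℂ Ψ (0, 0) (0, a) = 0 := by simpa using ha
    let Qd : ℂ → ℂ := fun w => fderiv ℂ Q (w, (0, 0)) (0, (0, a))
    have hQd : ContinuousAt Qd 0 := by
      have h1 : ContinuousAt (fun w : ℂ => fderiv ℂ Q (w, (0, 0))) 0 :=
        ContinuousAt.comp (g := fderiv ℂ Q) (f := fun w : ℂ => (w, ((0, 0) : E × (Fin d → ℂ))))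
          hQ.fderiv.continuousAt hlinea.continuousAt
      exact h1.clm_apply continuousAt_const
    refine pe_eq_zero_of_pow (h := fun w => - Qd w / Q (w, (0, 0)))
      (hQd.neg.div hQl.continuousAt hQ0) ?_
    filter_upwards [hline.eventually hdiv.eventually_nhds, hline.eventually hQ.eventually_analyticAt,
      hQl.continuousAt.eventually_ne hQ0] with w h1 h2 h3
    have hk : HasDerivAt (fun t : ℂ => (w, ((0 : E), t • a))) (0, (0, a)) 0 := by
      refine (hasDerivAt_const _ _).prodMk ((hasDerivAt_const _ _).prodMk ?_)
      simpa using (hasDerivAt_id (0 : ℂ)).smul_const a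
    have hk0 : (fun t : ℂ => (w, ((0 : E), t • a))) 0 = (w, (0, 0)) := by simp
    have e1 : ∀ᶠ t in 𝓝 (0 : ℂ), g (w, 0) =
        pe (Ψ (0, t • a)) w + (w ^ d + t * pe a w) * Q (w, (0, t • a)) := by
      have := hk.continuousAt.tendsto.eventually (hk0 ▸ h1)
      filter_upwards [this] with t ht
      have hW : Wm (t • a) w = w ^ d + t * pe a w := by
        simp [Wm, pe, Finset.mul_sum, mul_assoc]
      rw [← hW]; exact ht
    have dQ : HasDerivAt (fun t : ℂ => Q (w, ((0 : E), t • a))) (Qd w) 0 := by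
      have hq := h2.differentiableAt.hasFDerivAt
      rw [← hk0] at hq
      have := hq.comp_hasDerivAt (0 : ℂ) hk
      rw [hk0] at this
      exact this
    have dΨ : ∀ k, HasDerivAt (fun t : ℂ => Ψ ((0 : E), t • a) k) 0 0 := by
      have hk' : HasDerivAt (fun t : ℂ => ((0 : E), t • a)) (0, a) 0 := by
        refine ((hasDerivAt_const _ _).prodMk ?_)
        simpa using (hasDerivAt_id (0 : ℂ)).smul_const a
      have hq := hΛ.differentiableAt.hasFDerivAt
      have hk0' : (fun t : ℂ => ((0 : E), t • a)) 0 = (0, 0) := by simp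
      rw [← hk0'] at hq
      have := hq.comp_hasDerivAt (0 : ℂ) hk'
      rw [hk0', ha', hasDerivAt_pi] at this
      exact this
    have dtot : HasDerivAt (fun t : ℂ => pe (Ψ (0, t • a)) w +
        (w ^ d + t * pe a w) * Q (w, (0, t • a)))
        (0 + (pe a w * Q (w, (0, (0 : ℂ) • a)) + (w ^ d + 0 * pe a w) * Qd w)) 0 := by
      refine HasDerivAt.add ?_ (HasDerivAt.mul ?_ dQ)
      · unfold pe
        have := HasDerivAt.fun_sum (u := Finset.univ)
          fun (k : Fin d) _ => (dΨ k).mul_const (w ^ (k : ℕ))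
        simpa using this
      · simpa using ((hasDerivAt_id (0 : ℂ)).mul_const (pe a w)).const_add (w ^ d)
    have := (dtot.congr_of_eventuallyEq e1).unique (hasDerivAt_const _ _)
    simp only [zero_smul, zero_mul, add_zero, zero_add] at this
    field_simp
    linear_combination this
  have hinv : (fderiv ℂ Ψ (0, 0) ∘L .inr ℂ E (Fin d → ℂ)).IsInvertible := by
    refine ⟨(LinearEquiv.ofInjectiveEndo _ hinj).toContinuousLinearEquiv, ?_⟩
    ext x; rfl
  have cdf : ContDiffAt ℂ ⊤ Ψ (0, 0) := hΛ.contDiffAt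
  have : CompleteSpace E := FiniteDimensional.complete ℂ E
  let b := cdf.implicitFunction (by simp) hinv
  have hb : AnalyticAt ℂ b 0 :=
    ContDiffAt.analyticAt (cdf.contDiffAt_implicitFunction (by simp) hinv)
  have hb0 : b 0 = 0 := cdf.implicitFunction_apply_self (by simp) hinv
  have hbe : ∀ᶠ z in 𝓝 (0 : E), Ψ (z, b z) = 0 := by
    have := cdf.eventually_apply_implicitFunction (by simp) hinv
    rw [hΨ0] at this
    exact this
  have hmap : AnalyticAt ℂ (fun z : ℂ × E => (z.1, (z.2, b z.2))) (0, 0) :=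
    analyticAt_fst.prod (analyticAt_snd.prod (AnalyticAt.fun_comp (g := b) hb analyticAt_snd))
  have hmap0 : (fun z : ℂ × E => (z.1, (z.2, b z.2))) (0, 0) = (0, (0, 0)) := by simp [hb0]
  refine ⟨d, b, fun z => Q (z.1, (z.2, b z.2)), hb, ?_, ?_, ?_⟩
  · exact AnalyticAt.fun_comp (g := Q) (f := fun z : ℂ × E => (z.1, (z.2, b z.2)))
      (by simpa only [hb0] using hQ) hmap
  · simpa [hb0] using hQ0
  · have h1 := hmap.continuousAt.tendsto.eventually (hmap0 ▸ hdiv)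
    have h2 := (continuous_snd.tendsto ((0, 0) : ℂ × E)).eventually hbe
    filter_upwards [h1, h2] with z h3 h4
    rw [h4] at h3
    simpa [pe, mul_comm] using h3

/-! ### Oka's coherence theorem -/

section Oka

open Matrix

/-- Entrywise analyticity of a matrix-valued function at a point. -/
def AnMatAt {E : Type*} [NormedAddCommGroup E] [NormedSpace ℂ E] {q p : Type*}
    (M : E → Matrix q p ℂ) (x : E) : Prop :=
  ∀ i j, AnalyticAt ℂ (fun z => M z i j) x

/-- The columns of `S` generate, over the germs of analytic functions at `y`, the kernel of `M`
among the germs of analytic vectors. -/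
def IsKerGen {E : Type*} [NormedAddCommGroup E] [NormedSpace ℂ E] {q p m : Type*}
    [Fintype p] [Fintype m] (M : E → Matrix q p ℂ) (S : E → Matrix p m ℂ) (y : E) : Prop :=
  ∀ c : E → p → ℂ, AnalyticAt ℂ c y → (∀ᶠ z in 𝓝 y, M z *ᵥ c z = 0) →
    ∃ e : E → m → ℂ, AnalyticAt ℂ e y ∧ ∀ᶠ z in 𝓝 y, c z = S z *ᵥ e z

/-- Coherence of the kernel of a single analytic row `f` at `x`: near `x`, it is generated by
finitely many columns. -/
def RowOkaAt {E : Type} [NormedAddCommGroup E] [NormedSpace ℂ E] {p : Type} [Fintype p]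
    (f : E → p → ℂ) (x : E) : Prop :=
  ∃ (m : Type) (_ : Fintype m) (S : E → Matrix p m ℂ), AnMatAt S x ∧
    (∀ᶠ z in 𝓝 x, f z ᵥ* S z = 0) ∧ ∀ᶠ y in 𝓝 x, ∀ c : E → p → ℂ, AnalyticAt ℂ c y →
      (∀ᶠ z in 𝓝 y, f z ⬝ᵥ c z = 0) →
      ∃ e : E → m → ℂ, AnalyticAt ℂ e y ∧ ∀ᶠ z in 𝓝 y, c z = S z *ᵥ e z

/-- Oka's coherence theorem on `E`, as a proposition. -/
def OkaProp (E : Type) [NormedAddCommGroup E] [NormedSpace ℂ E] : Prop :=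
  ∀ (q p : Type) [Fintype q] [Fintype p] (M : E → Matrix q p ℂ) (x : E), AnMatAt M x →
    ∃ (m : Type) (_ : Fintype m) (S : E → Matrix p m ℂ), AnMatAt S x ∧
      (∀ᶠ z in 𝓝 x, M z * S z = 0) ∧ ∀ᶠ y in 𝓝 x, IsKerGen M S y

section basic
variable {E : Type*} [NormedAddCommGroup E] [NormedSpace ℂ E] {q p m : Type*}
  [Fintype q] [Fintype p] [Fintype m]

theorem AnMatAt.eventually {M : E → Matrix q p ℂ} {x : E} (h : AnMatAt M x) :
    ∀ᶠ y in 𝓝 x, AnMatAt M y :=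
  eventually_all.2 fun i => eventually_all.2 fun j => (h i j).eventually_analyticAt

theorem AnMatAt.mul {M : E → Matrix q p ℂ} {N : E → Matrix p m ℂ} {x : E} (h : AnMatAt M x)
    (h' : AnMatAt N x) : AnMatAt (fun z => M z * N z) x := by
  intro i j
  simp only [Matrix.mul_apply]
  exact Finset.analyticAt_fun_sum _ fun k _ => (h i k).mul (h' k j)

theorem AnMatAt.const {M : Matrix q p ℂ} {x : E} : AnMatAt (fun _ => M) x :=
  fun _ _ => analyticAt_const

theorem AnMatAt.mulVec {M : E → Matrix q p ℂ} {c : E → p → ℂ} {x : E} (h : AnMatAt M x)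
    (h' : AnalyticAt ℂ c x) : AnalyticAt ℂ (fun z => M z *ᵥ c z) x := by
  rw [analyticAt_pi_iff] at h' ⊢
  intro i
  simp only [Matrix.mulVec, dotProduct]
  exact Finset.analyticAt_fun_sum _ fun k _ => (h i k).mul (h' k)

end basic

variable {E : Type} [NormedAddCommGroup E] [NormedSpace ℂ E] {p' p : Type} [Fintype p'] [Fintype p]

/-- Generators of relations pass from `f'` to `f` when the two rows are obtained from each other by
matrices `A`, `B` with `A * B = 1`. -/
theorem RowOkaAt.retract {f : E → p → ℂ} {f' : E → p' → ℂ} {A : E → Matrix p p' ℂ}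
    {B : E → Matrix p' p ℂ} {x : E} [DecidableEq p] (hA : AnMatAt A x) (hB : AnMatAt B x)
    (h1 : ∀ᶠ z in 𝓝 x, f z ᵥ* A z = f' z) (h2 : ∀ᶠ z in 𝓝 x, f' z ᵥ* B z = f z)
    (h3 : ∀ᶠ z in 𝓝 x, A z * B z = 1) (h : RowOkaAt f' x) : RowOkaAt f x := by
  obtain ⟨m, _, S, hS, hS0, hgen⟩ := h
  refine ⟨m, inferInstance, fun z => A z * S z, hA.mul hS, ?_, ?_⟩
  · filter_upwards [h1, hS0] with z h1 h2
    rw [← vecMul_vecMul, h1, h2]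
  · filter_upwards [hgen, hB.eventually, h2.eventually_nhds, h3.eventually_nhds]
      with y hy hB h2 h3 c hc hc0
    obtain ⟨e, he, hce⟩ := hy (fun z => B z *ᵥ c z) (hB.mulVec hc) (by
      filter_upwards [h2, hc0] with z h2 hc0
      rw [dotProduct_mulVec, h2, hc0])
    refine ⟨e, he, ?_⟩
    filter_upwards [hce, h3] with z hce h3
    rw [← mulVec_mulVec, ← hce, mulVec_mulVec, h3, one_mulVec]

theorem RowOkaAt.transport {F : Type} [NormedAddCommGroup F] [NormedSpace ℂ F] {f : E → p → ℂ}
    {x : E} (L : E ≃L[ℂ] F) (h : RowOkaAt (fun y => f (x + L.symm y)) 0) : RowOkaAt f x := by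
  obtain ⟨m, _, S, hS, hS0, hgen⟩ := h
  have hφ : ∀ z, AnalyticAt ℂ (fun z => L (z - x)) z := fun z =>
    AnalyticAt.fun_comp (g := L) (L.analyticAt _) (analyticAt_id.sub analyticAt_const)
  have hψ : ∀ y, AnalyticAt ℂ (fun y => x + L.symm y) y := fun y =>
    analyticAt_const.add (L.symm.analyticAt _)
  have hφx : L (x - x) = 0 := by simp
  have hψφ : ∀ z, x + L.symm (L (z - x)) = z := by simp
  have hφψ : ∀ z, L (x + L.symm z - x) = z := by simp
  have ht : Tendsto (fun z => L (z - x)) (𝓝 x) (𝓝 0) := by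
    have := (hφ x).continuousAt.tendsto; rwa [hφx] at this
  refine ⟨m, inferInstance, fun z => S (L (z - x)), ?_, ?_, ?_⟩
  · intro i j
    refine AnalyticAt.fun_comp (g := fun y => S y i j) ?_ (hφ x)
    rw [hφx]; exact hS i j
  · filter_upwards [ht.eventually hS0] with z hz
    simpa only [hψφ] using hz
  · filter_upwards [ht.eventually hgen] with y hy c hc hc0
    have hty : Tendsto (fun z => x + L.symm z) (𝓝 (L (y - x))) (𝓝 y) := by
      have := (hψ (L (y - x))).continuousAt.tendsto; rwa [hψφ] at this
    have hty' : Tendsto (fun z => L (z - x)) (𝓝 y) (𝓝 (L (y - x))) := (hφ y).continuousAt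
    obtain ⟨e, he, hce⟩ := hy (fun z => c (x + L.symm z))
      (AnalyticAt.fun_comp (g := c) (by rw [hψφ]; exact hc) (hψ _)) (hty.eventually hc0)
    refine ⟨fun z => e (L (z - x)), AnalyticAt.fun_comp (g := e) he (hφ y), ?_⟩
    filter_upwards [hty'.eventually hce] with z hz
    simpa only [hψφ] using hz

/-- If one entry of the row is a unit, the relations are generated by the obvious ones solving for
that entry. -/
theorem rowOkaAt_of_ne [DecidableEq p] {f : E → p → ℂ} {x : E} (hf : AnalyticAt ℂ f x) {i₀ : p}
    (h : f x i₀ ≠ 0) : RowOkaAt f x := by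
  rw [analyticAt_pi_iff] at hf
  refine ⟨p, inferInstance, fun z => 1 - Matrix.of fun i j => if i = i₀ then f z j / f z i₀ else 0,
    ?_, ?_, ?_⟩
  · intro i j
    simp only [Matrix.sub_apply, Matrix.of_apply]
    refine analyticAt_const.sub ?_
    split_ifs
    · exact (hf j).div (hf i₀) h
    · exact analyticAt_const
  · filter_upwards [(hf i₀).continuousAt.eventually_ne h] with z hz
    ext j
    rw [Matrix.vecMul_sub, Matrix.vecMul_one]
    simp [Matrix.vecMul, dotProduct]
    field_simp; ring
  · filter_upwards with y c hc hc0
    refine ⟨c, hc, ?_⟩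
    filter_upwards [hc0] with z hz
    rw [Matrix.sub_mulVec, Matrix.one_mulVec]
    ext i
    simp only [Pi.sub_apply, Matrix.mulVec, Matrix.of_apply, dotProduct]
    split_ifs with hi
    · have : ∑ j, f z j / f z i₀ * c z j = 0 := by
        rw [Finset.sum_congr rfl fun j _ => (by ring : f z j / f z i₀ * c z j =
          (f z i₀)⁻¹ * (f z j * c z j)), ← Finset.mul_sum]
        rw [dotProduct] at hz
        rw [hz, mul_zero]
      rw [this, sub_zero]
    · simp

theorem Wm_cancel {d : ℕ} {b : E → Fin d → ℂ} {h : ℂ × E → ℂ} {x : ℂ × E}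
    (hh : ∀ᶠ z in 𝓝 x, ContinuousAt h z) (h0 : ∀ᶠ z in 𝓝 x, Wm (b z.2) z.1 * h z = 0) :
    ∀ᶠ z in 𝓝 x, h z = 0 := by
  filter_upwards [hh, h0.eventually_nhds] with z h1 h2
  obtain ⟨w, z⟩ := z
  have hl : Tendsto (fun ζ : ℂ => (ζ, z)) (𝓝[≠] w) (𝓝 (w, z)) :=
    (Continuous.tendsto' (by fun_prop) _ _ rfl).mono_left nhdsWithin_le_nhds
  have h3 : ∀ᶠ ζ in 𝓝[≠] w, h (ζ, z) = 0 := by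
    filter_upwards [hl.eventually h2, Wm_eventually_ne (b z) w] with ζ h4 h5
    exact (mul_eq_zero.1 h4).resolve_left h5
  exact tendsto_nhds_unique (h1.tendsto.comp hl) ((tendsto_const_nhds).congr' (h3.mono fun _ h => h.symm))

/-- A polynomial identity of degree at most `2 d` holds if it holds at the `2 d + 1` points `0, …, 2 d`. -/
theorem poly_rel {d : ℕ} (b : Fin d → ℂ) (R t : p → Fin d → ℂ) (s : Fin d → ℂ)
    (h : ∀ k : Fin (2 * d + 1), ∑ i, pe (R i) k * pe (t i) k - Wm b k * pe s k = 0) (w : ℂ) :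
    ∑ i, pe (R i) w * pe (t i) w = Wm b w * pe s w := by
  let P : Polynomial ℂ := ∑ i, pp (R i) * pp (t i) - (Polynomial.X ^ d + pp b) * pp s
  have hP : ∀ w, P.eval w = ∑ i, pe (R i) w * pe (t i) w - Wm b w * pe s w := by
    intro w
    simp [P, Polynomial.eval_finsetSum, pp_eval, Wm]
  have hd : ∀ v : Fin d → ℂ, (pp v).natDegree ≤ d := fun v =>
    Polynomial.natDegree_le_of_degree_le (pp_degree v).le
  have hdeg : P.natDegree ≤ 2 * d := by
    refine (Polynomial.natDegree_sub_le _ _).trans (max_le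
      (Polynomial.natDegree_sum_le_of_forall_le Finset.univ
      (fun i => pp (R i) * pp (t i)) fun i _ => ?_) ?_)
    · exact Polynomial.natDegree_mul_le_of_le (hd _) (hd _) |>.trans (by omega)
    · refine (Polynomial.natDegree_mul_le_of_le (m := d) (n := d) ?_ (hd _)).trans (by omega)
      exact Polynomial.natDegree_add_le_of_degree_le (Polynomial.natDegree_X_pow_le d) (hd _)
  have : P = 0 := by
    refine Polynomial.eq_zero_of_natDegree_lt_card_of_eval_eq_zero P
      (f := fun k : Fin (2 * d + 1) => (k : ℂ)) ?_ (fun k => ?_) (by simp; omega)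
    · intro a b hab
      have hab' : ((a : ℕ) : ℂ) = ((b : ℕ) : ℂ) := hab
      exact Fin.ext (by exact_mod_cast hab')
    · rw [hP]; exact h k
  have h2 := hP w
  rw [this, Polynomial.eval_zero] at h2
  exact sub_eq_zero.1 h2.symm

theorem pe_sum {d : ℕ} {m : Type*} [Fintype m] (T : Fin d → m → ℂ) (e : m → ℂ) (w : ℂ) :
    ∑ j, pe (fun k => T k j) w * e j = pe (fun k => ∑ j, T k j * e j) w := by
  simp only [pe, Finset.sum_mul]
  rw [Finset.sum_comm]
  exact Finset.sum_congr rfl fun k _ => Finset.sum_congr rfl fun j _ => by ring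

/-- Relations between a Weierstrass polynomial and polynomials of smaller degree: by division they
reduce to polynomial relations of bounded degree, and these form the kernel of a matrix over the
parameter space `E` (evaluation at `2 d + 1` points), to which Oka's theorem in `E` applies. -/
theorem rowOkaAt_weierstrass [DecidableEq p] [FiniteDimensional ℂ E] (hE : OkaProp E) {d : ℕ}
    {b : E → Fin d → ℂ} {R : p → E → Fin d → ℂ} (hb : AnalyticAt ℂ b 0)
    (hR : ∀ i, AnalyticAt ℂ (R i) 0) :
    RowOkaAt (fun (z : ℂ × E) (o : Option p) =>
      o.elim (Wm (b z.2) z.1) (fun i => pe (R i z.2) z.1)) (0, 0) := by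
  let N : E → Matrix (Fin (2 * d + 1)) ((p × Fin d) ⊕ Fin d) ℂ := fun z => Matrix.of fun k =>
    Sum.elim (fun il => pe (R il.1 z) k * (k : ℂ) ^ (il.2 : ℕ)) (fun l => - (Wm (b z) k * (k : ℂ) ^ (l : ℕ)))
  have hNv : ∀ z t k, (N z *ᵥ t) k = ∑ i, pe (R i z) k * pe (fun l => t (Sum.inl (i, l))) k -
      Wm (b z) k * pe (fun l => t (Sum.inr l)) k := by
    intro z t k
    simp only [N, Matrix.mulVec, dotProduct, Matrix.of_apply, Fintype.sum_sum_type, Sum.elim_inl,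
      Sum.elim_inr, Fintype.sum_prod_type, sub_eq_add_neg, pe, Finset.mul_sum, ← Finset.sum_neg_distrib]
    congr 1
    · exact Finset.sum_congr rfl fun i _ => Finset.sum_congr rfl fun j _ => by ring
    · exact Finset.sum_congr rfl fun j _ => by ring
  have hN : AnMatAt N 0 := by
    intro k j
    rcases j with ⟨i, l⟩ | l
    · exact (analyticAt_pe (hR i) analyticAt_const).mul analyticAt_const
    · exact ((analyticAt_Wm hb analyticAt_const).mul analyticAt_const).neg
  obtain ⟨m, _, T, hT, hNT, hgen⟩ := hE _ _ N 0 hN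
  let S : ℂ × E → Matrix (Option p) (m ⊕ p) ℂ := fun z => Matrix.of fun o s => s.elim
    (fun j => o.elim (- pe (fun k => T z.2 (Sum.inr k) j) z.1) (fun i => pe (fun k => T z.2 (Sum.inl (i, k)) j) z.1))
    (fun i => o.elim (- pe (R i z.2) z.1) (fun i' => if i' = i then Wm (b z.2) z.1 else 0))
  have hSnone : ∀ z e, (S z *ᵥ e) none = - pe (fun k => ∑ j, T z.2 (Sum.inr k) j * e (Sum.inl j)) z.1
      - ∑ i, pe (R i z.2) z.1 * e (Sum.inr i) := by
    intro z e
    simp only [S, Matrix.mulVec, dotProduct, Matrix.of_apply, Fintype.sum_sum_type, Sum.elim_inl,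
      Sum.elim_inr, Option.elim, neg_mul, Finset.sum_neg_distrib]
    rw [pe_sum (fun k j => T z.2 (Sum.inr k) j), sub_eq_add_neg]
  have hSsome : ∀ z e i, (S z *ᵥ e) (some i) =
      pe (fun k => ∑ j, T z.2 (Sum.inl (i, k)) j * e (Sum.inl j)) z.1
      + Wm (b z.2) z.1 * e (Sum.inr i) := by
    intro z e i
    simp only [S, Matrix.mulVec, dotProduct, Matrix.of_apply, Fintype.sum_sum_type, Sum.elim_inl,
      Sum.elim_inr, Option.elim]
    rw [pe_sum (fun k j => T z.2 (Sum.inl (i, k)) j)]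
    simp
  have hS : AnMatAt S (0, 0) := by
    have hT' : ∀ i j, AnalyticAt ℂ (fun z : ℂ × E => T z.2 i j) (0, 0) := fun i j =>
      AnalyticAt.fun_comp (g := fun z => T z i j) (hT i j) analyticAt_snd
    have hR' : ∀ i, AnalyticAt ℂ (fun z : ℂ × E => R i z.2) (0, 0) := fun i =>
      AnalyticAt.fun_comp (g := R i) (hR i) analyticAt_snd
    have hb' : AnalyticAt ℂ (fun z : ℂ × E => b z.2) (0, 0) :=
      AnalyticAt.fun_comp (g := b) hb analyticAt_snd
    rintro (_ | i) (j | i')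
    · exact (analyticAt_pe (analyticAt_pi_iff.2 fun k => hT' _ _) analyticAt_fst).neg
    · exact (analyticAt_pe (hR' _) analyticAt_fst).neg
    · exact analyticAt_pe (analyticAt_pi_iff.2 fun k => hT' _ _) analyticAt_fst
    · simp only [S, Matrix.of_apply, Sum.elim_inr, Option.elim]
      split_ifs
      · exact analyticAt_Wm hb' analyticAt_fst
      · exact analyticAt_const
  have hsnd : ∀ y : ℂ × E, Tendsto (fun z : ℂ × E => z.2) (𝓝 y) (𝓝 y.2) := fun y =>
    continuous_snd.tendsto y
  refine ⟨m ⊕ p, inferInstance, S, hS, ?_, ?_⟩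
  · filter_upwards [(hsnd (0, 0)).eventually hNT] with z hz
    ext s
    rcases s with j | i
    · have h1 := poly_rel (b z.2) (fun i => R i z.2) (fun i k => T z.2 (Sum.inl (i, k)) j)
        (fun k => T z.2 (Sum.inr k) j) (fun k => by
          have h2 := hNv z.2 (fun s => T z.2 s j) k
          rw [← h2]
          exact congrFun (congrFun hz k) j) z.1
      simp only [Matrix.vecMul, dotProduct, Fintype.sum_option, Option.elim, S, Matrix.of_apply,
        Sum.elim_inl, Pi.zero_apply]
      rw [h1]; ring
    · simp only [Matrix.vecMul, dotProduct, Fintype.sum_option, Option.elim, S, Matrix.of_apply,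
        Sum.elim_inr, Pi.zero_apply]
      simp; ring
  · have hR' := eventually_all.2 fun i => (hR i).eventually_analyticAt
    filter_upwards [(hsnd (0, 0)).eventually hgen, (hsnd (0, 0)).eventually hT.eventually,
      (hsnd (0, 0)).eventually hb.eventually_analyticAt, (hsnd (0, 0)).eventually hR'] with
      y hy hTy hby hRy c hc hc0
    obtain ⟨w₀, y⟩ := y
    have hci := analyticAt_pi_iff.1 hc
    obtain ⟨Λ, Q, q, hΛ, hQ, hq, hdiv, hrel⟩ := division (p := p) (E := E) (b := b)
      (c := fun i z => c z (some i)) (R := R) (c₀ := fun z => c z none) (w₀ := w₀) (y := y)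
      hby (fun i => hci (some i)) hRy (hci none) (by
        filter_upwards [hc0] with z hz
        simpa [dotProduct, Fintype.sum_option] using hz)
    obtain ⟨e, he, hTe⟩ := hy (fun z => Sum.elim (fun ik => Λ ik.1 z ik.2) (fun k => q z k))
      (analyticAt_pi_iff.2 (by
        rintro (⟨i, k⟩ | k)
        · exact analyticAt_pi_iff.1 (hΛ i) k
        · exact analyticAt_pi_iff.1 hq k)) (by
        filter_upwards [hrel] with z hz
        ext k
        rw [hNv]
        exact sub_eq_zero.2 (hz k))
    have hTe' := (hsnd (w₀, y)).eventually hTe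
    have hrel' := (hsnd (w₀, y)).eventually hrel
    refine ⟨fun z => Sum.elim (fun j => e z.2 j) (fun i => Q i z), analyticAt_pi_iff.2 ?_, ?_⟩
    · rintro (j | i)
      · exact AnalyticAt.fun_comp (g := fun z => e z j) (analyticAt_pi_iff.1 he j) analyticAt_snd
      · exact hQ i
    have hb' : AnalyticAt ℂ (fun z : ℂ × E => q z.2) (w₀, y) :=
      AnalyticAt.fun_comp (g := q) hq analyticAt_snd
    have hnone := Wm_cancel (b := b) (x := (w₀, y))
      (h := fun z => c z none + pe (q z.2) z.1 + ∑ i, pe (R i z.2) z.1 * Q i z) (by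
        have : AnalyticAt ℂ (fun z : ℂ × E =>
            c z none + pe (q z.2) z.1 + ∑ i, pe (R i z.2) z.1 * Q i z) (w₀, y) :=
          ((hci none).add (analyticAt_pe hb' analyticAt_fst)).add
          (Finset.analyticAt_fun_sum _ fun i _ => (analyticAt_pe
            (AnalyticAt.fun_comp (g := R i) (hRy i) analyticAt_snd) analyticAt_fst).mul (hQ i))
        exact this.eventually_analyticAt.mono fun z hz => hz.continuousAt) (by
        filter_upwards [hc0, hdiv, hrel'] with z h1 h2 h3
        simp only [dotProduct, Fintype.sum_option, Option.elim] at h1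
        have h4 : ∑ i, pe (R i z.2) z.1 * c z (some i) =
          ∑ i, pe (R i z.2) z.1 * pe (Λ i z.2) z.1 +
            Wm (b z.2) z.1 * ∑ i, pe (R i z.2) z.1 * Q i z := by
          rw [Finset.mul_sum, ← Finset.sum_add_distrib]
          refine Finset.sum_congr rfl fun i _ => ?_
          rw [h2 i]; ring
        rw [h4, h3 z.1] at h1
        linear_combination h1)
    filter_upwards [hnone, hdiv, hTe'] with z h1 h2 h3
    funext o
    rcases o with _ | i
    · rw [hSnone]
      simp only [Sum.elim_inl, Sum.elim_inr]
      have : (fun k => ∑ j, T z.2 (Sum.inr k) j * e z.2 j) = q z.2 := by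
        funext k
        exact (congrFun h3 (Sum.inr k)).symm
      rw [this]
      linear_combination h1
    · rw [hSsome]
      simp only [Sum.elim_inl, Sum.elim_inr]
      have : (fun k => ∑ j, T z.2 (Sum.inl (i, k)) j * e z.2 j) = Λ i z.2 := by
        funext k
        exact (congrFun h3 (Sum.inl (i, k))).symm
      rw [this]
      exact h2 i

end Oka

section Oka2

open Matrix

/-- A nonzero holomorphic germ is nonzero along some complex line. -/
theorem exists_line {E : Type*} [NormedAddCommGroup E] [NormedSpace ℂ E] {f : E → ℂ} {x : E}
    (hf : AnalyticAt ℂ f x) (h0 : f x = 0) (hne : ¬ ∀ᶠ z in 𝓝 x, f z = 0) :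
    ∃ v : E, v ≠ 0 ∧ ¬ ∀ᶠ w in 𝓝 (0 : ℂ), f (x + w • v) = 0 := by
  obtain ⟨r, hr, hb⟩ := Metric.eventually_nhds_iff_ball.1 hf.eventually_analyticAt
  have h1 : ∃ᶠ z in 𝓝 x, f z ≠ 0 := not_eventually.1 hne
  obtain ⟨z, hz, hzb⟩ := (h1.and_eventually (Metric.ball_mem_nhds x hr)).exists
  refine ⟨z - x, fun h => hz (by rw [sub_eq_zero.1 h, h0]), fun h => ?_⟩
  have hv : 0 < ‖z - x‖ := norm_pos_iff.2 (fun h => hz (by rw [sub_eq_zero.1 h, h0]))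
  have han : AnalyticOnNhd ℂ (fun w : ℂ => f (x + w • (z - x))) (ball 0 (r / ‖z - x‖)) := by
    intro w hw
    refine AnalyticAt.fun_comp (g := f) (hb _ ?_)
      (analyticAt_const.add (analyticAt_id.smul analyticAt_const))
    change x + w • (z - x) ∈ ball x r
    rw [mem_ball_iff_norm, add_sub_cancel_left, norm_smul]
    rw [mem_ball_zero_iff, lt_div_iff₀ hv] at hw
    exact hw
  have := han.eqOn_zero_of_preconnected_of_eventuallyEq_zero (convex_ball _ _).isPreconnected
    (mem_ball_self (div_pos hr hv)) h
  have h2 := this (x := 1) (by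
    rw [mem_ball_zero_iff, norm_one, lt_div_iff₀ hv, one_mul]
    exact mem_ball_iff_norm.1 hzb)
  simp only [one_smul, add_sub_cancel, Pi.zero_apply] at h2
  exact hz h2

/-- The induction step of Oka's theorem for one row. After a linear change of coordinates some entry is
regular in one variable; by preparation and division the row is equivalent to a Weierstrass
polynomial followed by remainders of smaller degree. -/
theorem rowOka {E : Type} [NormedAddCommGroup E] [NormedSpace ℂ E] [FiniteDimensional ℂ E]
    (IH : ∀ (F : Type) [NormedAddCommGroup F] [NormedSpace ℂ F] [FiniteDimensional ℂ F],
      Module.finrank ℂ F < Module.finrank ℂ E → OkaProp F)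
    {p : Type} [Fintype p] {f : E → p → ℂ} {x : E} (hf : AnalyticAt ℂ f x) : RowOkaAt f x := by
  classical
  have hfi := analyticAt_pi_iff.1 hf
  by_cases hz : ∀ i, ∀ᶠ z in 𝓝 x, f z i = 0
  · have hz' : ∀ᶠ z in 𝓝 x, f z = 0 := (eventually_all.2 hz).mono fun z h => funext h
    refine ⟨p, inferInstance, fun _ => 1, AnMatAt.const, ?_, ?_⟩
    · filter_upwards [hz'] with z h
      rw [h, zero_vecMul]
    · filter_upwards with y c hc _
      exact ⟨c, hc, by simp⟩
  push Not at hz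
  obtain ⟨i₀, hi₀⟩ := hz
  by_cases h0 : f x i₀ = 0
  swap
  · exact rowOkaAt_of_ne hf h0
  obtain ⟨v, hv, hline⟩ := exists_line (hfi i₀) h0 (not_eventually.2 hi₀)
  obtain ⟨ℓ, hℓ⟩ := SeparatingDual.exists_eq_one (R := ℂ) hv
  let E' := LinearMap.ker (ℓ : E →ₗ[ℂ] ℂ)
  have hinv : Function.RightInverse (ContinuousLinearMap.toSpanSingleton ℂ v) ℓ := by
    intro w; simp [hℓ]
  let L := ContinuousLinearEquiv.equivOfRightInverse ℓ (ContinuousLinearMap.toSpanSingleton ℂ v) hinv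
  have hdim : Module.finrank ℂ E' < Module.finrank ℂ E := by
    refine Submodule.finrank_lt (fun h => ?_)
    have : v ∈ E' := h ▸ Submodule.mem_top
    have h2 : ℓ v = 0 := this
    rw [hℓ] at h2
    exact one_ne_zero h2
  have hoka : OkaProp E' := IH E' hdim
  refine RowOkaAt.transport L ?_
  let g : ℂ × E' → p → ℂ := fun y => f (x + L.symm y)
  have hg : AnalyticAt ℂ g (0, 0) := by
    refine AnalyticAt.fun_comp (g := f) (f := fun y => x + L.symm y) ?_
      (analyticAt_const.add (L.symm.analyticAt _))
    have : x + L.symm (0, 0) = x := by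
      rw [show ((0, 0) : ℂ × E') = 0 from rfl, map_zero, add_zero]
    rw [this]; exact hf
  change RowOkaAt g (0, 0)
  have hgi := analyticAt_pi_iff.1 hg
  obtain ⟨d, b, u, hb, hu, hu0, hgu⟩ := weierstrass_prep (hgi i₀) (by
    have : ∀ w : ℂ, L.symm (w, 0) = w • v := by
      intro w
      simp [L]
    simpa [g, this] using hline)
  obtain ⟨Λ, Q, -, hΛ, hQ, -, hdiv, -⟩ := division (b := b) (c := fun i z => g z i)
    (R := fun _ _ => 0) (c₀ := fun _ => 0) (w₀ := 0) (y := (0 : E')) hb hgi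
    (fun _ => analyticAt_const) analyticAt_const (by simp [pe])
  have huinv : AnalyticAt ℂ (fun z => (u z)⁻¹) (0, 0) := hu.inv hu0
  refine RowOkaAt.retract
    (A := fun z => Matrix.of fun i o => o.elim (if i = i₀ then (u z)⁻¹ else 0)
      (fun j => (if i = j then 1 else 0) - (if i = i₀ then Q j z * (u z)⁻¹ else 0)))
    (B := fun z => Matrix.of fun o j => o.elim (Q j z) (fun i => if i = j then 1 else 0))
    ?_ ?_ ?_ ?_ ?_ (rowOkaAt_weierstrass hoka hb hΛ)
  · rintro i (_ | j)
    · simp only [Matrix.of_apply, Option.elim]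
      split_ifs
      exacts [huinv, analyticAt_const]
    · simp only [Matrix.of_apply, Option.elim]
      refine analyticAt_const.sub ?_
      split_ifs
      exacts [(hQ j).mul huinv, analyticAt_const]
  · rintro (_ | i) j
    · exact hQ j
    · exact analyticAt_const
  · filter_upwards [hgu, hdiv, hu.continuousAt.eventually_ne hu0] with z h1 h2 h3
    replace h1 : g z i₀ = u z * Wm (b z.2) z.1 := h1
    ext o
    rcases o with _ | j
    · simp only [vecMul, dotProduct, Matrix.of_apply, Option.elim, mul_ite, mul_zero,
        Finset.sum_ite_eq', Finset.mem_univ, if_true, h1]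
      field_simp
    · simp only [vecMul, dotProduct, Matrix.of_apply, Option.elim, mul_sub, mul_ite, mul_zero, mul_one,
        Finset.sum_sub_distrib, Finset.sum_ite_eq', Finset.mem_univ, if_true, h1, h2 j]
      field_simp
      ring
  · filter_upwards [hdiv] with z h2
    ext j
    simp only [vecMul, dotProduct, Fintype.sum_option, Matrix.of_apply, Option.elim, mul_ite,
      mul_zero, mul_one, Finset.sum_ite_eq', Finset.mem_univ, if_true, h2 j]
    ring
  · filter_upwards with z
    ext i k
    simp only [Matrix.mul_apply, Fintype.sum_option, Matrix.of_apply, Option.elim, mul_ite,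
      mul_zero, mul_one, Finset.sum_ite_eq', Finset.mem_univ, if_true, Matrix.one_apply]
    split_ifs <;> ring

/-- Several rows are treated one at a time: the relations of a further row are those of its restriction
to the generators already found. -/
theorem oka_of_rows {E : Type} [NormedAddCommGroup E] [NormedSpace ℂ E]
    (H : ∀ (p : Type) [Fintype p] (f : E → p → ℂ) (x : E), AnalyticAt ℂ f x → RowOkaAt f x) :
    OkaProp E := by
  classical
  intro q p _ _ M x hM
  have key : ∀ s : Finset q, ∃ (m : Type) (_ : Fintype m) (S : E → Matrix p m ℂ), AnMatAt S x ∧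
      (∀ᶠ z in 𝓝 x, ∀ i ∈ s, M z i ᵥ* S z = 0) ∧ ∀ᶠ y in 𝓝 x, ∀ c : E → p → ℂ,
        AnalyticAt ℂ c y → (∀ᶠ z in 𝓝 y, ∀ i ∈ s, M z i ⬝ᵥ c z = 0) →
        ∃ e : E → m → ℂ, AnalyticAt ℂ e y ∧ ∀ᶠ z in 𝓝 y, c z = S z *ᵥ e z := by
    intro s
    induction s using Finset.induction_on with
    | empty =>
      refine ⟨p, inferInstance, fun _ => 1, AnMatAt.const, by simp, ?_⟩
      filter_upwards with y c hc _
      exact ⟨c, hc, by simp⟩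
    | insert a s _ ih =>
      obtain ⟨m, _, S, hS, hS0, hgen⟩ := ih
      obtain ⟨m', _, S', hS', hS0', hgen'⟩ := H m (fun z => M z a ᵥ* S z) x (by
        rw [analyticAt_pi_iff]
        intro j
        simp only [vecMul, dotProduct]
        exact Finset.analyticAt_fun_sum _ fun k _ => (hM a k).mul (hS k j))
      refine ⟨m', inferInstance, fun z => S z * S' z, hS.mul hS', ?_, ?_⟩
      · filter_upwards [hS0, hS0'] with z h1 h2 i hi
        rw [← vecMul_vecMul]
        rcases Finset.mem_insert.1 hi with rfl | hi
        · exact h2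
        · rw [h1 i hi, zero_vecMul]
      · filter_upwards [hgen, hgen'] with y h1 h2 c hc hc0
        obtain ⟨e, he, hce⟩ := h1 c hc (hc0.mono fun z h i hi => h i (Finset.mem_insert_of_mem hi))
        obtain ⟨e', he', hce'⟩ := h2 e he (by
          filter_upwards [hc0, hce] with z h3 h4
          have := h3 a (Finset.mem_insert_self _ _)
          rwa [h4, dotProduct_mulVec] at this)
        refine ⟨e', he', ?_⟩
        filter_upwards [hce, hce'] with z h3 h4
        rw [h3, h4, mulVec_mulVec]
  obtain ⟨m, _, S, hS, hS0, hgen⟩ := key Finset.univ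
  refine ⟨m, inferInstance, S, hS, ?_, ?_⟩
  · filter_upwards [hS0] with z h
    ext i j
    exact congrFun (h i (Finset.mem_univ _)) j
  · filter_upwards [hgen] with y h c hc hc0
    exact h c hc (hc0.mono fun z hz i _ => congrFun hz i)

/-- Oka's coherence theorem: the sheaf of relations of an analytic matrix is locally finitely
generated. -/
theorem oka (E : Type) [NormedAddCommGroup E] [NormedSpace ℂ E] [FiniteDimensional ℂ E] :
    OkaProp E := by
  have key : ∀ k : ℕ, ∀ (E : Type) [NormedAddCommGroup E] [NormedSpace ℂ E]
      [FiniteDimensional ℂ E], Module.finrank ℂ E = k → OkaProp E := by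
    intro k
    induction k using Nat.strong_induction_on with
    | _ k ih =>
      intro E _ _ _ hk
      refine oka_of_rows fun p _ f x hf => rowOka (fun F _ _ _ hF => ih _ (hk ▸ hF) F rfl) hf
  exact key _ E rfl

end Oka2

/-! ### Additive splitting on strips -/

section Strip

open Complex (I)

theorem line_integrable {h : ℝ → ℂ} (hc : Continuous h) {X C : ℝ}
    (hb : ∀ x : ℝ, X ≤ |x| → ‖h x‖ ≤ C * (1 + x ^ 2)⁻¹) : Integrable h := by
  refine hc.locallyIntegrable.integrable_of_isBigO_cocompact (g := fun x : ℝ => (1 + x ^ 2)⁻¹) ?_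
    (integrable_inv_one_add_sq.integrableAtFilter _)
  refine Asymptotics.IsBigO.of_bound C ?_
  have : ∀ᶠ x : ℝ in cocompact ℝ, X ≤ ‖x‖ := tendsto_norm_cocompact_atTop.eventually_ge_atTop X
  filter_upwards [this] with x hx
  rw [Real.norm_of_nonneg (by positivity : (0:ℝ) ≤ (1 + x ^ 2)⁻¹)]
  exact hb x hx

/-- Contour shift between two horizontal lines for functions decaying like `1 / x²`. -/
theorem strip_shift {h : ℂ → ℂ} {y1 y2 : ℝ}
    (hd : DifferentiableOn ℂ h {s | s.im ∈ uIcc y1 y2}) {X C : ℝ}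
    (hb : ∀ x : ℝ, X ≤ |x| → ∀ y ∈ uIcc y1 y2, ‖h (x + y * I)‖ ≤ C * (1 + x ^ 2)⁻¹) :
    ∫ x : ℝ, h (x + y1 * I) = ∫ x : ℝ, h (x + y2 * I) := by
  have hline : ∀ y ∈ uIcc y1 y2, Continuous fun x : ℝ => h (x + y * I) := by
    intro y hy
    refine hd.continuousOn.comp_continuous (by fun_prop) ?_
    intro x
    simpa using hy
  have hi : ∀ y ∈ uIcc y1 y2, Integrable fun x : ℝ => h (x + y * I) := fun y hy =>
    line_integrable (hline y hy) fun x hx => hb x hx y hy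
  have ht : ∀ y ∈ uIcc y1 y2, Tendsto (fun T : ℝ => ∫ x in (-T)..T, h (x + y * I)) atTop
      (𝓝 (∫ x : ℝ, h (x + y * I))) := fun y hy =>
    intervalIntegral_tendsto_integral (hi y hy) tendsto_neg_atTop_atBot tendsto_id
  have hside : ∀ e : ℝ, |e| = 1 → Tendsto (fun T : ℝ => ∫ y in y1..y2, h (((e * T : ℝ) : ℂ) + y * I)) atTop
      (𝓝 0) := by
    intro e he
    have hz : Tendsto (fun T : ℝ => C * (1 + T ^ 2)⁻¹ * |y2 - y1|) atTop (𝓝 0) := by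
      have : Tendsto (fun T : ℝ => (1 + T ^ 2)⁻¹) atTop (𝓝 0) := by
        refine tendsto_inv_atTop_zero.comp ?_
        exact tendsto_atTop_add_const_left _ _ (tendsto_pow_atTop two_ne_zero)
      simpa using (this.const_mul C).mul_const |y2 - y1|
    refine squeeze_zero_norm' ?_ hz
    filter_upwards [eventually_ge_atTop (max X 0)] with T hT
    refine intervalIntegral.norm_integral_le_of_norm_le_const fun y hy => ?_
    have h1 := hb (e * T) (by
      rw [abs_mul, he, one_mul]; exact (le_max_left _ _).trans (hT.trans (le_abs_self T))) y
        (uIoc_subset_uIcc hy)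
    have h2 : (e * T) ^ 2 = T ^ 2 := by
      rw [mul_pow, ← sq_abs e, he]; ring
    rw [h2] at h1
    exact h1
  have key : ∀ T : ℝ, (∫ x in (-T)..T, h (x + y1 * I)) - (∫ x in (-T)..T, h (x + y2 * I)) +
      I • (∫ y in y1..y2, h (((1 * T : ℝ) : ℂ) + y * I)) -
      I • (∫ y in y1..y2, h (((-1 * T : ℝ) : ℂ) + y * I)) = 0 := by
    intro T
    have := Complex.integral_boundary_rect_eq_zero_of_differentiableOn h (-T + y1 * I) (T + y2 * I)
      (hd.mono (by
        rintro z ⟨-, hz⟩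
        simpa using hz))
    simpa using this
  have h1 := ((ht y1 left_mem_uIcc).sub (ht y2 right_mem_uIcc)).add
    ((hside 1 (by simp)).const_smul I) |>.sub ((hside (-1) (by simp)).const_smul I)
  have h2 := tendsto_nhds_unique (h1.congr key) tendsto_const_nhds
  simpa [sub_eq_zero] using h2

/-- The splitting kernel: a simple pole at `0`, cubic decay, and no other pole in `|Im| < 8`. -/
noncomputable def kk (w : ℂ) : ℂ := 64 / (w * (w ^ 2 + 64))

theorem kk_neg (w : ℂ) : kk (-w) = - kk w := by
  rw [kk, kk, neg_sq, neg_mul, div_neg]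

theorem kk_quad (x v : ℝ) {a : ℝ} (ha : 0 < a) (h2 : |v| ≤ 8 - a) :
    x ^ 2 + a ^ 2 ≤ ‖((x : ℂ) + v * I) ^ 2 + 64‖ := by
  have h3 := abs_le.1 h2
  have e : ((x : ℂ) + v * I) ^ 2 + 64 = ((x : ℂ) + (v + 8 : ℝ) * I) * ((x : ℂ) + (v - 8 : ℝ) * I) := by
    push_cast; ring_nf; simp; ring
  rw [e, norm_mul]
  refine (sq_le_sq₀ (by positivity) (by positivity)).1 ?_
  rw [mul_pow, ← Complex.normSq_eq_norm_sq, ← Complex.normSq_eq_norm_sq, Complex.normSq_add_mul_I,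
    Complex.normSq_add_mul_I, sq (x ^ 2 + a ^ 2)]
  have h4 : a ^ 2 ≤ (v + 8) ^ 2 := by nlinarith
  have h5 : a ^ 2 ≤ (v - 8) ^ 2 := by nlinarith
  gcongr

theorem kk_den_ne {w : ℂ} (h0 : w.im ≠ 0) (h2 : |w.im| < 8) : w * (w ^ 2 + 64) ≠ 0 := by
  refine mul_ne_zero (fun h => h0 (by simp [h])) fun h => ?_
  have := kk_quad w.re w.im (a := 8 - |w.im|) (by linarith) (by linarith)
  rw [Complex.re_add_im, h, norm_zero] at this
  nlinarith [sq_nonneg w.re]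

theorem kk_bound (x v : ℝ) {a : ℝ} (ha : 0 < a) (h1 : a ≤ |v|) (h2 : |v| ≤ 8 - a) :
    ‖kk (x + v * I)‖ ≤ 64 / a * (x ^ 2 + a ^ 2)⁻¹ := by
  have hq := kk_quad x v ha h2
  have hl : a ≤ ‖(x : ℂ) + v * I‖ := h1.trans (by simpa using Complex.abs_im_le_norm ((x : ℂ) + v * I))
  rw [kk, norm_div, norm_mul, ← div_eq_mul_inv, div_div]
  have : ‖(64:ℂ)‖ = 64 := by simp
  rw [this]
  gcongr

theorem kk_analyticAt {w : ℂ} (h0 : w.im ≠ 0) (h2 : |w.im| < 8) : AnalyticAt ℂ kk w := by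
  unfold kk
  exact analyticAt_const.fun_div (by fun_prop) (kk_den_ne h0 h2)

/-- Comparison of translated Lorentzians. -/
theorem lorentz_shift {a : ℝ} (ha : 0 < a) {R r x : ℝ} (hr : |r| ≤ R) :
    ((x - r) ^ 2 + a ^ 2)⁻¹ ≤ (2 + 2 * (1 + R ^ 2) / a ^ 2) * (1 + x ^ 2)⁻¹ := by
  have h1 : r ^ 2 ≤ R ^ 2 := sq_le_sq' (by linarith [(abs_le.1 hr).1]) (abs_le.1 hr).2
  rw [← div_eq_mul_inv, inv_eq_one_div, div_le_div_iff₀ (by positivity) (by positivity)]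
  have e : (2 + 2 * (1 + R ^ 2) / a ^ 2) * ((x - r) ^ 2 + a ^ 2)
     = 2 * (x - r) ^ 2 + 2 * a ^ 2 + 2 * (1 + R ^ 2) + 2 * (1 + R ^ 2) / a ^ 2 * (x - r) ^ 2 := by
    field_simp
    ring
  rw [e]
  have : 0 ≤ 2 * (1 + R ^ 2) / a ^ 2 * (x - r) ^ 2 := by positivity
  nlinarith [sq_nonneg (x - 2 * r)]

theorem kk_line_continuous {v : ℝ} (h0 : v ≠ 0) (h2 : |v| < 8) :
    Continuous fun x : ℝ => kk (x + v * I) := by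
  refine continuous_iff_continuousAt.2 fun x => ?_
  have := (kk_analyticAt (w := x + v * I) (by simpa using h0) (by simpa using h2)).continuousAt
  exact ContinuousAt.comp (f := fun x : ℝ => (x : ℂ) + v * I) this (by fun_prop)

/-- Half of the residue contribution of `kk` at `0`: the integral of `kk` along a line below the
origin. -/
noncomputable def kkJ : ℂ := ∫ x : ℝ, kk (x + (-4 : ℝ) * I)

theorem kk_int_shift {b : ℝ} (hb : 0 < b) (hb4 : b ≤ 4) : ∫ x : ℝ, kk (x + (-b : ℝ) * I) = kkJ := by
  refine strip_shift (X := 0) (C := 64 / b * (2 + 2 * (1 + 0 ^ 2) / b ^ 2)) ?_ ?_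
  · intro s hs
    have hs' : s.im ∈ uIcc (-b) (-4) := hs
    rw [uIcc_of_ge (by linarith)] at hs'
    have h1 : s.im < 0 := by linarith [hs'.2]
    exact (kk_analyticAt h1.ne (by rw [abs_of_neg h1]; linarith [hs'.1])).differentiableAt.differentiableWithinAt
  · intro x _ y hy
    rw [uIcc_of_ge (by linarith)] at hy
    have h1 : y < 0 := by linarith [hy.2]
    refine (kk_bound x y hb (by rw [abs_of_neg h1]; linarith [hy.2])
      (by rw [abs_of_neg h1]; linarith [hy.1])).trans ?_
    rw [mul_assoc]
    have := lorentz_shift hb (R := 0) (r := 0) (x := x) (by simp)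
    rw [sub_zero] at this
    gcongr

theorem kk_int_shift_up {b : ℝ} (hb : 0 < b) (hb4 : b ≤ 4) :
    ∫ x : ℝ, kk (x + (b : ℝ) * I) = -kkJ := by
  rw [← kk_int_shift hb hb4, ← integral_neg_eq_self, ← integral_neg]
  congr 1
  ext x
  rw [← kk_neg]
  congr 1
  push_cast
  ring

theorem kkJ_ne_zero : kkJ ≠ 0 := by
  have hi : Integrable fun x : ℝ => kk (x + (-4 : ℝ) * I) := by
    refine line_integrable (kk_line_continuous (by norm_num) (by norm_num))
      (X := 0) (C := 64 / 1 * 1) fun x _ => ?_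
    refine (kk_bound x (-4) one_pos (by norm_num) (by norm_num)).trans ?_
    rw [mul_assoc]
    gcongr
    rw [one_mul, add_comm]; norm_num
  have him : ∀ x : ℝ, 0 < (kk (x + (-4 : ℝ) * I)).im := by
    intro x
    have hne := kk_den_ne (w := x + (-4 : ℝ) * I) (by simp) (by norm_num)
    rw [kk]
    set d := ((x : ℂ) + (-4 : ℝ) * I) * (((x : ℂ) + (-4 : ℝ) * I) ^ 2 + 64) with hd
    have e : d = ((x ^ 3 + 16 * x : ℝ) : ℂ) + ((-(12 * x ^ 2 + 192) : ℝ) : ℂ) * I := by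
      rw [hd]; push_cast; ring_nf; simp [pow_succ]; ring
    rw [Complex.div_im]
    have h1 : d.im = -(12 * x ^ 2 + 192) := by rw [e]; simp [-Complex.ofReal_neg, -Complex.ofReal_add, -Complex.ofReal_mul, -Complex.ofReal_pow]
    rw [h1]
    have h3 : 0 < Complex.normSq d := Complex.normSq_pos.2 hne
    simp
    exact div_neg_of_neg_of_pos (by nlinarith [sq_nonneg x]) h3
  intro h
  have h1 : (kkJ).im = ∫ x : ℝ, (kk (x + (-4 : ℝ) * I)).im := by
    rw [kkJ]
    exact (Complex.imCLM.integral_comp_comm hi).symm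
  have h2 : 0 < ∫ x : ℝ, (kk (x + (-4 : ℝ) * I)).im := by
    refine (integral_pos_iff_support_of_nonneg (fun x => (him x).le) hi.im).2 ?_
    have : Function.support (fun x : ℝ => (kk (x + (-4 : ℝ) * I)).im) = univ :=
      Set.eq_univ_of_forall fun x => (him x).ne'
    rw [this]
    simp
  rw [← h1, h] at h2
  exact lt_irrefl _ h2

/-- The horizontal strip `a < Im s < b`. -/
def hs (a b : ℝ) : Set ℂ := {s | a < s.im ∧ s.im < b}

theorem isOpen_hs (a b : ℝ) : IsOpen (hs a b) :=
  (isOpen_lt continuous_const Complex.continuous_im).inter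
    (isOpen_lt Complex.continuous_im continuous_const)

theorem isOpen_prod_hs {F : Type*} [TopologicalSpace F] {W : Set F} (hW : IsOpen W) (a b : ℝ) :
    IsOpen (W ×ˢ hs a b) := hW.prod (isOpen_hs a b)

variable {F : Type*} [NormedAddCommGroup F] [NormedSpace ℂ F]

/-- Convolution with the kernel along the line `Im = y`. -/
noncomputable def LI (f : F × ℂ → ℂ) (y : ℝ) (p : F × ℂ) : ℂ :=
  ∫ x : ℝ, f (p.1, x + y * I) * kk (x + y * I - p.2)

/-- The constant bounding the integral of `‖kk‖` along the lines `Im = v` with `a ≤ |v| ≤ 8 - a`. -/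
noncomputable def CK (a : ℝ) : ℝ := ∫ x : ℝ, 64 / a * (x ^ 2 + a ^ 2)⁻¹

theorem lorentz_integrable {a : ℝ} (ha : 0 < a) : Integrable fun x : ℝ => (x ^ 2 + a ^ 2)⁻¹ := by
  refine Integrable.mono' (integrable_inv_one_add_sq.const_mul (2 + 2 * (1 + 0 ^ 2) / a ^ 2)) ?_ ?_
  · exact Continuous.aestronglyMeasurable
      (Continuous.inv₀ (by fun_prop) fun x => by positivity)
  · refine Eventually.of_forall fun x => ?_
    have := lorentz_shift ha (R := 0) (r := 0) (x := x) (by simp)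
    rw [sub_zero] at this
    rwa [Real.norm_of_nonneg (by positivity)]

theorem CK_nonneg {a : ℝ} (ha : 0 < a) : 0 ≤ CK a :=
  integral_nonneg fun x => by positivity

theorem LI_integrand_bound {f : F × ℂ → ℂ} {W : Set F} {δ M y a : ℝ} (hM : 0 ≤ M)
    (hb : ∀ p ∈ W ×ˢ hs (-δ) δ, ‖f p‖ ≤ M) (hy : |y| < δ) (ha : 0 < a)
    {p : F × ℂ} (h1 : p.1 ∈ W) (h2 : a ≤ |y - p.2.im|) (h3 : |y - p.2.im| ≤ 8 - a) (x : ℝ) :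
    ‖f (p.1, x + y * I) * kk (x + y * I - p.2)‖ ≤ M * (64 / a * ((x - p.2.re) ^ 2 + a ^ 2)⁻¹) := by
  rw [norm_mul]
  have e : (x : ℂ) + y * I - p.2 = ((x - p.2.re : ℝ) : ℂ) + ((y - p.2.im : ℝ) : ℂ) * I := by
    apply Complex.ext <;> simp
  have := kk_bound (x - p.2.re) (y - p.2.im) ha h2 h3
  rw [← e] at this
  have hf := hb (p.1, x + y * I) ⟨h1, by simpa [hs] using abs_lt.1 hy⟩
  gcongr

theorem LI_bound {f : F × ℂ → ℂ} {W : Set F} {δ M y a : ℝ} (hM : 0 ≤ M)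
    (hb : ∀ p ∈ W ×ˢ hs (-δ) δ, ‖f p‖ ≤ M) (hy : |y| < δ) (ha : 0 < a)
    {p : F × ℂ} (h1 : p.1 ∈ W) (h2 : a ≤ |y - p.2.im|) (h3 : |y - p.2.im| ≤ 8 - a) :
    ‖LI f y p‖ ≤ M * CK a := by
  have hi : Integrable fun x : ℝ => M * (64 / a * ((x - p.2.re) ^ 2 + a ^ 2)⁻¹) :=
    (((lorentz_integrable ha).comp_sub_right p.2.re).const_mul _).const_mul _
  refine (norm_integral_le_of_norm_le hi
    (Eventually.of_forall fun x => LI_integrand_bound hM hb hy ha h1 h2 h3 x)).trans ?_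
  rw [integral_const_mul, CK,
    integral_sub_right_eq_self (fun x : ℝ => 64 / a * (x ^ 2 + a ^ 2)⁻¹) p.2.re]

theorem line_mem {W : Set F} {δ y : ℝ} {z : F} (hz : z ∈ W) (hy : |y| < δ) (x : ℝ) :
    (z, (x : ℂ) + y * I) ∈ W ×ˢ hs (-δ) δ := ⟨hz, by simpa [hs] using abs_lt.1 hy⟩

theorem LI_integrand_continuous {f : F × ℂ → ℂ} {W : Set F} {δ y : ℝ}
    (hf : AnalyticOnNhd ℂ f (W ×ˢ hs (-δ) δ)) (hy : |y| < δ)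
    {p : F × ℂ} (h1 : p.1 ∈ W) (h2 : y - p.2.im ≠ 0) (h3 : |y - p.2.im| < 8) :
    Continuous fun x : ℝ => f (p.1, x + y * I) * kk (x + y * I - p.2) := by
  refine Continuous.mul ?_ ?_
  · exact hf.continuousOn.comp_continuous (by fun_prop) fun x => line_mem h1 hy x
  · refine continuous_iff_continuousAt.2 fun x => ?_
    have := (kk_analyticAt (w := x + y * I - p.2) (by simpa using h2) (by simpa using h3)).continuousAt
    exact ContinuousAt.comp (f := fun x : ℝ => (x : ℂ) + y * I - p.2) this (by fun_prop)

theorem LI_analytic [FiniteDimensional ℂ F] {f : F × ℂ → ℂ} {W : Set F} (hW : IsOpen W)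
    {δ M y a : ℝ} (hM : 0 ≤ M)
    (hf : AnalyticOnNhd ℂ f (W ×ˢ hs (-δ) δ))
    (hb : ∀ p ∈ W ×ˢ hs (-δ) δ, ‖f p‖ ≤ M) (hy : |y| < δ) (ha : 0 < a)
    {p : F × ℂ} (h1 : p.1 ∈ W) (h2 : a < |y - p.2.im|) (h3 : |y - p.2.im| < 8 - a) :
    AnalyticAt ℂ (LI f y) p := by
  set R := |p.2.re| + 1 with hR
  let U : Set (F × ℂ) := {q | q.1 ∈ W ∧ a < |y - q.2.im| ∧ |y - q.2.im| < 8 - a ∧ |q.2.re| < R}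
  have hc : Continuous fun q : F × ℂ => |y - q.2.im| :=
    (continuous_const.sub (Complex.continuous_im.comp continuous_snd)).abs
  have hc2 : Continuous fun q : F × ℂ => |q.2.re| := (Complex.continuous_re.comp continuous_snd).abs
  have hU : IsOpen U := (hW.preimage continuous_fst).inter <|
    (isOpen_lt continuous_const hc).inter <| (isOpen_lt hc continuous_const).inter <|
      isOpen_lt hc2 continuous_const
  have hpU : p ∈ U := ⟨h1, h2, h3, by rw [hR]; linarith⟩
  refine analyticOnNhd_integral (U := U)
    (b := fun x => M * (64 / a * ((2 + 2 * (1 + R ^ 2) / a ^ 2) * (1 + x ^ 2)⁻¹)))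
    hU ?_ ?_ ?_ ?_ p hpU
  · refine Eventually.of_forall fun x q hq => ?_
    have e1 : AnalyticAt ℂ (fun q : F × ℂ => f (q.1, x + y * I)) q :=
      AnalyticAt.fun_comp (g := f) (f := fun q : F × ℂ => (q.1, (x : ℂ) + y * I))
        (hf _ (line_mem hq.1 hy x)) (analyticAt_fst.prod analyticAt_const)
    have h0 : y - q.2.im ≠ 0 := fun h => by have := hq.2.1; rw [h, abs_zero] at this; linarith
    have e2 : AnalyticAt ℂ (fun q : F × ℂ => kk (x + y * I - q.2)) q :=
      AnalyticAt.fun_comp (g := kk) (f := fun q : F × ℂ => (x : ℂ) + y * I - q.2)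
        (kk_analyticAt (by simpa using h0) (by simpa using hq.2.2.1.trans (by linarith)))
        (analyticAt_const.sub analyticAt_snd)
    exact e1.mul e2
  · intro q hq
    have h0 : y - q.2.im ≠ 0 := fun h => by have := hq.2.1; rw [h, abs_zero] at this; linarith
    exact (LI_integrand_continuous hf hy hq.1 h0 (hq.2.2.1.trans (by linarith))).aestronglyMeasurable
  · refine Eventually.of_forall fun x q hq => ?_
    refine (LI_integrand_bound hM hb hy ha hq.1 hq.2.1.le hq.2.2.1.le x).trans ?_
    have := lorentz_shift ha (R := R) (r := q.2.re) (x := x) hq.2.2.2.le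
    gcongr
  · exact ((integrable_inv_one_add_sq.const_mul _).const_mul _).const_mul _

/-- Cauchy's formula for the kernel `kk`: the convolutions along two lines enclosing `s` differ by a
multiple of the value at `s`. -/
theorem LI_sub {f : F × ℂ → ℂ} {W : Set F}
    {δ M a : ℝ} (hM : 0 ≤ M) (hδ : δ ≤ 1)
    (hf : AnalyticOnNhd ℂ f (W ×ˢ hs (-δ) δ))
    (hb : ∀ p ∈ W ×ˢ hs (-δ) δ, ‖f p‖ ≤ M) (ha : 0 < a) (haδ : a < δ)
    {z : F} (h1 : z ∈ W) {s : ℂ} (hs1 : |s.im| < a) :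
    LI f (-a) (z, s) - LI f a (z, s) = 2 * kkJ * f (z, s) := by
  have hsa := abs_lt.1 hs1
  let φ : ℂ → ℂ := fun ζ => f (z, ζ)
  have hφ : DifferentiableOn ℂ φ (hs (-δ) δ) := fun ζ hζ =>
    (AnalyticAt.fun_comp (g := f) (f := fun ζ : ℂ => (z, ζ)) (hf (z, ζ) ⟨h1, hζ⟩)
      (analyticAt_const.prod analyticAt_id)).differentiableAt.differentiableWithinAt
  have hss : s ∈ hs (-δ) δ := ⟨by linarith, by linarith⟩
  have hds : DifferentiableOn ℂ (dslope φ s) (hs (-δ) δ) :=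
    (Complex.differentiableOn_dslope ((isOpen_hs _ _).mem_nhds hss)).2 hφ
  let h : ℂ → ℂ := fun ζ => dslope φ s ζ * (64 / ((ζ - s) ^ 2 + 64))
  have hq : ∀ (x y : ℝ), |y| ≤ a → (x - s.re) ^ 2 + 1 ≤ ‖((x : ℂ) + y * I - s) ^ 2 + 64‖ := by
    intro x y hy
    have hy' := abs_le.1 hy
    have e : (x : ℂ) + y * I - s = ((x - s.re : ℝ) : ℂ) + ((y - s.im : ℝ) : ℂ) * I := by
      apply Complex.ext <;> simp
    have := kk_quad (x - s.re) (y - s.im) one_pos (by rw [abs_le]; constructor <;> linarith)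
    rwa [← e, one_pow] at this
  have hu : uIcc (-a) a = Icc (-a) a := uIcc_of_le (by linarith)
  have hne : ∀ ζ : ℂ, ζ ≠ s → h ζ = (φ ζ - φ s) * kk (ζ - s) := by
    intro ζ hζ
    simp only [h, kk]
    rw [dslope_of_ne _ hζ, slope_def_field, div_mul_div_comm, mul_div_assoc]
  have hshift := strip_shift (h := h) (y1 := -a) (y2 := a) (X := |s.re| + 1)
    (C := 2 * M * 64 * (2 + 2 * (1 + |s.re| ^ 2) / 1 ^ 2)) ?_ ?_
  · have hInt : ∀ y : ℝ, |y| = a →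
        ∫ x : ℝ, h (x + y * I) = LI f y (z, s) - φ s * ∫ x : ℝ, kk (x + (y - s.im : ℝ) * I) := by
      intro y hy
      have hyy : y ≠ s.im := fun h => by rw [← h, hy] at hs1; exact lt_irrefl _ hs1
      have hp : 0 < |y - s.im| := abs_pos.2 (sub_ne_zero.2 hyy)
      have hl2 : |y - s.im| < 2 := by
        have := abs_le.1 hy.le
        rw [abs_lt]; constructor <;> linarith
      have hyδ : |y| < δ := by rw [hy]; exact haδ
      have hy0 : y - s.im ≠ 0 := sub_ne_zero.2 hyy
      have i1 : Integrable fun x : ℝ => f (z, x + y * I) * kk (x + y * I - s) := by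
        have hi : Integrable fun x : ℝ => M * (64 / |y - s.im| * ((x - s.re) ^ 2 + |y - s.im| ^ 2)⁻¹) :=
          (((lorentz_integrable hp).comp_sub_right s.re).const_mul _).const_mul _
        refine hi.mono' (LI_integrand_continuous (p := (z, s)) hf hyδ h1 hy0
          (by simpa using hl2.trans (by norm_num))).aestronglyMeasurable
          (Eventually.of_forall fun x => ?_)
        exact LI_integrand_bound (p := (z, s)) hM hb hyδ hp h1 le_rfl
          (by change |y - s.im| ≤ 8 - |y - s.im|; linarith) x
      have i2 : Integrable fun x : ℝ => kk (x + y * I - s) := by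
        have hi : Integrable fun x : ℝ => (1:ℝ) * (64 / |y - s.im| * ((x - s.re) ^ 2 + |y - s.im| ^ 2)⁻¹) :=
          (((lorentz_integrable hp).comp_sub_right s.re).const_mul _).const_mul _
        have hcc := LI_integrand_continuous (F := F) (p := (z, s)) (f := fun _ => 1) (W := W) (δ := δ)
          (fun _ _ => analyticAt_const) hyδ h1 hy0 (by simpa using hl2.trans (by norm_num))
        refine hi.mono' ?_ (Eventually.of_forall fun x => ?_)
        · simpa using hcc.aestronglyMeasurable
        · have := LI_integrand_bound (F := F) (f := fun _ => 1) (p := (z, s)) (M := 1) (δ := δ) (W := W) zero_le_one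
            (by simp) hyδ hp h1 le_rfl
            (by change |y - s.im| ≤ 8 - |y - s.im|; linarith) x
          simpa using this
      have e1 : ∫ x : ℝ, kk (x + y * I - s) = ∫ x : ℝ, kk (x + (y - s.im : ℝ) * I) := by
        rw [← integral_sub_right_eq_self (fun x : ℝ => kk (x + (y - s.im : ℝ) * I)) s.re]
        congr 1
        ext x
        congr 1
        apply Complex.ext <;> simp
      rw [← e1, LI, ← integral_const_mul, ← integral_sub i1 (i2.const_mul _)]
      congr 1
      ext x
      rw [hne _ (fun h => hyy (by simpa using congrArg Complex.im h))]
      ring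
    rw [hInt (-a) (by rw [abs_neg, abs_of_pos ha]), hInt a (abs_of_pos ha)] at hshift
    have e2 : -a - s.im = -(a + s.im) := by ring
    rw [e2, kk_int_shift (by linarith) (by linarith), kk_int_shift_up (by linarith) (by linarith)]
      at hshift
    have : φ s = f (z, s) := rfl
    rw [this] at hshift
    linear_combination hshift
  · intro ζ hζ
    have hζ' : ζ.im ∈ Icc (-a) a := by rw [← hu]; exact hζ
    refine ((hds ζ ⟨by linarith [hζ'.1], by linarith [hζ'.2]⟩).mono ?_).mul ?_
    · intro w hw
      have hw' : w.im ∈ Icc (-a) a := by rw [← hu]; exact hw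
      exact ⟨by linarith [hw'.1], by linarith [hw'.2]⟩
    · refine DifferentiableAt.differentiableWithinAt ?_
      refine DifferentiableAt.fun_div (by fun_prop) (by fun_prop) ?_
      have := hq ζ.re ζ.im (abs_le.2 hζ')
      rw [Complex.re_add_im] at this
      exact norm_pos_iff.1 (lt_of_lt_of_le (by positivity) this)
  · intro x hx y hy
    rw [hu] at hy
    have hq1 := hq x y (abs_le.2 hy)
    have hre : 1 ≤ ‖(x : ℂ) + y * I - s‖ := by
      refine le_trans ?_ (Complex.abs_re_le_norm _)
      simp
      have := abs_sub_abs_le_abs_sub x s.re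
      linarith
    have hxs : (x : ℂ) + y * I ≠ s := fun h => by
      rw [h, sub_self, norm_zero] at hre; linarith
    have hsl : ‖dslope φ s (x + y * I)‖ ≤ 2 * M := by
      rw [dslope_of_ne _ hxs, slope_def_field, norm_div]
      refine (div_le_self (norm_nonneg _) hre).trans ((norm_sub_le _ _).trans ?_)
      have b1 := hb (z, x + y * I) (line_mem h1 ((abs_le.2 hy).trans_lt haδ) x)
      have b2 := hb (z, s) ⟨h1, hss⟩
      linarith
    have := lorentz_shift one_pos (R := |s.re|) (r := s.re) (x := x) le_rfl
    have h4 : ‖(64:ℂ) / ((x + y * I - s) ^ 2 + 64)‖ ≤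
        64 * ((2 + 2 * (1 + |s.re| ^ 2) / 1 ^ 2) * (1 + x ^ 2)⁻¹) := by
      rw [norm_div, div_eq_mul_inv]
      have : ‖(64:ℂ)‖ = 64 := by simp
      rw [this]
      gcongr
      refine le_trans ?_ ‹_›
      rw [one_pow]
      gcongr
    calc ‖h (x + y * I)‖ ≤ (2 * M) * (64 * ((2 + 2 * (1 + |s.re| ^ 2) / 1 ^ 2) * (1 + x ^ 2)⁻¹)) := by
          simp only [h]
          rw [norm_mul]
          gcongr
      _ = _ := by ring

/-- Bounded additive splitting across a strip, with no loss of domain. -/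
theorem strip_split [FiniteDimensional ℂ F] {δ : ℝ} (hδ0 : 0 < δ) (hδ : δ ≤ 1) :
    ∃ C : ℝ, 0 < C ∧ ∀ (W : Set F), IsOpen W → ∀ (f : F × ℂ → ℂ) (M : ℝ), 0 ≤ M →
      AnalyticOnNhd ℂ f (W ×ˢ hs (-δ) δ) → (∀ p ∈ W ×ˢ hs (-δ) δ, ‖f p‖ ≤ M) →
      ∃ f' f'' : F × ℂ → ℂ, AnalyticOnNhd ℂ f' (W ×ˢ hs (-δ) 4) ∧
        AnalyticOnNhd ℂ f'' (W ×ˢ hs (-4) δ) ∧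
        (∀ p ∈ W ×ˢ hs (-δ) 4, ‖f' p‖ ≤ C * M) ∧ (∀ p ∈ W ×ˢ hs (-4) δ, ‖f'' p‖ ≤ C * M) ∧
        ∀ p ∈ W ×ˢ hs (-δ) δ, f p = f' p - f'' p := by
  set a := δ / 2 with ha
  have ha0 : 0 < a := by positivity
  set c : ℂ := 2 * kkJ with hc
  have hc0 : c ≠ 0 := mul_ne_zero two_ne_zero kkJ_ne_zero
  have hCK := CK_nonneg (half_pos ha0)
  refine ⟨1 + ‖c⁻¹‖ * CK (a / 2), by positivity, ?_⟩
  intro W hW f M hM hf hb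
  have hya : |a| < δ := by rw [abs_of_pos ha0]; linarith
  have hyna : |-a| < δ := by rwa [abs_neg]
  have hlow : ∀ p : F × ℂ, p.1 ∈ W → -(a / 2) < p.2.im → p.2.im < 4 →
      AnalyticAt ℂ (fun p => c⁻¹ * LI f (-a) p) p ∧ ‖c⁻¹ * LI f (-a) p‖ ≤ ‖c⁻¹‖ * CK (a / 2) * M := by
    intro p hp h1 h2
    have h3 : |-a - p.2.im| = a + p.2.im := by rw [abs_of_neg (by linarith)]; ring
    refine ⟨analyticAt_const.mul (LI_analytic hW hM hf hb hyna (half_pos ha0) hp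
      (by rw [h3]; linarith) (by rw [h3]; linarith)), ?_⟩
    rw [norm_mul]
    have := LI_bound hM hb hyna (half_pos ha0) hp (by rw [h3]; linarith) (by rw [h3]; linarith)
    rw [mul_assoc, mul_comm (CK _)]
    gcongr
  have hup : ∀ p : F × ℂ, p.1 ∈ W → -4 < p.2.im → p.2.im < a / 2 →
      AnalyticAt ℂ (fun p => c⁻¹ * LI f a p) p ∧ ‖c⁻¹ * LI f a p‖ ≤ ‖c⁻¹‖ * CK (a / 2) * M := by
    intro p hp h1 h2
    have h3 : |a - p.2.im| = a - p.2.im := abs_of_pos (by linarith)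
    refine ⟨analyticAt_const.mul (LI_analytic hW hM hf hb hya (half_pos ha0) hp
      (by rw [h3]; linarith) (by rw [h3]; linarith)), ?_⟩
    rw [norm_mul]
    have := LI_bound hM hb hya (half_pos ha0) hp (by rw [h3]; linarith) (by rw [h3]; linarith)
    rw [mul_assoc, mul_comm (CK _)]
    gcongr
  have hid : ∀ p : F × ℂ, p.1 ∈ W → |p.2.im| < a →
      c⁻¹ * LI f (-a) p = f p + c⁻¹ * LI f a p := by
    intro p hp h1
    have := LI_sub hM hδ hf hb ha0 (by linarith) hp h1
    have e : LI f (-a) p = c * f p + LI f a p := by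
      rw [hc]; linear_combination this
    rw [e]
    field_simp
  let f' : F × ℂ → ℂ := fun p => if 0 ≤ p.2.im then c⁻¹ * LI f (-a) p else f p + c⁻¹ * LI f a p
  let f'' : F × ℂ → ℂ := fun p => if 0 ≤ p.2.im then c⁻¹ * LI f (-a) p - f p else c⁻¹ * LI f a p
  have him : Continuous fun p : F × ℂ => p.2.im := Complex.continuous_im.comp continuous_snd
  have e1 : ∀ p : F × ℂ, p.1 ∈ W → -(a / 2) < p.2.im → f' p = c⁻¹ * LI f (-a) p := by
    intro p hp h1
    by_cases h : 0 ≤ p.2.im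
    · simp [f', h]
    · simp only [f', h, if_false]
      exact (hid p hp (abs_lt.2 ⟨by linarith, by linarith⟩)).symm
  have e2 : ∀ p : F × ℂ, p.1 ∈ W → p.2.im < a / 2 → f' p = f p + c⁻¹ * LI f a p := by
    intro p hp h1
    by_cases h : 0 ≤ p.2.im
    · simp only [f', h, if_true]
      exact hid p hp (abs_lt.2 ⟨by linarith, by linarith⟩)
    · simp [f', h]
  have e3 : ∀ p, f'' p = f' p - f p := by
    intro p
    by_cases h : 0 ≤ p.2.im <;> simp [f', f'', h]
  refine ⟨f', f'', ?_, ?_, ?_, ?_, fun p _ => by rw [e3]; ring⟩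
  · rintro p ⟨hp, h1, h2⟩
    by_cases h : 0 ≤ p.2.im
    · refine (hlow p hp (by linarith) h2).1.congr ?_
      filter_upwards [(hW.preimage continuous_fst).mem_nhds hp,
        him.continuousAt.eventually (lt_mem_nhds (show -(a/2) < p.2.im by linarith))] with q hq hq2
      exact (e1 q hq hq2).symm
    · push Not at h
      refine ((hf p ⟨hp, h1, by linarith⟩).add (hup p hp (by linarith) (by linarith)).1).congr ?_
      filter_upwards [(hW.preimage continuous_fst).mem_nhds hp,
        him.continuousAt.eventually (gt_mem_nhds (show p.2.im < a/2 by linarith))] with q hq hq2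
      exact (e2 q hq hq2).symm
  · rintro p ⟨hp, h1, h2⟩
    by_cases h : 0 ≤ p.2.im
    · refine ((hlow p hp (by linarith) (by linarith)).1.sub (hf p ⟨hp, by linarith, h2⟩)).congr ?_
      filter_upwards [(hW.preimage continuous_fst).mem_nhds hp,
        him.continuousAt.eventually (lt_mem_nhds (show -(a/2) < p.2.im by linarith))] with q hq hq2
      rw [e3, e1 q hq hq2, Pi.sub_apply]
    · push Not at h
      refine (hup p hp (by linarith) (by linarith)).1.congr ?_
      filter_upwards [(hW.preimage continuous_fst).mem_nhds hp,
        him.continuousAt.eventually (gt_mem_nhds (show p.2.im < a/2 by linarith))] with q hq hq2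
      rw [e3, e2 q hq hq2]; ring
  · rintro p ⟨hp, h1, h2⟩
    by_cases h : 0 ≤ p.2.im
    · rw [e1 p hp (by linarith)]
      exact (hlow p hp (by linarith) h2).2.trans (by nlinarith)
    · push Not at h
      rw [e2 p hp (by linarith)]
      refine (norm_add_le _ _).trans ?_
      have t1 := (hup p hp (by linarith) (by linarith)).2
      have t2 := hb p ⟨hp, h1, by linarith⟩
      linarith
  · rintro p ⟨hp, h1, h2⟩
    by_cases h : 0 ≤ p.2.im
    · rw [e3, e1 p hp (by linarith)]
      refine (norm_sub_le _ _).trans ?_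
      have t1 := (hlow p hp (by linarith) (by linarith)).2
      have t2 := hb p ⟨hp, by linarith, h2⟩
      linarith
    · push Not at h
      rw [e3, e2 p hp (by linarith), add_sub_cancel_left]
      exact (hup p hp (by linarith) (by linarith)).2.trans (by nlinarith)

end Strip

/-! ### Approximation on strips and Cartan's multiplicative splitting -/

section Approx

open Complex (I)

variable {F : Type*} [NormedAddCommGroup F] [NormedSpace ℂ F]

theorem norm_gauss (n x : ℝ) (s : ℂ) :
    ‖Complex.exp (-n ^ 2 * ((x : ℂ) - s) ^ 2)‖ =
      Real.exp (-n ^ 2 * (x - s.re) ^ 2 + n ^ 2 * s.im ^ 2) := by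
  rw [Complex.norm_exp]
  congr 1
  have : (-(n : ℂ) ^ 2 * ((x : ℂ) - s) ^ 2) = ((-n ^ 2 : ℝ) : ℂ) * ((x : ℂ) - s) ^ 2 := by
    push_cast; ring
  rw [this, Complex.re_ofReal_mul]
  simp [sq]
  ring

theorem norm_gauss_le {n x R : ℝ} {s : ℂ} (hs : ‖s‖ ≤ R) :
    ‖Complex.exp (-n ^ 2 * ((x : ℂ) - s) ^ 2)‖ ≤
      Real.exp (2 * n ^ 2 * R ^ 2) * Real.exp (-(n ^ 2 / 2) * x ^ 2) := by
  rw [norm_gauss, ← Real.exp_add]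
  refine Real.exp_le_exp.2 ?_
  have h1 : s.re ^ 2 ≤ R ^ 2 := by
    rw [← sq_abs]; gcongr; exact (Complex.abs_re_le_norm s).trans hs
  have h2 : s.im ^ 2 ≤ R ^ 2 := by
    rw [← sq_abs]; gcongr; exact (Complex.abs_im_le_norm s).trans hs
  have h3 : 0 ≤ n ^ 2 := sq_nonneg n
  have h4 : x ^ 2 / 2 - s.re ^ 2 ≤ (x - s.re) ^ 2 := by nlinarith [sq_nonneg (x - 2 * s.re)]
  nlinarith

theorem gauss_le_lorentz {n x : ℝ} (hn : 1 ≤ n) :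
    Real.exp (-(n ^ 2 / 2) * x ^ 2) ≤ 2 * (1 + x ^ 2)⁻¹ := by
  have h1 : -(n ^ 2 / 2) * x ^ 2 ≤ -(x ^ 2 / 2) := by
    have : 1 ≤ n ^ 2 := one_le_pow₀ hn
    nlinarith [sq_nonneg x]
  refine (Real.exp_le_exp.2 h1).trans ?_
  rw [Real.exp_neg]
  have h2 : (1 + x ^ 2) / 2 ≤ Real.exp (x ^ 2 / 2) := by
    have := Real.add_one_le_exp (x ^ 2 / 2)
    linarith
  calc (Real.exp (x ^ 2 / 2))⁻¹ ≤ ((1 + x ^ 2) / 2)⁻¹ := by gcongr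
    _ = _ := by rw [inv_div, div_eq_mul_inv]

theorem gauss_mul_integral {n : ℝ} (hn : 0 < n) :
    ∫ u : ℝ, |u| * Real.exp (-n ^ 2 * u ^ 2) = n⁻¹ ^ 2 * ∫ v : ℝ, |v| * Real.exp (-1 * v ^ 2) := by
  have := Measure.integral_comp_mul_left (fun v : ℝ => |v| * Real.exp (-1 * v ^ 2)) n
  rw [abs_of_pos (by positivity), smul_eq_mul] at this
  have e : ∀ u : ℝ, |u| * Real.exp (-n ^ 2 * u ^ 2) = n⁻¹ * (|n * u| * Real.exp (-1 * (n * u) ^ 2)) := by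
    intro u
    rw [abs_mul, abs_of_pos hn, mul_pow]
    field_simp
  simp_rw [e]
  rw [integral_const_mul, this]
  ring

theorem abs_gauss_integrable {b : ℝ} (hb : 0 < b) :
    Integrable fun u : ℝ => |u| * Real.exp (-b * u ^ 2) := by
  have := (integrable_mul_exp_neg_mul_sq hb).norm
  refine this.congr (Eventually.of_forall fun u => ?_)
  simp [abs_mul]

/-- Gaussian approximation of bounded functions on a strip by functions on `W × ℂ`. -/
theorem strip_approx [FiniteDimensional ℂ F] {δ : ℝ} (hδ : 0 < δ) {W : Set F} (hW : IsOpen W)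
    {f : F × ℂ → ℂ} {M : ℝ} (hM : 0 ≤ M) (hf : AnalyticOnNhd ℂ f (W ×ˢ hs (-(2 * δ)) (2 * δ)))
    (hb : ∀ p ∈ W ×ˢ hs (-(2 * δ)) (2 * δ), ‖f p‖ ≤ M) {ε : ℝ} (hε : 0 < ε) :
    ∃ g : F × ℂ → ℂ, AnalyticOnNhd ℂ g (W ×ˢ univ) ∧ ∀ p ∈ W ×ˢ hs (-δ) δ, ‖f p - g p‖ ≤ ε := by
  set A : ℝ := ∫ v : ℝ, |v| * Real.exp (-1 * v ^ 2) with hA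
  have hA0 : 0 ≤ A := integral_nonneg fun v => by positivity
  obtain ⟨n, hn1, hnε⟩ : ∃ n : ℝ, 1 ≤ n ∧ (M / δ) * A / √Real.pi * n⁻¹ ≤ ε := by
    have : Tendsto (fun n : ℝ => (M / δ) * A / √Real.pi * n⁻¹) atTop (𝓝 0) := by
      simpa using tendsto_inv_atTop_zero.const_mul ((M / δ) * A / √Real.pi)
    obtain ⟨n, h1, h2⟩ := ((eventually_ge_atTop (1:ℝ)).and (this.eventually (gt_mem_nhds hε))).exists
    exact ⟨n, h1, h2.le⟩
  have hn0 : 0 < n := by linarith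
  have hpi : 0 < √Real.pi := Real.sqrt_pos.2 Real.pi_pos
  set κ : ℝ := n / √Real.pi with hκ
  have hline0 : ∀ {z : F} (_ : z ∈ W) {y : ℝ} (_ : |y| < 2 * δ),
      Continuous fun x : ℝ => f (z, x + y * I) := fun hz _ hy =>
    hf.continuousOn.comp_continuous (by fun_prop) fun x => line_mem hz hy x
  let g : F × ℂ → ℂ := fun p =>
    κ * ∫ x : ℝ, f (p.1, x + (0:ℝ) * I) * Complex.exp (-n ^ 2 * ((x : ℂ) - p.2) ^ 2)
  have h00 : |(0:ℝ)| < 2 * δ := by simpa using hδ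
  refine ⟨g, ?_, ?_⟩
  · rintro p ⟨hp, -⟩
    refine analyticAt_const.mul ?_
    set R := ‖p.2‖ + 1 with hR
    refine analyticOnNhd_integral (U := {q : F × ℂ | q.1 ∈ W ∧ ‖q.2‖ < R})
      (b := fun x => M * (Real.exp (2 * n ^ 2 * R ^ 2) * Real.exp (-(n ^ 2 / 2) * x ^ 2)))
      ((hW.preimage continuous_fst).inter (isOpen_lt continuous_snd.norm continuous_const))
      ?_ ?_ ?_ ?_ p ⟨hp, by rw [hR]; linarith⟩
    · refine Eventually.of_forall fun x q hq => ?_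
      have e1 : AnalyticAt ℂ (fun q : F × ℂ => f (q.1, x + (0:ℝ) * I)) q :=
        AnalyticAt.fun_comp (g := f) (f := fun q : F × ℂ => (q.1, (x : ℂ) + (0:ℝ) * I))
          (hf _ (line_mem hq.1 h00 x)) (analyticAt_fst.prod analyticAt_const)
      refine e1.mul ?_
      have : AnalyticAt ℂ (fun q : F × ℂ => (-n ^ 2 * ((x : ℂ) - q.2) ^ 2)) q :=
        analyticAt_const.mul ((analyticAt_const.sub analyticAt_snd).pow 2)
      exact this.cexp
    · intro q hq
      exact ((hline0 hq.1 h00).mul (by fun_prop)).aestronglyMeasurable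
    · refine Eventually.of_forall fun x q hq => ?_
      rw [norm_mul]
      have h1 := hb _ (line_mem hq.1 h00 x)
      have h2 := norm_gauss_le (n := n) (x := x) hq.2.le
      gcongr
    · exact ((integrable_exp_neg_mul_sq (by positivity)).const_mul _).const_mul _
  · rintro ⟨z, s⟩ ⟨hz, hs1, hs2⟩
    simp only at hz hs1 hs2
    have hsim : |s.im| < δ := abs_lt.2 ⟨hs1, hs2⟩
    have huI : ∀ y ∈ uIcc (0:ℝ) s.im, |y| ≤ |s.im| := by
      intro y hy
      simpa using abs_sub_left_of_mem_uIcc hy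
    have hφ : ∀ ζ : ℂ, |ζ.im| < 2 * δ → DifferentiableAt ℂ (fun ζ => f (z, ζ)) ζ := fun ζ hζ =>
      (AnalyticAt.fun_comp (g := f) (f := fun ζ : ℂ => (z, ζ)) (hf (z, ζ) ⟨hz, abs_lt.1 hζ⟩)
        (analyticAt_const.prod analyticAt_id)).differentiableAt
    have hsh := strip_shift (h := fun ζ => f (z, ζ) * Complex.exp (-n ^ 2 * (ζ - s) ^ 2))
      (y1 := 0) (y2 := s.im) (X := 0)
      (C := M * (Real.exp (2 * n ^ 2 * (‖s‖ + δ) ^ 2) * 2)) ?_ ?_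
    · have e1 : g (z, s) = κ * ∫ x : ℝ, f (z, x + s.im * I) * Real.exp (-n ^ 2 * (x - s.re) ^ 2) := by
        have e2 : ∀ x : ℝ, Complex.exp (-n ^ 2 * ((x : ℂ) + s.im * I - s) ^ 2) =
            (Real.exp (-n ^ 2 * (x - s.re) ^ 2) : ℝ) := by
          intro x
          push_cast
          congr 3
          apply Complex.ext <;> simp
        simp_rw [e2] at hsh
        rw [← hsh]
        simp [g]
      have hgi : Integrable fun x : ℝ => Real.exp (-n ^ 2 * (x - s.re) ^ 2) :=
        (integrable_exp_neg_mul_sq (b := n ^ 2) (by positivity)).comp_sub_right s.re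
      have e3 : f (z, s) = κ * ∫ x : ℝ, f (z, s) * (Real.exp (-n ^ 2 * (x - s.re) ^ 2) : ℝ) := by
        rw [integral_const_mul, integral_complex_ofReal,
          integral_sub_right_eq_self (fun x : ℝ => Real.exp (-n ^ 2 * x ^ 2)) s.re,
          integral_gaussian, Real.sqrt_div Real.pi_pos.le, Real.sqrt_sq hn0.le, hκ, mul_left_comm,
          ← Complex.ofReal_mul]
        have : n / √Real.pi * (√Real.pi / n) = 1 := by field_simp
        rw [this]; simp
      have hlip : ∀ x : ℝ, ‖f (z, x + s.im * I) - f (z, s)‖ ≤ M / δ * |x - s.re| := by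
        intro x
        have hconv : Convex ℝ {ζ : ℂ | ζ.im = s.im} := by
          have : {ζ : ℂ | ζ.im = s.im} = Complex.imCLM ⁻¹' {s.im} := by ext; simp
          rw [this]
          exact (convex_singleton _).linear_preimage Complex.imCLM.toLinearMap
        have := Convex.norm_image_sub_le_of_norm_deriv_le (f := fun ζ => f (z, ζ))
          (s := {ζ : ℂ | ζ.im = s.im}) (C := M / δ) (x := s) (y := x + s.im * I) ?_ ?_ hconv rfl (by simp)
        · refine this.trans (le_of_eq ?_)
          congr 1
          have : (x : ℂ) + s.im * I - s = ((x - s.re : ℝ) : ℂ) := by apply Complex.ext <;> simp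
          rw [this, Complex.norm_real, Real.norm_eq_abs]
        · intro ζ hζ
          refine hφ ζ ?_
          rw [mem_setOf_eq] at hζ
          rw [hζ]; linarith
        · intro ζ hζ
          rw [mem_setOf_eq] at hζ
          have hin : ∀ w ∈ closedBall ζ δ, |w.im| < 2 * δ := by
            intro w hw
            have h1 := (Complex.abs_im_le_norm (w - ζ)).trans (mem_closedBall_iff_norm.1 hw)
            rw [Complex.sub_im, hζ] at h1
            have := abs_sub_abs_le_abs_sub w.im s.im
            linarith
          refine Complex.norm_deriv_le_of_forall_mem_sphere_norm_le hδ ?_ ?_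
          · refine DifferentiableOn.diffContOnCl fun w hw => ?_
            rw [closure_ball _ hδ.ne'] at hw
            exact (hφ w (hin w hw)).differentiableWithinAt
          · intro w hw
            exact hb (z, w) ⟨hz, abs_lt.1 (hin w (sphere_subset_closedBall hw))⟩
      have i1 : Integrable fun x : ℝ => f (z, x + s.im * I) * (Real.exp (-n ^ 2 * (x - s.re) ^ 2) : ℝ) := by
        refine (hgi.const_mul M).mono' ?_ (Eventually.of_forall fun x => ?_)
        · exact ((hline0 hz (by linarith)).mul (by fun_prop)).aestronglyMeasurable
        · rw [norm_mul, Complex.norm_real, Real.norm_of_nonneg (Real.exp_pos _).le]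
          have := hb _ (line_mem hz (show |s.im| < 2 * δ by linarith) x)
          gcongr
      have i2 : Integrable fun x : ℝ => f (z, s) * (Real.exp (-n ^ 2 * (x - s.re) ^ 2) : ℝ) :=
        (hgi.ofReal).const_mul _
      have e4 : g (z, s) - f (z, s) =
          κ * ∫ x : ℝ, (f (z, x + s.im * I) - f (z, s)) * (Real.exp (-n ^ 2 * (x - s.re) ^ 2) : ℝ) := by
        conv_lhs => rw [e1, e3]
        rw [← mul_sub, ← integral_sub i1 i2]
        simp_rw [sub_mul]
      rw [norm_sub_rev, e4, norm_mul, Complex.norm_real, Real.norm_of_nonneg (by positivity)]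
      have hgi2 : Integrable fun x : ℝ => M / δ * (|x - s.re| * Real.exp (-n ^ 2 * (x - s.re) ^ 2)) :=
        ((abs_gauss_integrable (b := n ^ 2) (by positivity)).comp_sub_right s.re).const_mul _
      have hI : ‖∫ x : ℝ, (f (z, x + s.im * I) - f (z, s)) * (Real.exp (-n ^ 2 * (x - s.re) ^ 2) : ℝ)‖ ≤
          M / δ * (n⁻¹ ^ 2 * A) := by
        refine (norm_integral_le_of_norm_le hgi2 (Eventually.of_forall fun x => ?_)).trans ?_
        · rw [norm_mul, Complex.norm_real, Real.norm_of_nonneg (Real.exp_pos _).le, ← mul_assoc]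
          gcongr
          exact hlip x
        · rw [integral_const_mul,
            integral_sub_right_eq_self (fun x : ℝ => |x| * Real.exp (-n ^ 2 * x ^ 2)) s.re,
            gauss_mul_integral hn0]
      refine (mul_le_mul_of_nonneg_left hI (by positivity)).trans (le_trans (le_of_eq ?_) hnε)
      rw [hκ]
      field_simp
    · intro ζ hζ
      have : |ζ.im| < 2 * δ := (huI _ hζ).trans_lt (by linarith)
      exact ((hφ ζ this).mul (by fun_prop)).differentiableWithinAt
    · intro x _ y hy
      have hy1 := huI y hy
      have h1 := hb _ (line_mem hz (show |y| < 2 * δ by linarith) x)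
      have e : (x : ℂ) + y * I - s = (x : ℂ) - (s - y * I) := by ring
      have hns : ‖s - y * I‖ ≤ ‖s‖ + δ := by
        refine (norm_sub_le _ _).trans ?_
        have : ‖(y : ℂ) * I‖ = |y| := by simp
        rw [this]; linarith
      have h2 := norm_gauss_le (n := n) (x := x) hns
      have h3 := gauss_le_lorentz (x := x) hn1
      rw [e, norm_mul, mul_assoc, mul_assoc]
      refine mul_le_mul h1 (h2.trans ?_) (norm_nonneg _) hM
      gcongr

end Approx

section Cartan

open Matrix

variable {F : Type*} [NormedAddCommGroup F] [NormedSpace ℂ F]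

/-- The iteration behind Cartan's lemma: if bounded functions on `V₀` split boundedly into
differences of functions on `V₁` and `V₂`, then a matrix on `V₀` close to the identity is a
quotient of matrices on `V₁` and `V₂`. -/
theorem cartan_core {E : Type*} [NormedAddCommGroup E] [NormedSpace ℂ E] [FiniteDimensional ℂ E]
    {C : ℝ} (hC : 0 < C) (m : Type) [Fintype m] [DecidableEq m] :
    ∃ ε : ℝ, 0 < ε ∧ ∀ (V₀ V₁ V₂ : Set E), IsOpen V₁ → IsOpen V₂ → V₀ ⊆ V₁ → V₀ ⊆ V₂ →
      (∀ (f : E → ℂ) (M : ℝ), 0 ≤ M → AnalyticOnNhd ℂ f V₀ → (∀ p ∈ V₀, ‖f p‖ ≤ M) →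
      ∃ f' f'' : E → ℂ, AnalyticOnNhd ℂ f' V₁ ∧
        AnalyticOnNhd ℂ f'' V₂ ∧
        (∀ p ∈ V₁, ‖f' p‖ ≤ C * M) ∧ (∀ p ∈ V₂, ‖f'' p‖ ≤ C * M) ∧
        ∀ p ∈ V₀, f p = f' p - f'' p) →
      ∀ η : E → Matrix m m ℂ,
      (∀ p ∈ V₀, AnMatAt η p) → (∀ p ∈ V₀, ∀ i j, ‖η p i j‖ ≤ ε) →
      ∃ X' X'' : E → Matrix m m ℂ, (∀ p ∈ V₁, AnMatAt X' p) ∧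
        (∀ p ∈ V₂, AnMatAt X'' p ∧ (1 + X'' p).det ≠ 0) ∧
        ∀ p ∈ V₀, (1 - η p) * (1 + X' p) = 1 + X'' p := by
  set d : ℝ := (Fintype.card m : ℝ) with hd
  have hd0 : 0 ≤ d := Nat.cast_nonneg _
  set ε : ℝ := (4 * (d + 1) * C)⁻¹ with hε
  have hε0 : 0 < ε := by positivity
  have hdε : d * ε * C ≤ 1 / 4 := by
    rw [hε]
    have : d * (4 * (d + 1) * C)⁻¹ * C = (d / (d + 1)) / 4 := by field_simp
    rw [this]
    have : d / (d + 1) ≤ 1 := (div_le_one (by positivity)).2 (by linarith)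
    linarith
  refine ⟨ε, hε0, ?_⟩
  intro V₀ V₁ V₂ hV₁ hV₂ hsub' hsub'' hsplit η hη hηb
  have hex : ∀ (f : E → ℂ) (M : ℝ), ∃ f' f'' : E → ℂ, 0 ≤ M →
      AnalyticOnNhd ℂ f (V₀) → (∀ p ∈ V₀, ‖f p‖ ≤ M) →
      AnalyticOnNhd ℂ f' (V₁) ∧
        AnalyticOnNhd ℂ f'' (V₂) ∧
        (∀ p ∈ V₁, ‖f' p‖ ≤ C * M) ∧ (∀ p ∈ V₂, ‖f'' p‖ ≤ C * M) ∧
        ∀ p ∈ V₀, f p = f' p - f'' p := by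
    intro f M
    by_cases h : 0 ≤ M ∧ AnalyticOnNhd ℂ f (V₀) ∧ (∀ p ∈ V₀, ‖f p‖ ≤ M)
    · obtain ⟨f', f'', h'⟩ := hsplit f M h.1 h.2.1 h.2.2
      exact ⟨f', f'', fun _ _ _ => h'⟩
    · exact ⟨0, 0, fun h1 h2 h3 => absurd ⟨h1, h2, h3⟩ h⟩
  choose s' s'' hs12 using hex
  let B : ℕ → ℝ := fun k => ε * (1 / 4) ^ k
  have hB0 : ∀ k, 0 ≤ B k := fun k => by positivity
  let Z : ℕ → E → Matrix m m ℂ := fun k => Nat.rec η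
    (fun k Zk p => η p * Matrix.of fun i j => s' (fun q => Zk q i j) (B k) p) k
  have hZs : ∀ k p, Z (k + 1) p = η p * Matrix.of fun i j => s' (fun q => Z k q i j) (B k) p :=
    fun k p => rfl
  have hZ : ∀ k, (∀ i j, AnalyticOnNhd ℂ (fun q => Z k q i j) (V₀)) ∧
      ∀ i j, ∀ p ∈ V₀, ‖Z k p i j‖ ≤ B k := by
    intro k
    induction k with
    | zero =>
      refine ⟨fun i j p hp => hη p hp i j, fun i j p hp => ?_⟩
      have := hηb p hp i j
      simpa [B] using (show ‖Z 0 p i j‖ ≤ ε from this)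
    | succ k ih =>
      have h := fun i j => hs12 (fun q => Z k q i j) (B k) (hB0 k) (ih.1 i j) (ih.2 i j)
      constructor
      · intro i j p hp
        simp only [hZs, Matrix.mul_apply, Matrix.of_apply]
        exact Finset.analyticAt_fun_sum _ fun l _ =>
          (hη p hp i l).mul ((h l j).1 p (hsub' hp))
      · intro i j p hp
        simp only [hZs, Matrix.mul_apply, Matrix.of_apply]
        refine (norm_sum_le_of_le _ (f := fun l => η p i l * s' (fun q => Z k q l j) (B k) p)
          (n := fun _ => ε * (C * B k)) fun l _ => ?_).trans ?_
        · rw [norm_mul]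
          have h1 := hηb p hp i l
          have h2 := (h l j).2.2.1 p (hsub' hp)
          gcongr
        · simp only [Finset.sum_const, Finset.card_univ, nsmul_eq_mul]
          calc d * (ε * (C * B k)) = (d * ε * C) * B k := by ring
            _ ≤ 1 / 4 * B k := by gcongr
            _ = B (k + 1) := by simp only [B]; ring
  have h := fun k i j => hs12 (fun q => Z k q i j) (B k) (hB0 k) ((hZ k).1 i j) ((hZ k).2 i j)
  have hBs : HasSum B (ε * (1 - 1 / 4)⁻¹) :=
    (hasSum_geometric_of_lt_one (by norm_num) (by norm_num)).mul_left ε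
  have hCB : Summable fun k => C * B k := hBs.summable.mul_left C
  refine ⟨fun p => Matrix.of fun i j => ∑' k, s' (fun q => Z k q i j) (B k) p,
    fun p => Matrix.of fun i j => ∑' k, s'' (fun q => Z k q i j) (B k) p, ?_, ?_, ?_⟩
  · intro p hp i j
    exact analyticOnNhd_tsum hV₁ (fun k => (h k i j).1) hCB
      (fun k x hx => (h k i j).2.2.1 x hx) p hp
  · intro p hp
    refine ⟨fun i j => analyticOnNhd_tsum hV₂ (fun k => (h k i j).2.1) hCB
      (fun k x hx => (h k i j).2.2.2.1 x hx) p hp, ?_⟩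
    have hbd : ∀ i j, ‖∑' k, s'' (fun q => Z k q i j) (B k) p‖ ≤ C * (ε * (1 - 1 / 4)⁻¹) := by
      intro i j
      exact tsum_of_norm_bounded (hBs.mul_left C) fun k => (h k i j).2.2.2.1 p hp
    refine det_ne_zero_of_sum_row_lt_diag fun i => ?_
    set Y : Matrix m m ℂ := Matrix.of fun i j => ∑' k, s'' (fun q => Z k q i j) (B k) p with hY
    have hYb : ∀ i j, ‖Y i j‖ ≤ C * (ε * (1 - 1 / 4)⁻¹) := hbd
    have e1 : ∑ j ∈ Finset.univ.erase i, ‖(1 + Y) i j‖ = ∑ j ∈ Finset.univ.erase i, ‖Y i j‖ := by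
      refine Finset.sum_congr rfl fun j hj => ?_
      rw [Matrix.add_apply, Matrix.one_apply_ne (Finset.ne_of_mem_erase hj).symm, zero_add]
    have e2 : ∑ j ∈ Finset.univ.erase i, ‖Y i j‖ + ‖Y i i‖ ≤ d * (C * (ε * (1 - 1 / 4)⁻¹)) := by
      rw [Finset.sum_erase_add _ _ (Finset.mem_univ i)]
      refine (Finset.sum_le_card_nsmul _ _ _ fun j _ => hYb i j).trans ?_
      simp [hd]
    have e3 : d * (C * (ε * (1 - 1 / 4)⁻¹)) ≤ 1 / 3 := by
      have : d * (C * (ε * (1 - 1 / 4)⁻¹)) = (d * ε * C) * (4 / 3) := by ring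
      rw [this]; linarith
    have e4 : 1 - ‖Y i i‖ ≤ ‖(1 + Y) i i‖ := by
      rw [Matrix.add_apply, Matrix.one_apply_eq]
      have := norm_sub_le (1 + Y i i) (Y i i)
      rw [add_sub_cancel_right, norm_one] at this
      linarith
    rw [e1]
    linarith
  · intro p hp
    have s1 : ∀ i j, Summable fun k => s' (fun q => Z k q i j) (B k) p := fun i j =>
      Summable.of_norm_bounded hCB fun k => (h k i j).2.2.1 p (hsub' hp)
    have s2 : ∀ i j, Summable fun k => s'' (fun q => Z k q i j) (B k) p := fun i j =>
      Summable.of_norm_bounded hCB fun k => (h k i j).2.2.2.1 p (hsub'' hp)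
    have sZ : ∀ i j, Summable fun k => Z k p i j := fun i j =>
      Summable.of_norm_bounded hBs.summable fun k => (hZ k).2 i j p hp
    have key : ∀ i j, (∑' k, s' (fun q => Z k q i j) (B k) p) - (∑' k, s'' (fun q => Z k q i j) (B k) p)
        = η p i j + ∑ l, η p i l * ∑' k, s' (fun q => Z k q l j) (B k) p := by
      intro i j
      rw [← (s1 i j).tsum_sub (s2 i j)]
      have : ∀ k, s' (fun q => Z k q i j) (B k) p - s'' (fun q => Z k q i j) (B k) p = Z k p i j :=
        fun k => ((h k i j).2.2.2.2 p hp).symm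
      simp_rw [this]
      rw [(sZ i j).tsum_eq_zero_add]
      congr 1
      simp only [hZs, Matrix.mul_apply, Matrix.of_apply]
      rw [Summable.tsum_finsetSum fun l _ => (s1 l j).mul_left _]
      refine Finset.sum_congr rfl fun l _ => ?_
      rw [tsum_mul_left]
    rw [sub_mul, one_mul, mul_add, mul_one]
    ext i j
    have := key i j
    simp only [Matrix.sub_apply, Matrix.add_apply, Matrix.mul_apply, Matrix.of_apply]
    linear_combination this

end Cartan

/-! ### Lens-shaped neighbourhoods of vertical segments -/

section Lens

open Complex (I)

theorem inv_one_add_bounds {E : ℂ} (hE : 0 ≤ E.re) :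
    0 ≤ ((1 + E)⁻¹).re ∧ ((1 + E)⁻¹).re ≤ 1 ∧ ‖E‖ * |((1 + E)⁻¹).im| ≤ |E.im| / 2 := by
  have hn : Complex.normSq (1 + E) = 1 + 2 * E.re + ‖E‖ ^ 2 := by
    rw [← Complex.normSq_eq_norm_sq, Complex.normSq_apply, Complex.normSq_apply]
    simp; ring
  have hp : 0 < Complex.normSq (1 + E) := by rw [hn]; positivity
  rw [Complex.inv_re, Complex.inv_im]
  simp only [Complex.add_re, Complex.one_re, Complex.add_im, Complex.one_im, zero_add]
  refine ⟨by positivity, ?_, ?_⟩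
  · rw [div_le_one hp, hn]
    nlinarith [sq_nonneg ‖E‖]
  · rw [abs_div, abs_neg, abs_of_pos hp, ← mul_div_assoc, div_le_iff₀ hp, hn]
    have h2 : 2 * ‖E‖ ≤ 1 + 2 * E.re + ‖E‖ ^ 2 := by nlinarith [sq_nonneg (‖E‖ - 1)]
    nlinarith [abs_nonneg E.im]

/-- A conformal chart straightening a neighbourhood of a vertical segment to a strip, the two
sides of the segment going to the two sides of the strip. -/
theorem lens {t c d : ℝ} (hcd : c ≤ d) {N : Set ℂ} (hN : IsOpen N)
    (hsub : ∀ y ∈ Icc c d, (t : ℂ) + y * I ∈ N) :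
    ∃ δ : ℝ, 0 < δ ∧ δ ≤ 1 / 2 ∧ ∃ (D : Set ℂ) (μ σ : ℂ → ℂ), IsOpen D ∧
      (∀ y ∈ Icc c d, (t : ℂ) + y * I ∈ D) ∧ (∀ z : ℂ, z.re ≠ t → z ∈ D) ∧
      AnalyticOnNhd ℂ μ D ∧
      (∀ z ∈ D, μ z ∈ hs (-4) 4 ∧ σ (μ z) = z ∧ (z.re ≤ t → 0 ≤ (μ z).im) ∧
        (t ≤ z.re → (μ z).im ≤ 0)) ∧
      AnalyticOnNhd ℂ σ (hs (-(2 * δ)) (2 * δ)) ∧ ∀ s ∈ hs (-(2 * δ)) (2 * δ), σ s ∈ N := by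
  have hcpt : IsCompact ((fun y : ℝ => (t : ℂ) + y * I) '' Icc c d) :=
    isCompact_Icc.image (by fun_prop)
  obtain ⟨ρ, hρ, hρN⟩ := hcpt.exists_thickening_subset_open hN (by rintro _ ⟨y, hy, rfl⟩; exact hsub y hy)
  set e : ℝ := ρ / 2 with he
  have he0 : 0 < e := by positivity
  set Pp : ℝ := d + e with hPp
  set Qq : ℝ := c - e with hQq
  have hPQ : 0 < Pp - Qq := by rw [hPp, hQq]; linarith
  set p : ℂ := t + Pp * I with hp
  set q : ℂ := t + Qq * I with hq
  have hpq : p - q = (Pp - Qq : ℝ) * I := by rw [hp, hq]; push_cast; ring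
  have hpq0 : p - q ≠ 0 := by
    rw [hpq]; exact mul_ne_zero (by exact_mod_cast hPQ.ne') Complex.I_ne_zero
  let m : ℂ → ℂ := fun z => (z - q) / (p - z)
  have hre : ∀ z, (m z).re = (-(z.re - t) ^ 2 + (z.im - Qq) * (Pp - z.im)) / Complex.normSq (p - z) := by
    intro z
    simp only [m, Complex.div_re, hp, hq]
    simp
    ring
  have him : ∀ z, (m z).im = -((z.re - t) * (Pp - Qq)) / Complex.normSq (p - z) := by
    intro z
    simp only [m, Complex.div_im, hp, hq]
    simp
    ring
  let D : Set ℂ := {z | m z ∈ Complex.slitPlane}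
  have hDp : ∀ z ∈ D, p - z ≠ 0 := by
    intro z hz h
    have : m z = 0 := by simp only [m]; rw [h, div_zero]
    exact Complex.slitPlane_ne_zero hz this
  have hman : ∀ z ∈ D, AnalyticAt ℂ m z := fun z hz =>
    AnalyticAt.fun_div (by fun_prop) (by fun_prop) (hDp z hz)
  set δ : ℝ := min (1 / 2) (ρ / (4 * (Pp - Qq))) with hδ
  have hδ0 : 0 < δ := by rw [hδ]; positivity
  have hδ1 : δ ≤ 1 / 2 := min_le_left _ _
  have hδ2 : (Pp - Qq) * δ < ρ / 2 := by
    have : δ ≤ ρ / (4 * (Pp - Qq)) := min_le_right _ _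
    calc (Pp - Qq) * δ ≤ (Pp - Qq) * (ρ / (4 * (Pp - Qq))) := by gcongr
      _ = ρ / 4 := by field_simp
      _ < ρ / 2 := by linarith
  have hE : ∀ s ∈ hs (-(2 * δ)) (2 * δ), 0 ≤ (Complex.exp (-s)).re ∧
      |(Complex.exp (-s)).im| ≤ ‖Complex.exp (-s)‖ * (2 * δ) := by
    intro s hs
    have h1 : |s.im| < 2 * δ := abs_lt.2 hs
    constructor
    · rw [Complex.exp_re]
      refine mul_nonneg (Real.exp_pos _).le (Real.cos_nonneg_of_mem_Icc ?_)
      have := Real.pi_gt_three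
      have := abs_lt.1 h1
      rw [Complex.neg_im]
      constructor <;> linarith
    · rw [Complex.exp_im, Complex.norm_exp, abs_mul, abs_of_pos (Real.exp_pos _)]
      gcongr
      refine (Real.abs_sin_le_abs).trans ?_
      rw [Complex.neg_im, abs_neg]
      exact h1.le
  let σ : ℂ → ℂ := fun s => q + (p - q) * (1 + Complex.exp (-s))⁻¹
  refine ⟨δ, hδ0, hδ1, D, fun z => Complex.log (m z), σ, ?_, ?_, ?_, ?_, ?_, ?_, ?_⟩
  · rw [isOpen_iff_mem_nhds]
    intro z hz
    exact (hman z hz).continuousAt.preimage_mem_nhds (Complex.isOpen_slitPlane.mem_nhds hz)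
  · intro y hy
    have hy' : (((t : ℂ) + y * I)).im = y := by simp
    refine Or.inl ?_
    rw [hre]
    have h1 : 0 < y - Qq := by rw [hQq]; linarith [hy.1]
    have h2 : 0 < Pp - y := by rw [hPp]; linarith [hy.2]
    refine div_pos ?_ (Complex.normSq_pos.2 ?_)
    · simp; positivity
    · intro h
      have := congrArg Complex.im h
      simp [hp] at this
      linarith
  · intro z hz
    refine Or.inr ?_
    rw [him]
    refine div_ne_zero (neg_ne_zero.2 (mul_ne_zero (sub_ne_zero.2 hz) hPQ.ne')) ?_
    refine (Complex.normSq_pos.2 fun h => hz ?_).ne'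
    have := congrArg Complex.re h
    simp [hp] at this
    linarith
  · intro z hz
    exact (hman z hz).clog hz
  · intro z hz
    have hnp : 0 < Complex.normSq (p - z) := Complex.normSq_pos.2 (hDp z hz)
    refine ⟨⟨?_, ?_⟩, ?_, ?_, ?_⟩
    · have := Complex.neg_pi_lt_log_im (m z)
      linarith [Real.pi_lt_four]
    · have := Complex.log_im_le_pi (m z)
      linarith [Real.pi_lt_four]
    · have hm0 := Complex.slitPlane_ne_zero hz
      simp only [σ]
      rw [Complex.exp_neg, Complex.exp_log hm0]
      have h1 := hDp z hz
      have h3 : z - q ≠ 0 := fun h => hm0 (by simp only [m]; rw [h, zero_div])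
      have h4 : (1 : ℂ) + (m z)⁻¹ = (p - q) / (z - q) := by
        simp only [m]
        rw [inv_div, eq_div_iff h3, add_mul, div_mul_cancel₀ _ h3]; ring
      rw [h4, inv_div, mul_div_cancel₀ _ hpq0]
      ring
    · intro h
      rw [Complex.log_im, Complex.arg_nonneg_iff, him]
      refine div_nonneg ?_ hnp.le
      nlinarith
    · intro h
      have h1 : (m z).im ≤ 0 := by
        rw [him]
        refine div_nonpos_of_nonpos_of_nonneg ?_ hnp.le
        nlinarith
      rw [Complex.log_im]
      rcases h1.lt_or_eq with h2 | h2
      · exact (Complex.arg_neg_iff.2 h2).le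
      · have h3 : 0 < (m z).re := by
          rcases hz with h4 | h4
          · exact h4
          · exact absurd h2 h4
        exact (Complex.arg_eq_zero_iff.2 ⟨h3.le, h2⟩).le
  · intro s hs
    refine analyticAt_const.add (analyticAt_const.mul (AnalyticAt.fun_inv (by fun_prop) ?_))
    intro h
    have := (hE s hs).1
    have h2 := congrArg Complex.re h
    simp only [Complex.add_re, Complex.one_re, Complex.zero_re] at h2
    linarith
  · intro s hs
    apply hρN
    obtain ⟨hE1, hE2⟩ := hE s hs
    obtain ⟨g1, g2, g3⟩ := inv_one_add_bounds hE1
    set g := (1 + Complex.exp (-s))⁻¹ with hg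
    have hnE : 0 < ‖Complex.exp (-s)‖ := norm_pos_iff.2 (Complex.exp_ne_zero _)
    have g4 : |g.im| ≤ δ := by
      have : ‖Complex.exp (-s)‖ * |g.im| ≤ ‖Complex.exp (-s)‖ * δ := by linarith
      exact le_of_mul_le_mul_left this hnE
    set Y : ℝ := Qq + (Pp - Qq) * g.re with hY
    have hYQ : Qq ≤ Y := by rw [hY]; nlinarith
    have hYP : Y ≤ Pp := by rw [hY]; nlinarith
    -- the closest point of the segment
    set y : ℝ := max c (min d Y) with hy
    have hyI : y ∈ Icc c d := ⟨le_max_left _ _, max_le hcd (min_le_left _ _)⟩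
    have hyY : |Y - y| ≤ e := by
      rw [hy, abs_le]
      rcases le_total d Y with h1 | h1
      · rw [min_eq_left h1, max_eq_right hcd]; constructor <;> linarith
      · rw [min_eq_right h1]
        rcases le_total c Y with h2 | h2
        · rw [max_eq_right h2]; constructor <;> linarith
        · rw [max_eq_left h2]; constructor <;> linarith
    rw [mem_thickening_iff]
    refine ⟨t + y * I, ⟨y, hyI, rfl⟩, ?_⟩
    have hdiff : σ s - (t + y * I) = ((Y - y : ℝ) : ℂ) * I - (((Pp - Qq) * g.im : ℝ) : ℂ) := by
      simp only [σ]
      rw [← hg, hpq, hq]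
      apply Complex.ext <;> simp [hY]
    rw [dist_eq_norm, hdiff]
    refine (norm_sub_le _ _).trans_lt ?_
    rw [norm_mul, Complex.norm_I, mul_one, Complex.norm_real, Complex.norm_real, Real.norm_eq_abs,
      Real.norm_eq_abs, abs_mul, abs_of_pos hPQ]
    have : (Pp - Qq) * |g.im| ≤ (Pp - Qq) * δ := by gcongr
    linarith

end Lens

/-! ### Splitting across a vertical segment -/

section Slice

open Complex (I)
open Matrix

/-- The vertical segment `t + i[c, d]`. -/
def seg (t c d : ℝ) : Set ℂ := (fun y : ℝ => (t : ℂ) + y * I) '' Icc c d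

/-- The closed half-plane left of `seg t c d`, where on the line `Re = t` only the segment is kept. -/
def lft (t c d : ℝ) : Set ℂ := {w | w.re ≤ t ∧ (w.re = t → w ∈ seg t c d)}

/-- The closed half-plane right of `seg t c d`, where on the line `Re = t` only the segment is kept. -/
def rgt (t c d : ℝ) : Set ℂ := {w | t ≤ w.re ∧ (w.re = t → w ∈ seg t c d)}

theorem seg_re {t c d : ℝ} {w : ℂ} (hw : w ∈ seg t c d) : w.re = t := by
  obtain ⟨y, -, rfl⟩ := hw; simp

theorem seg_sub_lft {t c d : ℝ} : seg t c d ⊆ lft t c d := fun _ hw => ⟨(seg_re hw).le, fun _ => hw⟩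

theorem seg_sub_rgt {t c d : ℝ} : seg t c d ⊆ rgt t c d := fun _ hw => ⟨(seg_re hw).ge, fun _ => hw⟩

theorem isCompact_seg (t c d : ℝ) : IsCompact (seg t c d) := isCompact_Icc.image (by fun_prop)

variable {F : Type*} [NormedAddCommGroup F] [NormedSpace ℂ F]

/-- Coordinates `μ` around the segment in which it lies in a thin horizontal strip, the left side is
mapped into an upper strip and the right side into a lower one; `σ` is the inverse of `μ`. -/
theorem slice_chart {L : Set F} (hL : IsCompact L) {t c d : ℝ} (hcd : c ≤ d) {O : Set (F × ℂ)}
    (hO : IsOpen O) (h : L ×ˢ seg t c d ⊆ O) :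
    ∃ δ : ℝ, 0 < δ ∧ δ ≤ 1 / 2 ∧ ∃ (W : Set F) (μ σ : ℂ → ℂ), IsOpen W ∧ L ⊆ W ∧
      AnalyticOnNhd ℂ σ (hs (-(2 * δ)) (2 * δ)) ∧
      (∀ z ∈ W, ∀ s ∈ hs (-(2 * δ)) (2 * δ), (z, σ s) ∈ O) ∧
      (∀ w ∈ lft t c d, AnalyticAt ℂ μ w ∧ μ w ∈ hs (-δ) 4) ∧
      (∀ w ∈ rgt t c d, AnalyticAt ℂ μ w ∧ μ w ∈ hs (-4) δ) ∧
      ∀ w ∈ seg t c d, ∀ᶠ v in 𝓝 w, μ v ∈ hs (-δ) δ ∧ σ (μ v) = v := by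
  obtain ⟨W, N, hW, hN, hLW, hsN, hWN⟩ := generalized_tube_lemma hL (isCompact_seg t c d) hO h
  obtain ⟨δ, hδ0, hδ, D, μ, σ, hD, hDs, hDn, hμ, hμ2, hσ, hσN⟩ :=
    lens hcd hN (t := t) fun y hy => hsN ⟨y, hy, rfl⟩
  have hmem : ∀ w : ℂ, (w.re = t → w ∈ seg t c d) → w ∈ D := by
    intro w hw
    by_cases h : w.re = t
    · obtain ⟨y, hy, rfl⟩ := hw h
      exact hDs y hy
    · exact hDn w h
  refine ⟨δ, hδ0, hδ, W, μ, σ, hW, hLW, hσ, fun z hz s hs => hWN ⟨hz, hσN s hs⟩, ?_, ?_, ?_⟩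
  · rintro w ⟨h1, h2⟩
    obtain ⟨h3, -, h4, -⟩ := hμ2 w (hmem w h2)
    exact ⟨hμ w (hmem w h2), by linarith [h4 h1], h3.2⟩
  · rintro w ⟨h1, h2⟩
    obtain ⟨h3, -, -, h4⟩ := hμ2 w (hmem w h2)
    exact ⟨hμ w (hmem w h2), h3.1, by linarith [h4 h1]⟩
  · intro w hw
    have hwD := hmem w fun _ => hw
    have h1 : μ w ∈ hs (-δ) δ := by
      obtain ⟨h3, -, h4, h5⟩ := hμ2 w hwD
      exact ⟨by linarith [h4 (seg_re hw).le], by linarith [h5 (seg_re hw).ge]⟩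
    filter_upwards [hD.mem_nhds hwD, (hμ w hwD).continuousAt.preimage_mem_nhds
      ((isOpen_hs _ _).mem_nhds h1)] with v hv hv2
    exact ⟨hv2, (hμ2 v hv).2.1⟩

/-- Finitely many functions holomorphic near a compact set are holomorphic and bounded on a common
neighbourhood. -/
theorem bdd_nhd {E : Type*} [NormedAddCommGroup E] [NormedSpace ℂ E] {ι : Type*} [Finite ι]
    {f : ι → E → ℂ} {K : Set E} (hK : IsCompact K) (hf : ∀ y ∈ K, ∀ i, AnalyticAt ℂ (f i) y) :
    ∃ (O : Set E) (B : ℝ), IsOpen O ∧ K ⊆ O ∧ 0 ≤ B ∧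
      ∀ y ∈ O, ∀ i, AnalyticAt ℂ (f i) y ∧ ‖f i y‖ ≤ B := by
  have h1 : ∀ i, ∃ C : ℝ, ∀ y ∈ K, ‖f i y‖ ≤ C := fun i =>
    hK.exists_bound_of_continuousOn fun y hy => (hf y hy i).continuousAt.continuousWithinAt
  choose C hC using h1
  obtain ⟨B, hB⟩ := (Set.finite_range C).bddAbove
  refine ⟨interior {y | ∀ i, AnalyticAt ℂ (f i) y ∧ ‖f i y‖ ≤ max (B + 1) 0}, max (B + 1) 0,
    isOpen_interior, ?_, le_max_right _ _, fun y hy => interior_subset hy⟩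
  intro y hy
  rw [mem_interior_iff_mem_nhds]
  refine eventually_all.2 fun i => (hf y hy i).eventually_analyticAt.and ?_
  have : ‖f i y‖ < max (B + 1) 0 :=
    lt_max_of_lt_left ((hC i y hy).trans_lt ((hB ⟨i, rfl⟩).trans_lt (lt_add_one B)))
  filter_upwards [(hf y hy i).continuousAt.norm.eventually (gt_mem_nhds this)] with z hz using hz.le

theorem AnMatAt.comp' {E G : Type*} [NormedAddCommGroup E] [NormedSpace ℂ E] [NormedAddCommGroup G]
    [NormedSpace ℂ G] {q p : Type*} {M : G → Matrix q p ℂ} {g : E → G} {x : E}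
    (hM : AnMatAt M (g x)) (hg : AnalyticAt ℂ g x) : AnMatAt (fun z => M (g z)) x :=
  fun i j => AnalyticAt.fun_comp (g := fun z => M z i j) (hM i j) hg

/-- Additive Cousin problem across the slice `L × seg`. -/
theorem cousin [FiniteDimensional ℂ F] {L : Set F} (hL : IsCompact L) {t c d : ℝ} (hcd : c ≤ d)
    {m : Type} [Fintype m] {f : F × ℂ → m → ℂ} (hf : ∀ y ∈ L ×ˢ seg t c d, AnalyticAt ℂ f y) :
    ∃ f' f'' : F × ℂ → m → ℂ, (∀ y ∈ L ×ˢ lft t c d, AnalyticAt ℂ f' y) ∧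
      (∀ y ∈ L ×ˢ rgt t c d, AnalyticAt ℂ f'' y) ∧
      ∀ y ∈ L ×ˢ seg t c d, ∀ᶠ p in 𝓝 y, f p = f' p - f'' p := by
  obtain ⟨O, B, hO, hKO, hB, hOB⟩ := bdd_nhd (f := fun i y => f y i) (hL.prod (isCompact_seg t c d))
    fun y hy i => analyticAt_pi_iff.1 (hf y hy) i
  obtain ⟨δ, hδ0, hδ, W, μ, σ, hW, hLW, hσ, hσO, hl, hr, hsg⟩ := slice_chart hL hcd hO hKO
  have hsub : hs (-δ) δ ⊆ hs (-(2 * δ)) (2 * δ) := fun s hs =>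
    ⟨by linarith [hs.1], by linarith [hs.2]⟩
  obtain ⟨C, -, hsplit⟩ := strip_split (F := F) hδ0 (by linarith : δ ≤ 1)
  have hex := fun i => hsplit W hW (fun p => f (p.1, σ p.2) i) B hB
    (fun p hp => AnalyticAt.fun_comp (g := fun y => f y i) (f := fun p : F × ℂ => (p.1, σ p.2))
      (hOB _ (hσO p.1 hp.1 p.2 (hsub hp.2)) i).1
      (analyticAt_fst.prod (AnalyticAt.fun_comp (g := σ) (hσ p.2 (hsub hp.2)) analyticAt_snd)))
    (fun p hp => (hOB _ (hσO p.1 hp.1 p.2 (hsub hp.2)) i).2)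
  choose f' f'' h1 h2 _ _ h5 using hex
  refine ⟨fun p i => f' i (p.1, μ p.2), fun p i => f'' i (p.1, μ p.2), ?_, ?_, ?_⟩
  · rintro y ⟨hy1, hy2⟩
    refine analyticAt_pi_iff.2 fun i => ?_
    exact AnalyticAt.fun_comp (g := f' i) (f := fun p : F × ℂ => (p.1, μ p.2))
      (h1 i _ ⟨hLW hy1, (hl _ hy2).2⟩)
      (analyticAt_fst.prod (AnalyticAt.fun_comp (g := μ) (hl _ hy2).1 analyticAt_snd))
  · rintro y ⟨hy1, hy2⟩
    refine analyticAt_pi_iff.2 fun i => ?_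
    exact AnalyticAt.fun_comp (g := f'' i) (f := fun p : F × ℂ => (p.1, μ p.2))
      (h2 i _ ⟨hLW hy1, (hr _ hy2).2⟩)
      (analyticAt_fst.prod (AnalyticAt.fun_comp (g := μ) (hr _ hy2).1 analyticAt_snd))
  · rintro y ⟨hy1, hy2⟩
    filter_upwards [(hW.preimage continuous_fst).mem_nhds (hLW hy1),
      continuous_snd.continuousAt.eventually (hsg _ hy2)] with p hp1 hp2
    ext i
    have := h5 i (p.1, μ p.2) ⟨hp1, hp2.1⟩
    simp only [hp2.2] at this
    exact this

/-- Multiplicative version: if `S'' = S' P` and `S' = S'' P'` near the slice, then `S'` and `S''`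
can be modified so as to agree there, the modification of `S''` being invertible. -/
theorem cartan_slice [FiniteDimensional ℂ F] {L : Set F} (hL : IsCompact L) {t c d : ℝ}
    (hcd : c ≤ d) {A1 A2 : Set ℂ}
    (hA : (A1 = lft t c d ∧ A2 = rgt t c d) ∨ (A1 = rgt t c d ∧ A2 = lft t c d))
    {m1 m2 : Type} [Fintype m1] [Fintype m2] [DecidableEq m2]
    {P : F × ℂ → Matrix m1 m2 ℂ} {P' : F × ℂ → Matrix m2 m1 ℂ}
    (hP : ∀ y ∈ L ×ˢ seg t c d, AnMatAt P y) (hP' : ∀ y ∈ L ×ˢ seg t c d, AnMatAt P' y) :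
    ∃ (G' : F × ℂ → Matrix m1 m2 ℂ) (G'' : F × ℂ → Matrix m2 m2 ℂ),
      (∀ y ∈ L ×ˢ A1, AnMatAt G' y) ∧ (∀ y ∈ L ×ˢ A2, AnMatAt G'' y ∧ (G'' y).det ≠ 0) ∧
      ∀ y ∈ L ×ˢ seg t c d, ∀ᶠ p in 𝓝 y, ∀ (k : Type) (S' : Matrix k m1 ℂ) (S'' : Matrix k m2 ℂ),
        S'' = S' * P p → S' = S'' * P' p → S' * G' p = S'' * G'' p := by
  obtain ⟨O, B, hO, hKO, hB, hOB⟩ := bdd_nhd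
    (f := fun (i : (m1 × m2) ⊕ (m2 × m1)) y => Sum.elim (fun a => P y a.1 a.2) (fun a => P' y a.1 a.2) i)
    (hL.prod (isCompact_seg t c d)) (by
      rintro y hy (i | i)
      · exact hP y hy i.1 i.2
      · exact hP' y hy i.1 i.2)
  obtain ⟨δ, hδ0, hδ, W, μ, σ, hW, hLW, hσ, hσO, hl, hr, hsg⟩ := slice_chart hL hcd hO hKO
  have hsub : hs (-δ) δ ⊆ hs (-(2 * δ)) (2 * δ) := fun s hs =>
    ⟨by linarith [hs.1], by linarith [hs.2]⟩
  obtain ⟨C, hC, hsplit⟩ := strip_split (F := F) hδ0 (by linarith : δ ≤ 1)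
  -- the two orientations of the slice are treated simultaneously
  obtain ⟨V1, V2, hV1, hV2, hs1, hs2, hsp, hA1, hA2⟩ : ∃ V1 V2 : Set (F × ℂ), IsOpen V1 ∧ IsOpen V2 ∧
      W ×ˢ hs (-δ) δ ⊆ V1 ∧ W ×ˢ hs (-δ) δ ⊆ V2 ∧
      (∀ (f : F × ℂ → ℂ) (M : ℝ), 0 ≤ M → AnalyticOnNhd ℂ f (W ×ˢ hs (-δ) δ) →
        (∀ p ∈ W ×ˢ hs (-δ) δ, ‖f p‖ ≤ M) → ∃ f' f'' : F × ℂ → ℂ, AnalyticOnNhd ℂ f' V1 ∧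
        AnalyticOnNhd ℂ f'' V2 ∧ (∀ p ∈ V1, ‖f' p‖ ≤ C * M) ∧ (∀ p ∈ V2, ‖f'' p‖ ≤ C * M) ∧
        ∀ p ∈ W ×ˢ hs (-δ) δ, f p = f' p - f'' p) ∧
      (∀ z ∈ L, ∀ w ∈ A1, AnalyticAt ℂ μ w ∧ (z, μ w) ∈ V1) ∧
      (∀ z ∈ L, ∀ w ∈ A2, AnalyticAt ℂ μ w ∧ (z, μ w) ∈ V2) := by
    have b1 : W ×ˢ hs (-δ) δ ⊆ W ×ˢ hs (-δ) 4 := by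
      rintro p ⟨h1, h2, h3⟩; exact ⟨h1, h2, by linarith⟩
    have b2 : W ×ˢ hs (-δ) δ ⊆ W ×ˢ hs (-4) δ := by
      rintro p ⟨h1, h2, h3⟩; exact ⟨h1, by linarith, h3⟩
    have o1 := isOpen_prod_hs hW (-δ) 4
    have o2 := isOpen_prod_hs hW (-4) δ
    rcases hA with ⟨rfl, rfl⟩ | ⟨rfl, rfl⟩
    · exact ⟨_, _, o1, o2, b1, b2, hsplit W hW, fun z hz w hw => ⟨(hl w hw).1, hLW hz, (hl w hw).2⟩,
        fun z hz w hw => ⟨(hr w hw).1, hLW hz, (hr w hw).2⟩⟩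
    · refine ⟨_, _, o2, o1, b2, b1, ?_, fun z hz w hw => ⟨(hr w hw).1, hLW hz, (hr w hw).2⟩,
        fun z hz w hw => ⟨(hl w hw).1, hLW hz, (hl w hw).2⟩⟩
      intro f M hM hf hfb
      obtain ⟨f', f'', g1, g2, g3, g4, g5⟩ := hsplit W hW f M hM hf hfb
      refine ⟨fun p => - f'' p, fun p => - f' p, fun p hp => (g2 p hp).neg, fun p hp => (g1 p hp).neg,
        fun p hp => by rw [norm_neg]; exact g4 p hp, fun p hp => by rw [norm_neg]; exact g3 p hp,
        fun p hp => by rw [g5 p hp]; ring⟩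
  obtain ⟨ε, hε, hcart⟩ := cartan_core (E := F × ℂ) hC m2
  set ε' : ℝ := ε / (Fintype.card m1 * B + 1) with hε'
  have hε'0 : 0 < ε' := by positivity
  have hσan : ∀ p ∈ W ×ˢ hs (-(2 * δ)) (2 * δ), AnalyticAt ℂ (fun p : F × ℂ => (p.1, σ p.2)) p :=
    fun p hp => analyticAt_fst.prod (AnalyticAt.fun_comp (g := σ) (hσ p.2 hp.2) analyticAt_snd)
  have hPan : ∀ p ∈ W ×ˢ hs (-(2 * δ)) (2 * δ), AnMatAt (fun p : F × ℂ => P (p.1, σ p.2)) p :=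
    fun p hp => AnMatAt.comp' (M := P) (g := fun p : F × ℂ => (p.1, σ p.2))
      (fun i j => (hOB _ (hσO p.1 hp.1 p.2 hp.2) (Sum.inl (i, j))).1) (hσan p hp)
  have hP'an : ∀ p ∈ W ×ˢ hs (-(2 * δ)) (2 * δ), AnMatAt (fun p : F × ℂ => P' (p.1, σ p.2)) p :=
    fun p hp => AnMatAt.comp' (M := P') (g := fun p : F × ℂ => (p.1, σ p.2))
      (fun i j => (hOB _ (hσO p.1 hp.1 p.2 hp.2) (Sum.inr (i, j))).1) (hσan p hp)
  have hap := fun (i : m1) (j : m2) => strip_approx hδ0 hW (f := fun p => P (p.1, σ p.2) i j) hB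
    (fun p hp => hPan p hp i j)
    (fun p hp => (hOB _ (hσO p.1 hp.1 p.2 hp.2) (Sum.inl (i, j))).2) hε'0
  choose Q0 hQan hQb using hap
  let Q : F × ℂ → Matrix m1 m2 ℂ := fun p => Matrix.of fun i j => Q0 i j p
  have hQ : ∀ p ∈ W ×ˢ (univ : Set ℂ), AnMatAt Q p := fun p hp i j => hQan i j p hp
  let η : F × ℂ → Matrix m2 m2 ℂ := fun p => P' (p.1, σ p.2) * (P (p.1, σ p.2) - Q p)
  have hsub2 : W ×ˢ hs (-δ) δ ⊆ W ×ˢ hs (-(2 * δ)) (2 * δ) := prod_mono subset_rfl hsub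
  obtain ⟨X', X'', hX', hX'', hX⟩ := hcart (W ×ˢ hs (-δ) δ) V1 V2 hV1 hV2 hs1 hs2 hsp η
    (fun p hp => AnMatAt.mul (hP'an p (hsub2 hp))
      (fun i j => (hPan p (hsub2 hp) i j).sub (hQ p ⟨hp.1, trivial⟩ i j)))
    (fun p hp i j => by
      simp only [η, Matrix.mul_apply]
      refine (norm_sum_le_of_le _ (n := fun _ => B * ε') fun l _ => ?_).trans ?_
      · rw [norm_mul]
        have h1 := (hOB _ (hσO p.1 hp.1 p.2 (hsub hp.2)) (Sum.inr (i, l))).2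
        have h2 := hQb l j p hp
        exact mul_le_mul h1 h2 (norm_nonneg _) hB
      · simp only [Finset.sum_const, Finset.card_univ, nsmul_eq_mul]
        rw [hε']
        have : (Fintype.card m1 : ℝ) * (B * (ε / (Fintype.card m1 * B + 1))) =
          ε * ((Fintype.card m1 * B) / (Fintype.card m1 * B + 1)) := by ring
        rw [this]
        have : (Fintype.card m1 * B) / (Fintype.card m1 * B + 1) ≤ 1 :=
          (div_le_one (by positivity)).2 (by linarith)
        nlinarith)
  have hμan : ∀ p : F × ℂ, AnalyticAt ℂ μ p.2 → AnalyticAt ℂ (fun p : F × ℂ => (p.1, μ p.2)) p :=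
    fun p hp => analyticAt_fst.prod (AnalyticAt.fun_comp (g := μ) hp analyticAt_snd)
  have hone : ∀ (p : F × ℂ) (X : F × ℂ → Matrix m2 m2 ℂ), AnMatAt X p → AnMatAt (fun p => 1 + X p) p :=
    fun p X hX i j => analyticAt_const.add (hX i j)
  refine ⟨fun p => Q (p.1, μ p.2) * (1 + X' (p.1, μ p.2)), fun p => 1 + X'' (p.1, μ p.2), ?_, ?_, ?_⟩
  · rintro y ⟨hy1, hy2⟩
    obtain ⟨h1, h2⟩ := hA1 _ hy1 _ hy2
    exact AnMatAt.mul (AnMatAt.comp' (g := fun p : F × ℂ => (p.1, μ p.2)) (hQ _ ⟨hLW hy1, trivial⟩) (hμan y h1))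
      (AnMatAt.comp' (M := fun p => 1 + X' p) (g := fun p : F × ℂ => (p.1, μ p.2))
        (hone _ _ (hX' _ h2)) (hμan y h1))
  · rintro y ⟨hy1, hy2⟩
    obtain ⟨h1, h2⟩ := hA2 _ hy1 _ hy2
    exact ⟨AnMatAt.comp' (M := fun p => 1 + X'' p) (g := fun p : F × ℂ => (p.1, μ p.2))
        (hone _ _ (hX'' _ h2).1) (hμan y h1), (hX'' _ h2).2⟩
  · rintro y ⟨hy1, hy2⟩
    filter_upwards [(hW.preimage continuous_fst).mem_nhds (hLW hy1),
      continuous_snd.continuousAt.eventually (hsg _ hy2)] with p hp1 hp2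
    intro k S' S'' e1 e2
    rw [← hX (p.1, μ p.2) ⟨hp1, hp2.1⟩, ← Matrix.mul_assoc, ← Matrix.mul_assoc]
    congr 1
    simp only [η, hp2.2]
    rw [Matrix.mul_sub, Matrix.mul_one, ← Matrix.mul_assoc, ← e2, Matrix.mul_sub, ← e1]
    abel

end Slice

/-! ### Merging generators and solutions; sweeping across a convex set -/

section Merge

open Matrix

section Generic

variable {E : Type} [NormedAddCommGroup E] [NormedSpace ℂ E]

/-- The kernel sheaf of `M` is generated on `K` by finitely many sections defined near `K`. -/
def GenOn {q p : Type} [Fintype p] (M : E → Matrix q p ℂ) (K : Set E) : Prop :=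
  ∃ (m : Type) (_ : Fintype m) (S : E → Matrix p m ℂ), ∀ y ∈ K,
    AnMatAt S y ∧ (∀ᶠ z in 𝓝 y, M z * S z = 0) ∧ IsKerGen M S y

/-- A form of Cartan's Theorem A on `K`: the kernel of every analytic matrix is generated by finitely
many sections defined near `K`. -/
def PropA (K : Set E) : Prop :=
  ∀ (q p : Type) [Fintype q] [Fintype p] (M : E → Matrix q p ℂ), (∀ y ∈ K, AnMatAt M y) → GenOn M K

/-- The linear system `S e = c` has an analytic solution near `K`. -/
def SolveOn {p m : Type} [Fintype m] (S : E → Matrix p m ℂ) (c : E → p → ℂ) (K : Set E) : Prop :=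
  ∃ e : E → m → ℂ, ∀ y ∈ K, AnalyticAt ℂ e y ∧ ∀ᶠ z in 𝓝 y, c z = S z *ᵥ e z

/-- A form of Cartan's Theorem B on `K`: a locally solvable linear system is solvable near `K`. -/
def PropB (K : Set E) : Prop :=
  ∀ (p m : Type) [Fintype p] [Fintype m] (S : E → Matrix p m ℂ) (c : E → p → ℂ),
    (∀ y ∈ K, AnMatAt S y) → (∀ y ∈ K, AnalyticAt ℂ c y) →
    (∀ y ∈ K, ∃ e : E → m → ℂ, AnalyticAt ℂ e y ∧ ∀ᶠ z in 𝓝 y, c z = S z *ᵥ e z) → SolveOn S c K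

variable {q p m k : Type} [Fintype q] [Fintype p] [Fintype m] [Fintype k]

theorem GenOn.mono {M : E → Matrix q p ℂ} {K K' : Set E} (h : GenOn M K) (hK : K' ⊆ K) :
    GenOn M K' := by
  obtain ⟨m, _, S, hS⟩ := h
  exact ⟨m, inferInstance, S, fun y hy => hS y (hK hy)⟩

theorem SolveOn.mono {S : E → Matrix p m ℂ} {c : E → p → ℂ} {K K' : Set E} (h : SolveOn S c K)
    (hK : K' ⊆ K) : SolveOn S c K' := by
  obtain ⟨e, he⟩ := h
  exact ⟨e, fun y hy => he y (hK hy)⟩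

theorem AnMatAt.congr' {M N : E → Matrix q p ℂ} {y : E} (h : AnMatAt M y) (e : N =ᶠ[𝓝 y] M) :
    AnMatAt N y := fun i j => (h i j).congr (e.mono fun z hz => by simp only [hz])

theorem AnMatAt.col {M : E → Matrix q p ℂ} {y : E} (h : AnMatAt M y) (j : p) :
    AnalyticAt ℂ (fun z i => M z i j) y := analyticAt_pi_iff.2 fun i => h i j

theorem AnMatAt.fromCols {M : E → Matrix q p ℂ} {N : E → Matrix q m ℂ} {y : E} (h : AnMatAt M y)
    (h' : AnMatAt N y) : AnMatAt (fun z => Matrix.fromCols (M z) (N z)) y := by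
  rintro i (j | j)
  · exact h i j
  · exact h' i j

theorem AnMatAt.det [DecidableEq m] {M : E → Matrix m m ℂ} {y : E} (h : AnMatAt M y) :
    AnalyticAt ℂ (fun z => (M z).det) y := by
  simp only [Matrix.det_apply']
  exact Finset.analyticAt_fun_sum _ fun s _ => analyticAt_const.mul
    (Finset.analyticAt_fun_prod _ fun i _ => h _ _)

theorem AnMatAt.adjugate [DecidableEq m] {M : E → Matrix m m ℂ} {y : E} (h : AnMatAt M y) :
    AnMatAt (fun z => (M z).adjugate) y := by
  intro i j
  simp only [Matrix.adjugate_apply]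
  refine AnMatAt.det ?_
  intro a b
  by_cases hab : a = j
  · subst hab; simp only [Matrix.updateRow_self]; exact analyticAt_const
  · simp only [Matrix.updateRow_ne hab]; exact h a b

/-- An invertible analytic matrix can be solved for. -/
theorem AnMatAt.solve [DecidableEq m] {M : E → Matrix m m ℂ} {y : E} (h : AnMatAt M y)
    (h0 : (M y).det ≠ 0) {e : E → m → ℂ} (he : AnalyticAt ℂ e y) :
    ∃ e' : E → m → ℂ, AnalyticAt ℂ e' y ∧ ∀ᶠ z in 𝓝 y, e z = M z *ᵥ e' z := by
  refine ⟨fun z => ((M z).det)⁻¹ • ((M z).adjugate *ᵥ e z),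
    (h.det.inv h0).smul (h.adjugate.mulVec he), ?_⟩
  filter_upwards [h.det.continuousAt.eventually_ne h0] with z hz
  rw [Matrix.mulVec_smul, Matrix.mulVec_mulVec, Matrix.mul_adjugate, Matrix.smul_mulVec,
    Matrix.one_mulVec, smul_smul, inv_mul_cancel₀ hz, one_smul]

/-- Matrix form of Theorem B. -/
theorem PropB.matSolve {K : Set E} (hB : PropB K) {S : E → Matrix p m ℂ} {T : E → Matrix p k ℂ}
    (hS : ∀ y ∈ K, AnMatAt S y) (hT : ∀ y ∈ K, AnMatAt T y)
    (h : ∀ y ∈ K, ∀ j, ∃ e : E → m → ℂ, AnalyticAt ℂ e y ∧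
      ∀ᶠ z in 𝓝 y, (fun i => T z i j) = S z *ᵥ e z) :
    ∃ P : E → Matrix m k ℂ, ∀ y ∈ K, AnMatAt P y ∧ ∀ᶠ z in 𝓝 y, T z = S z * P z := by
  have h1 : ∀ j, SolveOn S (fun z i => T z i j) K := fun j =>
    hB p m S _ hS (fun y hy => (hT y hy).col j) fun y hy => h y hy j
  choose e he using h1
  refine ⟨fun z i j => e j z i, fun y hy => ⟨fun i j => analyticAt_pi_iff.1 (he j y hy).1 i, ?_⟩⟩
  filter_upwards [eventually_all.2 fun j => (he j y hy).2] with z hz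
  ext i j
  exact congrFun (hz j) i

theorem IsKerGen.cols {M : E → Matrix q p ℂ} {S : E → Matrix p m ℂ} {y : E} (h : IsKerGen M S y)
    {T : E → Matrix p k ℂ} (hT : AnMatAt T y) (hMT : ∀ᶠ z in 𝓝 y, M z * T z = 0) (j : k) :
    ∃ e : E → m → ℂ, AnalyticAt ℂ e y ∧ ∀ᶠ z in 𝓝 y, (fun i => T z i j) = S z *ᵥ e z :=
  h _ (hT.col j) (hMT.mono fun z hz => funext fun i => congrFun (congrFun hz i) j)

theorem IsKerGen.matCols {M : E → Matrix q p ℂ} {S : E → Matrix p m ℂ} {y : E} (h : IsKerGen M S y)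
    {T : E → Matrix p k ℂ} (hT : AnMatAt T y) (hMT : ∀ᶠ z in 𝓝 y, M z * T z = 0) :
    ∃ P : E → Matrix m k ℂ, AnMatAt P y ∧ ∀ᶠ z in 𝓝 y, T z = S z * P z := by
  choose e he he' using fun j => h.cols hT hMT j
  refine ⟨fun z i j => e j z i, fun i j => analyticAt_pi_iff.1 (he j) i, ?_⟩
  filter_upwards [eventually_all.2 he'] with z hz
  ext i j
  exact congrFun (hz j) i

/-- Generating the kernel is an open condition, by Oka's theorem. -/
theorem GenOn.exists_open [FiniteDimensional ℂ E] {M : E → Matrix q p ℂ} {K : Set E}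
    (hM : ∀ y ∈ K, AnMatAt M y) (h : GenOn M K) : ∃ O, IsOpen O ∧ K ⊆ O ∧ GenOn M O := by
  obtain ⟨m, _, S, hS⟩ := h
  refine ⟨interior {y | AnMatAt S y ∧ (∀ᶠ z in 𝓝 y, M z * S z = 0) ∧ IsKerGen M S y},
    isOpen_interior, fun y hy => ?_, m, inferInstance, S, fun y hy => (interior_subset hy :)⟩
  obtain ⟨h1, h2, h3⟩ := hS y hy
  obtain ⟨m0, _, S0, hS0, hMS0, hgen⟩ := oka E q p M y (hM y hy)
  obtain ⟨P, hP, hPS⟩ := h3.matCols hS0 hMS0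
  rw [mem_interior_iff_mem_nhds]
  filter_upwards [h1.eventually, h2.eventually_nhds, hgen, hP.eventually, hPS.eventually_nhds]
    with x hx1 hx2 hx3 hx4 hx5
  refine ⟨hx1, hx2, fun c hc hMc => ?_⟩
  obtain ⟨e, he, hce⟩ := hx3 c hc hMc
  refine ⟨fun z => P z *ᵥ e z, hx4.mulVec he, ?_⟩
  filter_upwards [hce, hx5] with z hz1 hz2
  rw [hz1, hz2, Matrix.mulVec_mulVec]

theorem SolveOn.exists_open {S : E → Matrix p m ℂ} {c : E → p → ℂ} {K : Set E}
    (h : SolveOn S c K) : ∃ O, IsOpen O ∧ K ⊆ O ∧ SolveOn S c O := by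
  obtain ⟨e, he⟩ := h
  refine ⟨interior {y | AnalyticAt ℂ e y ∧ ∀ᶠ z in 𝓝 y, c z = S z *ᵥ e z},
    isOpen_interior, fun y hy => ?_, e, fun y hy => (interior_subset hy :)⟩
  rw [mem_interior_iff_mem_nhds]
  exact (he y hy).1.eventually_analyticAt.and (he y hy).2.eventually_nhds

/-- Two systems of sections of the kernel, each generating on one piece, together generate. -/
theorem genOn_union {M : E → Matrix q p ℂ} {K1 K2 : Set E} {T1 : E → Matrix p m ℂ}
    {T2 : E → Matrix p k ℂ}
    (h1 : ∀ y ∈ K1 ∪ K2, AnMatAt T1 y ∧ (∀ᶠ z in 𝓝 y, M z * T1 z = 0) ∧ (y ∈ K1 → IsKerGen M T1 y))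
    (h2 : ∀ y ∈ K1 ∪ K2, AnMatAt T2 y ∧ (∀ᶠ z in 𝓝 y, M z * T2 z = 0) ∧ (y ∈ K2 → IsKerGen M T2 y)) :
    GenOn M (K1 ∪ K2) := by
  refine ⟨m ⊕ k, inferInstance, fun z => Matrix.fromCols (T1 z) (T2 z), fun y hy => ?_⟩
  obtain ⟨a1, b1, c1⟩ := h1 y hy
  obtain ⟨a2, b2, c2⟩ := h2 y hy
  refine ⟨a1.fromCols a2, ?_, fun c hc hMc => ?_⟩
  · filter_upwards [b1, b2] with z hz1 hz2
    rw [Matrix.mul_fromCols, hz1, hz2, Matrix.fromCols_zero]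
  · rcases hy with hy | hy
    · obtain ⟨e, he, hce⟩ := c1 hy c hc hMc
      refine ⟨fun z => Sum.elim (e z) 0, analyticAt_pi_iff.2 ?_, hce.mono fun z hz => ?_⟩
      · rintro (i | i)
        · exact analyticAt_pi_iff.1 he i
        · exact analyticAt_const
      · rw [Matrix.fromCols_mulVec_sumElim, hz, Matrix.mulVec_zero, add_zero]
    · obtain ⟨e, he, hce⟩ := c2 hy c hc hMc
      refine ⟨fun z => Sum.elim 0 (e z), analyticAt_pi_iff.2 ?_, hce.mono fun z hz => ?_⟩
      · rintro (i | i)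
        · exact analyticAt_const
        · exact analyticAt_pi_iff.1 he i
      · rw [Matrix.fromCols_mulVec_sumElim, hz, Matrix.mulVec_zero, zero_add]

end Generic

section Cut

variable {F : Type} [NormedAddCommGroup F] [NormedSpace ℂ F]
variable {q p m : Type} [Fintype q] [Fintype p] [Fintype m]

/-- Functions agreeing near the cut `L × seg` are restrictions of one function. -/
theorem glue {α : Type} {L : Set F} {t c d : ℝ} {A1 A2 : Set ℂ}
    (hA : (A1 = lft t c d ∧ A2 = rgt t c d) ∨ (A1 = rgt t c d ∧ A2 = lft t c d))
    {f1 f2 : F × ℂ → α} (h : ∀ y ∈ L ×ˢ seg t c d, ∀ᶠ z in 𝓝 y, f1 z = f2 z) :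
    ∃ T : F × ℂ → α, (∀ y ∈ L ×ˢ A1, ∀ᶠ z in 𝓝 y, T z = f1 z) ∧
      ∀ y ∈ L ×ˢ A2, ∀ᶠ z in 𝓝 y, T z = f2 z := by
  have key : ∀ {f1 f2 : F × ℂ → α}, (∀ y ∈ L ×ˢ seg t c d, ∀ᶠ z in 𝓝 y, f1 z = f2 z) →
    ∃ T : F × ℂ → α, (∀ y ∈ L ×ˢ lft t c d, ∀ᶠ z in 𝓝 y, T z = f1 z) ∧
      ∀ y ∈ L ×ˢ rgt t c d, ∀ᶠ z in 𝓝 y, T z = f2 z := by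
    intro f1 f2 h
    have hcont : Continuous fun z : F × ℂ => z.2.re := by fun_prop
    refine ⟨fun z => if z.2.re ≤ t then f1 z else f2 z, ?_, ?_⟩
    · rintro y ⟨hy1, hy2, hy3⟩
      rcases hy2.lt_or_eq with hlt | heq
      · filter_upwards [hcont.continuousAt.eventually_lt continuousAt_const hlt] with z hz
        simp only [hz.le, if_true]
      · filter_upwards [h y ⟨hy1, hy3 heq⟩] with z hz
        simp only [hz, ite_self]
    · rintro y ⟨hy1, hy2, hy3⟩
      rcases hy2.lt_or_eq with hlt | heq
      · filter_upwards [continuousAt_const.eventually_lt hcont.continuousAt hlt] with z hz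
        simp only [not_le.2 hz, if_false]
      · filter_upwards [h y ⟨hy1, hy3 heq.symm⟩] with z hz
        simp only [hz, ite_self]
  rcases hA with ⟨rfl, rfl⟩ | ⟨rfl, rfl⟩
  · exact key h
  · obtain ⟨T, h1, h2⟩ := key fun y hy => (h y hy).mono fun z hz => hz.symm
    exact ⟨T, h2, h1⟩

variable [FiniteDimensional ℂ F]

/-- From generators on both sides of a segment, relations on the union that generate the kernel on the
side `R2`. The matrices expressing each system through the other are absorbed by Cartan's splitting. -/
theorem merge_half {L : Set F} (hL : IsCompact L) {t c d : ℝ} (hcd : c ≤ d) {A1 A2 R1 R2 : Set ℂ}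
    (hA : (A1 = lft t c d ∧ A2 = rgt t c d) ∨ (A1 = rgt t c d ∧ A2 = lft t c d))
    (hR1 : R1 ⊆ A1) (hR2 : R2 ⊆ A2) (hs1 : seg t c d ⊆ R1) (hs2 : seg t c d ⊆ R2)
    (hB : PropB (L ×ˢ seg t c d)) {M : F × ℂ → Matrix q p ℂ}
    (h1 : GenOn M (L ×ˢ R1)) (h2 : GenOn M (L ×ˢ R2)) :
    ∃ (m : Type) (_ : Fintype m) (T : F × ℂ → Matrix p m ℂ), ∀ y ∈ (L ×ˢ R1) ∪ (L ×ˢ R2),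
      AnMatAt T y ∧ (∀ᶠ z in 𝓝 y, M z * T z = 0) ∧ (y ∈ L ×ˢ R2 → IsKerGen M T y) := by
  classical
  obtain ⟨m1, _, S1, hS1⟩ := h1
  obtain ⟨m2, _, S2, hS2⟩ := h2
  have i1 : L ×ˢ seg t c d ⊆ L ×ˢ R1 := prod_mono_right hs1
  have i2 : L ×ˢ seg t c d ⊆ L ×ˢ R2 := prod_mono_right hs2
  obtain ⟨P, hP⟩ := hB.matSolve (fun y hy => (hS1 y (i1 hy)).1) (fun y hy => (hS2 y (i2 hy)).1)
    fun y hy => (hS1 y (i1 hy)).2.2.cols (hS2 y (i2 hy)).1 (hS2 y (i2 hy)).2.1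
  obtain ⟨P', hP'⟩ := hB.matSolve (fun y hy => (hS2 y (i2 hy)).1) (fun y hy => (hS1 y (i1 hy)).1)
    fun y hy => (hS2 y (i2 hy)).2.2.cols (hS1 y (i1 hy)).1 (hS1 y (i1 hy)).2.1
  obtain ⟨G', G'', hG', hG'', hG⟩ := cartan_slice hL hcd hA (fun y hy => (hP y hy).1)
    fun y hy => (hP' y hy).1
  obtain ⟨T, hT1, hT2⟩ := glue (L := L) hA (f1 := fun z => S1 z * G' z) (f2 := fun z => S2 z * G'' z)
    (by
      intro y hy
      filter_upwards [hG y hy, (hP y hy).2, (hP' y hy).2] with z hz1 hz2 hz3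
      exact hz1 _ _ _ hz2 hz3)
  refine ⟨m2, inferInstance, T, ?_⟩
  have r2 : ∀ y ∈ L ×ˢ R2,
      AnMatAt T y ∧ (∀ᶠ z in 𝓝 y, M z * T z = 0) ∧ (y ∈ L ×ˢ R2 → IsKerGen M T y) := by
    intro y hy
    have hyA : y ∈ L ×ˢ A2 := prod_mono_right hR2 hy
    obtain ⟨a, b, g⟩ := hS2 y hy
    refine ⟨(a.mul (hG'' y hyA).1).congr' (hT2 y hyA), ?_, fun _ => ?_⟩
    · filter_upwards [hT2 y hyA, b] with z hz1 hz2
      rw [hz1, ← Matrix.mul_assoc, hz2, Matrix.zero_mul]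
    · intro c hc hMc
      obtain ⟨e, he, hce⟩ := g c hc hMc
      obtain ⟨e', he', hee⟩ := (hG'' y hyA).1.solve (hG'' y hyA).2 he
      refine ⟨e', he', ?_⟩
      filter_upwards [hce, hee, hT2 y hyA] with z hz1 hz2 hz3
      rw [hz1, hz3, hz2, Matrix.mulVec_mulVec]
  rintro y (hy | hy)
  · have hyA : y ∈ L ×ˢ A1 := prod_mono_right hR1 hy
    obtain ⟨a, b, -⟩ := hS1 y hy
    refine ⟨(a.mul (hG' y hyA)).congr' (hT1 y hyA), ?_, fun h => (r2 y h).2.2 h⟩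
    filter_upwards [hT1 y hyA, b] with z hz1 hz2
    rw [hz1, ← Matrix.mul_assoc, hz2, Matrix.zero_mul]
  · exact r2 y hy

/-- Finite generation passes to the union of two pieces meeting in a slice. -/
theorem mergeA {L : Set F} (hL : IsCompact L) {t c d : ℝ} (hcd : c ≤ d) {R1 R2 : Set ℂ}
    (hR1 : R1 ⊆ lft t c d) (hR2 : R2 ⊆ rgt t c d) (hs1 : seg t c d ⊆ R1) (hs2 : seg t c d ⊆ R2)
    (hB : PropB (L ×ˢ seg t c d)) {M : F × ℂ → Matrix q p ℂ}
    (h1 : GenOn M (L ×ˢ R1)) (h2 : GenOn M (L ×ˢ R2)) : GenOn M (L ×ˢ (R1 ∪ R2)) := by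
  obtain ⟨m, _, T, hT⟩ := merge_half hL hcd (Or.inl ⟨rfl, rfl⟩) hR1 hR2 hs1 hs2 hB h1 h2
  obtain ⟨m', _, T', hT'⟩ := merge_half hL hcd (Or.inr ⟨rfl, rfl⟩) hR2 hR1 hs2 hs1 hB h2 h1
  rw [prod_union]
  rw [union_comm (L ×ˢ R2)] at hT'
  exact genOn_union hT' hT

/-- Solvability passes to the union of two pieces meeting in a slice: the difference of two solutions
is a combination of kernel generators, whose coefficients are split additively. -/
theorem mergeB {L : Set F} (hL : IsCompact L) {t c d : ℝ} (hcd : c ≤ d) {R1 R2 : Set ℂ}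
    (hR1 : R1 ⊆ lft t c d) (hR2 : R2 ⊆ rgt t c d) (hs1 : seg t c d ⊆ R1) (hs2 : seg t c d ⊆ R2)
    (hB : PropB (L ×ˢ seg t c d)) {S : F × ℂ → Matrix p m ℂ} {b : F × ℂ → p → ℂ}
    (hU : GenOn S (L ×ˢ (R1 ∪ R2)))
    (h1 : SolveOn S b (L ×ˢ R1)) (h2 : SolveOn S b (L ×ˢ R2)) : SolveOn S b (L ×ˢ (R1 ∪ R2)) := by
  obtain ⟨e1, he1⟩ := h1
  obtain ⟨e2, he2⟩ := h2
  obtain ⟨k, _, U, hU⟩ := hU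
  have i1 : L ×ˢ seg t c d ⊆ L ×ˢ R1 := prod_mono_right hs1
  have i2 : L ×ˢ seg t c d ⊆ L ×ˢ R2 := prod_mono_right hs2
  have j1 : L ×ˢ R1 ⊆ L ×ˢ (R1 ∪ R2) := prod_mono_right subset_union_left
  have j2 : L ×ˢ R2 ⊆ L ×ˢ (R1 ∪ R2) := prod_mono_right subset_union_right
  have hsub : ∀ y ∈ L ×ˢ seg t c d, AnalyticAt ℂ (fun z => e1 z - e2 z) y := fun y hy =>
    (he1 y (i1 hy)).1.sub (he2 y (i2 hy)).1
  obtain ⟨f, hf⟩ := hB m k U (fun z => e1 z - e2 z) (fun y hy => (hU y (j1 (i1 hy))).1) hsub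
    (fun y hy => (hU y (j1 (i1 hy))).2.2 _ (hsub y hy) (by
      filter_upwards [(he1 y (i1 hy)).2, (he2 y (i2 hy)).2] with z hz1 hz2
      rw [Matrix.mulVec_sub, ← hz1, ← hz2, sub_self]))
  obtain ⟨f', f'', hf', hf'', hff⟩ := cousin hL hcd fun y hy => (hf y hy).1
  obtain ⟨e, hE1, hE2⟩ := glue (L := L) (t := t) (c := c) (d := d) (Or.inl ⟨rfl, rfl⟩)
    (f1 := fun z => e1 z - U z *ᵥ f' z) (f2 := fun z => e2 z - U z *ᵥ f'' z) (by
      intro y hy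
      filter_upwards [hff y hy, (hf y hy).2] with z hz1 hz2
      rw [hz1, Matrix.mulVec_sub] at hz2
      rw [sub_eq_sub_iff_sub_eq_sub, hz2])
  refine ⟨e, ?_⟩
  rw [prod_union]
  rintro y (hy | hy)
  · have hyA : y ∈ L ×ˢ lft t c d := prod_mono_right hR1 hy
    refine ⟨((he1 y hy).1.sub ((hU y (j1 hy)).1.mulVec (hf' y hyA))).congr
      ((hE1 y hyA).mono fun z hz => hz.symm), ?_⟩
    filter_upwards [hE1 y hyA, (he1 y hy).2, (hU y (j1 hy)).2.1] with z hz1 hz2 hz3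
    rw [hz1, Matrix.mulVec_sub, Matrix.mulVec_mulVec, hz3, Matrix.zero_mulVec, sub_zero, hz2]
  · have hyA : y ∈ L ×ˢ rgt t c d := prod_mono_right hR2 hy
    refine ⟨((he2 y hy).1.sub ((hU y (j2 hy)).1.mulVec (hf'' y hyA))).congr
      ((hE2 y hyA).mono fun z hz => hz.symm), ?_⟩
    filter_upwards [hE2 y hyA, (he2 y hy).2, (hU y (j2 hy)).2.1] with z hz1 hz2 hz3
    rw [hz1, Matrix.mulVec_sub, Matrix.mulVec_mulVec, hz3, Matrix.zero_mulVec, sub_zero, hz2]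

end Cut

end Merge

section Sweep

open Complex (I)

/-- Interval induction for a property of sets of reals that is local and can be merged along
adjacent intervals. -/
theorem interval_induction {a b : ℝ} (hab : a ≤ b) {Q : Set ℝ → Prop}
    (hmono : ∀ A B : Set ℝ, A ⊆ B → Q B → Q A)
    (hloc : ∀ t ∈ Icc a b, ∃ V, IsOpen V ∧ t ∈ V ∧ Q V)
    (hmerge : ∀ t t', a ≤ t → t ≤ t' → t' ≤ b → Q (Icc a t) → Q (Icc t t') → Q (Icc a t')) :
    Q (Icc a b) := by
  choose V hV htV hQV using hloc
  obtain ⟨t, ht0, htm, ⟨m, hm⟩, ht⟩ := exists_monotone_Icc_subset_open_cover_Icc hab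
    (c := fun s : Icc a b => {x : Icc a b | (x : ℝ) ∈ V s s.2})
    (fun s => (hV s s.2).preimage continuous_subtype_val)
    (fun x _ => mem_iUnion.2 ⟨x, htV x x.2⟩)
  have key : ∀ n, Q (Icc a (t n : ℝ)) := by
    intro n
    induction n with
    | zero =>
      rw [ht0]
      exact hmono _ _ (by rintro x ⟨h1, h2⟩; rw [le_antisymm h2 h1]; exact htV a ⟨le_rfl, hab⟩)
        (hQV a ⟨le_rfl, hab⟩)
    | succ n ih =>
      obtain ⟨s, hs⟩ := ht n
      refine hmerge (t n) (t (n + 1)) (t n).2.1 (htm n.le_succ) (t (n + 1)).2.2 ih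
        (hmono _ _ ?_ (hQV s s.2))
      intro x hx
      exact @hs ⟨x, (t n).2.1.trans hx.1, hx.2.trans (t (n + 1)).2.2⟩ hx
  have := key m
  rwa [hm m le_rfl] at this

theorem convex_slice {R : Set ℂ} (hR : IsCompact R) (hc : Convex ℝ R) {t : ℝ}
    (hne : (R ∩ {w | w.re = t}).Nonempty) :
    ∃ c d, c ≤ d ∧ R ∩ {w | w.re = t} = seg t c d := by
  have hcl : IsClosed {w : ℂ | w.re = t} := isClosed_eq Complex.continuous_re continuous_const
  have hconv : Convex ℝ (R ∩ {w | w.re = t}) :=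
    hc.inter (convex_hyperplane (f := fun w : ℂ => w.re) ⟨Complex.add_re, fun c x => by simp⟩ t)
  have hk := hR.inter_right hcl
  have him := hk.image Complex.continuous_im
  have hci : IsConnected (Complex.im '' (R ∩ {w | w.re = t})) :=
    ⟨hne.image _, hconv.isPreconnected.image _ Complex.continuous_im.continuousOn⟩
  have e := eq_Icc_of_connected_compact hci him
  refine ⟨sInf (Complex.im '' (R ∩ {w | w.re = t})), sSup (Complex.im '' (R ∩ {w | w.re = t})),
    ?_, ?_⟩
  rotate_left
  · ext w
    constructor
    · intro hw
      refine ⟨w.im, e ▸ mem_image_of_mem _ hw, ?_⟩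
      apply Complex.ext <;> simp [hw.2.symm]
    · rintro ⟨y, hy, rfl⟩
      rw [← e] at hy
      obtain ⟨w, hw, rfl⟩ := hy
      have : (t : ℂ) + w.im * I = w := by apply Complex.ext <;> simp [hw.2.symm]
      simp only [this]; exact hw
  · have := hci.nonempty
    rw [e, nonempty_Icc] at this
    exact this

theorem convex_re {R : Set ℂ} (hR : IsCompact R) (hc : Convex ℝ R) (hne : R.Nonempty) :
    ∃ a b, a ≤ b ∧ Complex.re '' R = Icc a b := by
  have hci : IsConnected (Complex.re '' R) :=
    ⟨hne.image _, hc.isPreconnected.image _ Complex.continuous_re.continuousOn⟩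
  have e := eq_Icc_of_connected_compact hci (hR.image Complex.continuous_re)
  have := hci.nonempty
  rw [e, nonempty_Icc] at this
  exact ⟨_, _, this, e⟩

variable {F : Type} [NormedAddCommGroup F] [NormedSpace ℂ F]

/-- An open set containing a slice of a compact set contains the neighbouring slices. -/
theorem slice_nhd {L : Set F} (hL : IsCompact L) {R : Set ℂ} (hR : IsCompact R) {t : ℝ}
    {O : Set (F × ℂ)} (hO : IsOpen O) (h : L ×ˢ (R ∩ {w | w.re = t}) ⊆ O) :
    ∃ V : Set ℝ, IsOpen V ∧ t ∈ V ∧ L ×ˢ (R ∩ {w | w.re ∈ V}) ⊆ O := by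
  have hcont : Continuous fun z : F × ℂ => z.2.re := by fun_prop
  have hk : IsCompact ((fun z : F × ℂ => z.2.re) '' ((L ×ˢ R) \ O)) :=
    ((hL.prod hR).diff hO).image hcont
  refine ⟨_, hk.isClosed.isOpen_compl, ?_, ?_⟩
  · rintro ⟨z, ⟨hz1, hz2⟩, hz3⟩
    exact hz2 (h ⟨hz1.1, hz1.2, hz3⟩)
  · rintro z ⟨hz1, hz2, hz3⟩
    by_contra hzO
    exact hz3 ⟨z, ⟨⟨hz1, hz2⟩, hzO⟩, rfl⟩

variable [FiniteDimensional ℂ F]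

/-- Theorems A and B pass from the slices `L × (R ∩ {Re = t})` to `L × R`, for `R` compact convex. -/
theorem sweep {L : Set F} (hL : IsCompact L) {R : Set ℂ} (hR : IsCompact R) (hc : Convex ℝ R)
    (hA : ∀ t, PropA (L ×ˢ (R ∩ {w : ℂ | w.re = t})))
    (hB : ∀ t, PropB (L ×ˢ (R ∩ {w : ℂ | w.re = t}))) : PropA (L ×ˢ R) ∧ PropB (L ×ˢ R) := by
  rcases R.eq_empty_or_nonempty with rfl | hne
  · constructor
    · intro q p _ _ M _
      exact ⟨Empty, inferInstance, fun _ => 0, fun y hy => absurd hy.2 (notMem_empty _)⟩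
    · intro p m _ _ S c _ _ _
      exact ⟨0, fun y hy => absurd hy.2 (notMem_empty _)⟩
  obtain ⟨a, b, hab, hre⟩ := convex_re hR hc hne
  have hall : R ∩ {w | w.re ∈ Icc a b} = R :=
    inter_eq_left.2 fun w hw => hre ▸ mem_image_of_mem _ hw
  -- the geometry of one merging step
  have geo : ∀ t t', a ≤ t → t ≤ t' → t' ≤ b → ∃ c d, c ≤ d ∧ R ∩ {w | w.re = t} = seg t c d ∧
      R ∩ {w | w.re ∈ Icc a t} ⊆ lft t c d ∧ R ∩ {w | w.re ∈ Icc t t'} ⊆ rgt t c d ∧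
      seg t c d ⊆ R ∩ {w | w.re ∈ Icc a t} ∧ seg t c d ⊆ R ∩ {w | w.re ∈ Icc t t'} ∧
      R ∩ {w | w.re ∈ Icc a t'} = (R ∩ {w | w.re ∈ Icc a t}) ∪ (R ∩ {w | w.re ∈ Icc t t'}) := by
    intro t t' h1 h2 h3
    have : t ∈ Complex.re '' R := hre ▸ ⟨h1, h2.trans h3⟩
    obtain ⟨w0, hw0, hw0'⟩ := this
    obtain ⟨c, d, hcd, e⟩ := convex_slice hR hc (t := t) ⟨w0, hw0, hw0'⟩
    refine ⟨c, d, hcd, e, fun w hw => ⟨hw.2.2, fun hwt => e ▸ ⟨hw.1, hwt⟩⟩,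
      fun w hw => ⟨hw.2.1, fun hwt => e ▸ ⟨hw.1, hwt⟩⟩, ?_, ?_, ?_⟩
    · rw [← e]; rintro w ⟨hw, hwt⟩
      exact ⟨hw, by rw [mem_setOf_eq] at hwt ⊢; rw [hwt]; exact ⟨h1, le_rfl⟩⟩
    · rw [← e]; rintro w ⟨hw, hwt⟩
      exact ⟨hw, by rw [mem_setOf_eq] at hwt ⊢; rw [hwt]; exact ⟨le_rfl, h2⟩⟩
    · rw [← inter_union_distrib_left]
      congr 1
      ext w
      simp only [mem_setOf_eq, mem_union, ← Icc_union_Icc_eq_Icc h1 h2]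
  have hAll : PropA (L ×ˢ R) := by
    intro q p _ _ M hM
    have := interval_induction (Q := fun V => GenOn M (L ×ˢ (R ∩ {w | w.re ∈ V}))) hab
      (fun A B h hQ => hQ.mono (prod_mono_right (inter_subset_inter_right _ fun w hw => h hw)))
      (fun t _ => by
        have hMt : ∀ y ∈ L ×ˢ (R ∩ {w : ℂ | w.re = t}), AnMatAt M y :=
          fun y hy => hM y ⟨hy.1, hy.2.1⟩
        obtain ⟨O, hO, hKO, hg⟩ := (hA t q p M hMt).exists_open hMt
        obtain ⟨V, hV, htV, hVO⟩ := slice_nhd hL hR hO hKO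
        exact ⟨V, hV, htV, hg.mono hVO⟩)
      (fun t t' h1 h2 h3 hQ1 hQ2 => by
        obtain ⟨c, d, hcd, e, g1, g2, g3, g4, g5⟩ := geo t t' h1 h2 h3
        simp only [g5]
        exact mergeA hL hcd g1 g2 g3 g4 (e ▸ hB t) hQ1 hQ2)
    rwa [hall] at this
  refine ⟨hAll, ?_⟩
  intro p m _ _ S b' hS hb hloc
  have hU := hAll p m S hS
  have := interval_induction (Q := fun V => SolveOn S b' (L ×ˢ (R ∩ {w | w.re ∈ V}))) hab
    (fun A B h hQ => hQ.mono (prod_mono_right (inter_subset_inter_right _ fun w hw => h hw)))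
    (fun t _ => by
      have hsub : L ×ˢ (R ∩ {w : ℂ | w.re = t}) ⊆ L ×ˢ R := prod_mono_right inter_subset_left
      obtain ⟨O, hO, hKO, hg⟩ := (hB t p m S b' (fun y hy => hS y (hsub hy))
        (fun y hy => hb y (hsub hy)) (fun y hy => hloc y (hsub hy))).exists_open
      obtain ⟨V, hV, htV, hVO⟩ := slice_nhd hL hR hO hKO
      exact ⟨V, hV, htV, hg.mono hVO⟩)
    (fun t t' h1 h2 h3 hQ1 hQ2 => by
      obtain ⟨c, d, hcd, e, g1, g2, g3, g4, g5⟩ := geo t t' h1 h2 h3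
      simp only [g5]
      refine mergeB hL hcd g1 g2 g3 g4 (e ▸ hB t) (hU.mono ?_) hQ1 hQ2
      rw [← g5]
      exact prod_mono_right inter_subset_left)
  rwa [hall] at this

end Sweep

/-! ### Theorems A and B on closed polydiscs -/

section Polydisc

open Matrix

open Complex (I)

variable {E' E : Type} [NormedAddCommGroup E'] [NormedSpace ℂ E'] [NormedAddCommGroup E]
  [NormedSpace ℂ E]

/-- Theorems A and B together. -/
def PropAB (K : Set E) : Prop := PropA K ∧ PropB K

theorem propAB_subsingleton [FiniteDimensional ℂ E] {K : Set E} (hK : K.Subsingleton) : PropAB K := by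
  constructor
  · intro q p _ _ M hM
    rcases hK.eq_empty_or_singleton with rfl | ⟨x, rfl⟩
    · exact ⟨Empty, inferInstance, fun _ => 0, fun y hy => absurd hy (notMem_empty _)⟩
    · obtain ⟨m, _, S, h1, h2, h3⟩ := oka E q p M x (hM x rfl)
      exact ⟨m, inferInstance, S, fun y hy => by
        rw [mem_singleton_iff.1 hy]; exact ⟨h1, h2, h3.self_of_nhds⟩⟩
  · intro p m _ _ S c hS hc h
    rcases hK.eq_empty_or_singleton with rfl | ⟨x, rfl⟩
    · exact ⟨0, fun y hy => absurd hy (notMem_empty _)⟩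
    · obtain ⟨e, he, he'⟩ := h x rfl
      exact ⟨e, fun y hy => by rw [mem_singleton_iff.1 hy]; exact ⟨he, he'⟩⟩

theorem PropAB.transport (φ : E ≃L[ℂ] E') {K : Set E} {K' : Set E'} (hK : ∀ z, z ∈ K ↔ φ z ∈ K')
    (h : PropAB K) : PropAB K' := by
  have t1 : ∀ x, Tendsto φ (𝓝 x) (𝓝 (φ x)) := fun x => φ.continuous.continuousAt
  have t2 : ∀ x, Tendsto φ.symm (𝓝 x) (𝓝 (φ.symm x)) := fun x => φ.symm.continuous.continuousAt
  have a1 : ∀ x, AnalyticAt ℂ φ x := fun x => φ.analyticAt x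
  have a2 : ∀ x, AnalyticAt ℂ φ.symm x := fun x => φ.symm.analyticAt x
  have hK' : ∀ z ∈ K', φ.symm z ∈ K := fun z hz => (hK _).2 (by simpa using hz)
  constructor
  · intro q p _ _ M hM
    obtain ⟨m, _, S, hS⟩ := h.1 q p (fun z => M (φ z))
      fun y hy => AnMatAt.comp' (hM _ ((hK y).1 hy)) (a1 y)
    refine ⟨m, inferInstance, fun z => S (φ.symm z), fun y hy => ?_⟩
    obtain ⟨h1, h2, h3⟩ := hS _ (hK' y hy)
    refine ⟨AnMatAt.comp' h1 (a2 y), ((t2 y).eventually h2).mono fun z hz => by simpa using hz, ?_⟩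
    intro c hc hMc
    obtain ⟨e, he, hce⟩ := h3 (fun z => c (φ z))
      (AnalyticAt.fun_comp (g := c) (f := φ) (by simpa using hc) (a1 _))
      ((t1 (φ.symm y)).eventually (by simpa using hMc))
    exact ⟨fun z => e (φ.symm z), AnalyticAt.fun_comp (g := e) (f := φ.symm) he (a2 y),
      ((t2 y).eventually hce).mono fun z hz => by simpa using hz⟩
  · intro p m _ _ S c hS hc hloc
    obtain ⟨e, he⟩ := h.2 p m (fun z => S (φ z)) (fun z => c (φ z))
      (fun y hy => AnMatAt.comp' (hS _ ((hK y).1 hy)) (a1 y))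
      (fun y hy => AnalyticAt.fun_comp (g := c) (f := φ) (hc _ ((hK y).1 hy)) (a1 y))
      (fun y hy => by
        obtain ⟨e, he, hce⟩ := hloc _ ((hK y).1 hy)
        exact ⟨fun z => e (φ z), AnalyticAt.fun_comp (g := e) (f := φ) he (a1 y),
          (t1 y).eventually hce⟩)
    refine ⟨fun z => e (φ.symm z), fun y hy => ?_⟩
    obtain ⟨h1, h2⟩ := he _ (hK' y hy)
    exact ⟨AnalyticAt.fun_comp (g := e) (f := φ.symm) h1 (a2 y),
      ((t2 y).eventually h2).mono fun z hz => by simpa using hz⟩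

/-- A double sweep: first along vertical segments (rotated to be horizontal), then across `R`. -/
theorem propAB_convex [FiniteDimensional ℂ E] {L : Set E} (hL : IsCompact L) {R : Set ℂ}
    (hR : IsCompact R) (hc : Convex ℝ R) (H : ∀ w : ℂ, PropAB (L ×ˢ ({w} : Set ℂ))) :
    PropAB (L ×ˢ R) := by
  have hvert : ∀ t, PropAB (L ×ˢ (R ∩ {w : ℂ | w.re = t})) := by
    intro t
    let rot : (E × ℂ) ≃L[ℂ] (E × ℂ) := (ContinuousLinearEquiv.refl ℂ E).prodCongr
      (ContinuousLinearEquiv.unitsEquivAut ℂ (Units.mk0 I Complex.I_ne_zero))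
    have hrot : ∀ z : E × ℂ, rot z = (z.1, z.2 * I) := fun z => by
      simp [rot, ContinuousLinearEquiv.unitsEquivAut]
    set R' : Set ℂ := {v | v * I ∈ R ∩ {w : ℂ | w.re = t}} with hR'
    have hcl : IsClosed {w : ℂ | w.re = t} := isClosed_eq Complex.continuous_re continuous_const
    have hconv : Convex ℝ (R ∩ {w | w.re = t}) :=
      hc.inter (convex_hyperplane (f := fun w : ℂ => w.re) ⟨Complex.add_re, fun c x => by simp⟩ t)
    have hRc : IsCompact R' := by
      have : R' = (fun w => w * (-I)) '' (R ∩ {w : ℂ | w.re = t}) := by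
        ext v
        constructor
        · intro hv
          exact ⟨v * I, hv, by simp [mul_assoc]⟩
        · rintro ⟨w, hw, rfl⟩
          simpa [hR', mul_assoc] using hw
      rw [this]
      exact (hR.inter_right hcl).image (by fun_prop)
    have hRconv : Convex ℝ R' := by
      intro x hx y hy a b ha hb hab
      have := hconv hx hy ha hb hab
      simp only [hR', mem_setOf_eq] at this ⊢
      convert this using 1
      simp only [Complex.real_smul]; ring
    have hs : ∀ s, PropAB (L ×ˢ (R' ∩ {w : ℂ | w.re = s})) := by
      intro s
      have hsub : (R' ∩ {w : ℂ | w.re = s}).Subsingleton := by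
        rintro u ⟨hu, hu'⟩ v ⟨hv, hv'⟩
        have h1 := hu.2
        have h2 := hv.2
        simp only [mem_setOf_eq, Complex.mul_re, Complex.I_re, Complex.I_im] at h1 h2 hu' hv'
        apply Complex.ext <;> linarith
      rcases hsub.eq_empty_or_singleton with h | ⟨w, h⟩
      · rw [h, prod_empty]; exact propAB_subsingleton subsingleton_empty
      · rw [h]; exact H w
    refine PropAB.transport rot (K := L ×ˢ R') (fun z => ?_)
      (sweep hL hRc hRconv (fun s => (hs s).1) fun s => (hs s).2)
    rw [hrot]; rfl
  exact sweep hL hR hc (fun t => (hvert t).1) fun t => (hvert t).2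

/-- The closed polydisc of radius `r`. -/
def PD (n : ℕ) (r : ℝ) : Set (Fin n → ℂ) := {z | ∀ i, ‖z i‖ ≤ r}

theorem isCompact_PD (n : ℕ) (r : ℝ) : IsCompact (PD n r) := by
  have : PD n r = Set.pi univ fun _ => closedBall (0 : ℂ) r := by
    ext z; simp [PD]
  rw [this]
  exact isCompact_univ_pi fun _ => isCompact_closedBall _ _

/-- A factor `{x}` is carried along, so that the induction on `n` can move one variable at a time into
the parameter space. -/
theorem propAB_PD_aux (n : ℕ) (r : ℝ) : ∀ (G : Type) [NormedAddCommGroup G] [NormedSpace ℂ G]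
    [FiniteDimensional ℂ G] (x : G), PropAB (({x} : Set G) ×ˢ PD n r) := by
  induction n with
  | zero =>
    intro G _ _ _ x
    apply propAB_subsingleton
    rintro ⟨a, b⟩ ⟨ha, -⟩ ⟨a', b'⟩ ⟨ha', -⟩
    rw [mem_singleton_iff] at ha ha'
    exact Prod.ext (ha.trans ha'.symm) (Subsingleton.elim _ _)
  | succ n ih =>
    intro G _ _ _ x
    let ψ : ((G × ℂ) × (Fin n → ℂ)) ≃L[ℂ] ((G × (Fin n → ℂ)) × ℂ) := LinearEquiv.toContinuousLinearEquiv
      { toFun := fun z => ((z.1.1, z.2), z.1.2)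
        invFun := fun z => ((z.1.1, z.2), z.1.2)
        map_add' := fun _ _ => rfl
        map_smul' := fun _ _ => rfl
        left_inv := fun _ => rfl
        right_inv := fun _ => rfl }
    let φ : ((G × (Fin n → ℂ)) × ℂ) ≃L[ℂ] (G × (Fin (n + 1) → ℂ)) := LinearEquiv.toContinuousLinearEquiv
      { toFun := fun z => (z.1.1, Fin.cons z.2 z.1.2)
        invFun := fun z => ((z.1, fun i => z.2 i.succ), z.2 0)
        map_add' := fun a b => Prod.ext rfl (by
          ext i; refine Fin.cases ?_ (fun j => ?_) i <;> simp)
        map_smul' := fun a b => Prod.ext rfl (by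
          ext i; refine Fin.cases ?_ (fun j => ?_) i <;> simp)
        left_inv := fun _ => by simp
        right_inv := fun z => Prod.ext rfl (by
          ext i; refine Fin.cases ?_ (fun j => ?_) i <;> simp) }
    have hL : IsCompact (({x} : Set G) ×ˢ PD n r) := isCompact_singleton.prod (isCompact_PD n r)
    refine PropAB.transport φ ?_ (propAB_convex hL (isCompact_closedBall (0 : ℂ) r)
      (convex_closedBall _ _) fun w => PropAB.transport ψ ?_ (ih (G × ℂ) (x, w)))
    · intro z
      change _ ↔ (z.1.1, (Fin.cons z.2 z.1.2 : Fin (n + 1) → ℂ)) ∈ _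
      simp only [mem_prod, PD, mem_setOf_eq, Fin.forall_fin_succ, Fin.cons_zero, Fin.cons_succ,
        mem_closedBall_zero_iff]
      tauto
    · intro z
      change _ ↔ ((z.1.1, z.2), z.1.2) ∈ _
      simp only [mem_prod, mem_singleton_iff, Prod.ext_iff]
      tauto

theorem propAB_PD (n : ℕ) (r : ℝ) : PropAB (PD n r) := by
  let φ : ((Fin 0 → ℂ) × (Fin n → ℂ)) ≃L[ℂ] (Fin n → ℂ) := LinearEquiv.toContinuousLinearEquiv
      { toFun := fun z => z.2
        invFun := fun z => (0, z)
        map_add' := fun _ _ => rfl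
        map_smul' := fun _ _ => rfl
        left_inv := fun _ => Prod.ext (Subsingleton.elim _ _) rfl
        right_inv := fun _ => rfl }
  refine PropAB.transport φ (fun z => ?_) (propAB_PD_aux n r (Fin 0 → ℂ) 0)
  change _ ↔ z.2 ∈ _
  simp only [mem_prod, mem_singleton_iff, Subsingleton.elim z.1 0, true_and]

end Polydisc

/-! ### Polynomial approximation and global sections on the open polydisc -/

section Runge

variable {E V : Type*} [NormedAddCommGroup E] [NormedSpace ℂ E] [NormedAddCommGroup V]
  [NormedSpace ℂ V] [CompleteSpace V]

/-- An analytic function near a compact balanced set is uniformly approximated there by its Taylor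
polynomials at the origin. -/
theorem exists_approx {K : Set E} (hK : IsCompact K) (h0 : (0 : E) ∈ K)
    (hbal : ∀ l : ℂ, ‖l‖ ≤ 1 → ∀ x ∈ K, l • x ∈ K) {f : E → V} (hf : ∀ y ∈ K, AnalyticAt ℂ f y)
    {ε : ℝ} (hε : 0 < ε) : ∃ g : E → V, (∀ y, AnalyticAt ℂ g y) ∧ ∀ y ∈ K, ‖f y - g y‖ ≤ ε := by
  have hfan : IsOpen {y | AnalyticAt ℂ f y} := isOpen_analyticAt ℂ f
  obtain ⟨C, hC⟩ := hK.exists_bound_of_continuousOn (f := f)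
    fun y hy => (hf y hy).continuousAt.continuousWithinAt
  set O : Set E := {y | AnalyticAt ℂ f y} ∩ f ⁻¹' (ball 0 (C + 1)) with hOdef
  have hO : IsOpen O := by
    rw [isOpen_iff_mem_nhds]
    rintro y ⟨h1, h2⟩
    exact inter_mem (hfan.mem_nhds h1) (h1.continuousAt.preimage_mem_nhds (isOpen_ball.mem_nhds h2))
  have hKO : K ⊆ O := fun y hy => ⟨hf y hy, by
    rw [mem_preimage, mem_ball_zero_iff]; linarith [hC y hy]⟩
  have hC1 : 0 < C + 1 := by linarith [norm_nonneg (f 0), hC 0 h0]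
  obtain ⟨U, W, hU, -, hcU, hKW, hUW⟩ := generalized_tube_lemma (isCompact_closedBall (0 : ℂ) 1) hK
    (n := (fun q : ℂ × E => q.1 • q.2) ⁻¹' O) (hO.preimage continuous_smul) (by
      rintro ⟨l, x⟩ ⟨hl, hx⟩
      exact hKO (hbal l (by simpa using hl) x hx))
  obtain ⟨δ, hδ, hδU⟩ := (isCompact_closedBall (0 : ℂ) 1).exists_cthickening_subset_open hU hcU
  rw [cthickening_closedBall hδ.le (by norm_num)] at hδU
  obtain ⟨p, hp⟩ := hf 0 h0
  have hR0 : 0 < 1 + δ := by linarith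
  set r : ℝ := (1 + δ)⁻¹ with hr
  have hr1 : r < 1 := inv_lt_one_of_one_lt₀ (by linarith)
  have hr0 : 0 ≤ r := by positivity
  -- the Taylor expansion along the line through `x`
  have key : ∀ x ∈ K, HasSum (fun k => p k fun _ => x) (f x) ∧
      ∀ k, ‖p k fun _ => x‖ ≤ (C + 1) * r ^ k := by
    intro x hx
    have hmem : ∀ l ∈ closedBall (0 : ℂ) (1 + δ), l • x ∈ O := fun l hl =>
      hUW (mk_mem_prod (hδU (by rwa [add_comm] at hl)) (hKW hx))
    set u : ℂ →L[ℂ] E := ContinuousLinearMap.toSpanSingleton ℂ x with hu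
    have hux : ∀ l, u l = l • x := fun l => ContinuousLinearMap.toSpanSingleton_apply ℂ x l
    have hφ : ∀ l ∈ closedBall (0 : ℂ) (1 + δ), AnalyticAt ℂ (fun l => f (u l)) l := fun l hl =>
      AnalyticAt.fun_comp (g := f) (f := u) (by rw [hux]; exact (hmem l hl).1) (u.analyticAt l)
    let R : NNReal := ⟨1 + δ, hR0.le⟩
    have hball : HasFPowerSeriesOnBall (fun l => f (u l)) (cauchyPowerSeries (fun l => f (u l)) 0 R) 0 R :=
      DifferentiableOn.hasFPowerSeriesOnBall
        (fun l hl => (hφ l hl).differentiableAt.differentiableWithinAt) hR0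
    have hp' : HasFPowerSeriesAt (fun l => f (u l)) (p.compContinuousLinearMap u) 0 := by
      have := HasFPowerSeriesAt.compContinuousLinearMap (u := u) (f := f) (pf := p) (x := 0)
        (by simpa using hp)
      exact this
    have heq := hball.hasFPowerSeriesAt.eq_formalMultilinearSeries hp'
    have hco : ∀ k, (cauchyPowerSeries (fun l => f (u l)) 0 R k fun _ => (1 : ℂ)) = p k fun _ => x := by
      intro k
      rw [heq, FormalMultilinearSeries.compContinuousLinearMap_apply]
      congr 1
      funext i
      simp [hux]
    constructor
    · have h1 : (1 : ℂ) ∈ Metric.eball (0 : ℂ) R := by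
        rw [Metric.eball_coe, mem_ball_zero_iff, norm_one]
        show (1 : ℝ) < 1 + δ
        linarith
      have := hball.hasSum h1
      simp only [hco] at this
      simpa only [zero_add, hux, one_smul] using this
    · intro k
      rw [← hco k]
      refine (ContinuousMultilinearMap.le_opNorm _ _).trans ?_
      simp only [norm_one, Finset.prod_const_one, mul_one]
      refine (norm_cauchyPowerSeries_le _ _ _ _).trans ?_
      have habs : |(R : ℝ)| = 1 + δ := abs_of_pos hR0
      rw [habs, ← hr]
      refine mul_le_mul_of_nonneg_right ?_ (by positivity)
      have hb : ∀ θ : ℝ, ‖f (u (circleMap 0 R θ))‖ ≤ C + 1 := by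
        intro θ
        have := (hmem (circleMap 0 R θ) (circleMap_mem_closedBall _ hR0.le θ)).2
        rw [mem_preimage, mem_ball_zero_iff] at this
        rw [hux]
        exact this.le
      have hi : ∫ θ in (0 : ℝ)..2 * Real.pi, ‖f (u (circleMap 0 R θ))‖ ≤ (C + 1) * (2 * Real.pi) := by
        have := intervalIntegral.norm_integral_le_of_norm_le_const (a := 0) (b := 2 * Real.pi)
          (f := fun θ => ‖f (u (circleMap 0 R θ))‖) (C := C + 1)
          (fun θ _ => by rw [norm_norm]; exact hb θ)
        rw [sub_zero, abs_of_pos Real.two_pi_pos] at this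
        exact (le_abs_self _).trans this
      rw [inv_mul_le_iff₀ Real.two_pi_pos]
      linarith
  have hlim : Tendsto (fun N : ℕ => (C + 1) * r ^ N / (1 - r)) atTop (𝓝 0) := by
    have := ((tendsto_pow_atTop_nhds_zero_of_lt_one hr0 hr1).const_mul (C + 1)).div_const (1 - r)
    simpa using this
  obtain ⟨N, hN⟩ := (hlim.eventually (gt_mem_nhds hε)).exists
  refine ⟨fun x => ∑ k ∈ Finset.range N, p k fun _ => x, fun y => ?_, fun y hy => ?_⟩
  · refine Finset.analyticAt_fun_sum _ fun k _ => ?_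
    exact AnalyticAt.fun_comp (g := p k) (f := fun x : E => fun _ : Fin k => x)
      ((p k).analyticAt) (analyticAt_pi_iff.2 fun _ => analyticAt_id)
  · rw [norm_sub_rev]
    exact (norm_sub_le_of_geometric_bound_of_hasSum hr1 (key y hy).2 (key y hy).1 N).trans hN.le

end Runge

section Exhaust

open Matrix

theorem PD_mono {n : ℕ} {r r' : ℝ} (h : r ≤ r') : PD n r ⊆ PD n r' := fun _ hz i => (hz i).trans h

/-- One step of the exhaustion: a section of the kernel near a polydisc is approximated by a section
near a larger polydisc. -/
theorem extend_section {n : ℕ} {q p : Type} [Fintype q] [Fintype p] {M : (Fin n → ℂ) → Matrix q p ℂ}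
    {r r' : ℝ} (hr : 0 ≤ r) (hrr : r ≤ r') (hM : ∀ y ∈ PD n r', AnMatAt M y)
    {s : (Fin n → ℂ) → p → ℂ} (hs : ∀ y ∈ PD n r, AnalyticAt ℂ s y ∧ ∀ᶠ z in 𝓝 y, M z *ᵥ s z = 0)
    {ε : ℝ} (hε : 0 < ε) :
    ∃ s' : (Fin n → ℂ) → p → ℂ, (∀ y ∈ PD n r', AnalyticAt ℂ s' y ∧ ∀ᶠ z in 𝓝 y, M z *ᵥ s' z = 0) ∧
      ∀ y ∈ PD n r, ‖s' y - s y‖ ≤ ε := by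
  obtain ⟨m, _, S, hS⟩ := (propAB_PD n r').1 q p M hM
  have hsub : PD n r ⊆ PD n r' := PD_mono hrr
  obtain ⟨e, he⟩ := (propAB_PD n r).2 p m S s (fun y hy => (hS y (hsub hy)).1) (fun y hy => (hs y hy).1)
    fun y hy => (hS y (hsub hy)).2.2 s (hs y hy).1 (hs y hy).2
  obtain ⟨C, hC⟩ := (isCompact_PD n r).exists_bound_of_continuousOn
    (f := fun y => fun i => fun j => S y i j) fun y hy =>
      (continuousAt_pi.2 fun i => continuousAt_pi.2 fun j =>
        ((hS y (hsub hy)).1 i j).continuousAt).continuousWithinAt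
  have h0 : (0 : Fin n → ℂ) ∈ PD n r := fun i => by simpa using hr
  have hC0 : 0 ≤ C := (norm_nonneg _).trans (hC 0 h0)
  obtain ⟨g, hg, hge⟩ := exists_approx (isCompact_PD n r) h0
    (fun l hl x hx i => by
      simp only [Pi.smul_apply, norm_smul]
      exact (mul_le_of_le_one_left (norm_nonneg _) hl).trans (hx i))
    (fun y hy => (he y hy).1) (ε := ε / (Fintype.card m * C + 1)) (by positivity)
  refine ⟨fun z => S z *ᵥ g z, fun y hy => ⟨(hS y hy).1.mulVec (hg y), ?_⟩, fun y hy => ?_⟩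
  · filter_upwards [(hS y hy).2.1] with z hz
    rw [Matrix.mulVec_mulVec, hz, Matrix.zero_mulVec]
  · rw [(he y hy).2.self_of_nhds, ← Matrix.mulVec_sub, pi_norm_le_iff_of_nonneg hε.le]
    intro i
    rw [Matrix.mulVec, dotProduct]
    have hb : ∀ j, ‖S y i j * (g y - e y) j‖ ≤ C * (ε / (Fintype.card m * C + 1)) := by
      intro j
      rw [norm_mul]
      refine mul_le_mul ?_ ?_ (norm_nonneg _) hC0
      · have h1 := hC y hy
        exact (norm_le_pi_norm (fun j => S y i j) j).trans
          ((norm_le_pi_norm (fun i => fun j => S y i j) i).trans h1)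
      · refine (norm_le_pi_norm (g y - e y) j).trans ?_
        rw [norm_sub_rev]; exact hge y hy
    refine (norm_sum_le _ _).trans ((Finset.sum_le_sum fun j _ => hb j).trans ?_)
    rw [Finset.sum_const, nsmul_eq_mul, Finset.card_univ, ← mul_assoc, mul_div_assoc',
      div_le_iff₀ (by positivity)]
    nlinarith

/-- The open unit polydisc. -/
def UD (n : ℕ) : Set (Fin n → ℂ) := {z | ∀ i, ‖z i‖ < 1}

/-- If a germ at `w₀` of the kernel sheaf has nonzero `i₀`-th entry at `w₀`, so does some section on
the whole polydisc: the germ is a combination of generators near a compact polydisc, and freezing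
the coefficients at `w₀` gives a section there, which is approximated successively on larger ones. -/
theorem exists_global_section {n : ℕ} {q p : Type} [Fintype q] [Fintype p]
    {M : (Fin n → ℂ) → Matrix q p ℂ} (hM : ∀ y ∈ UD n, AnMatAt M y) {w₀ : Fin n → ℂ}
    (hw₀ : w₀ ∈ UD n) {c : (Fin n → ℂ) → p → ℂ} (hc : AnalyticAt ℂ c w₀)
    (hMc : ∀ᶠ z in 𝓝 w₀, M z *ᵥ c z = 0) {i₀ : p} (hi₀ : c w₀ i₀ ≠ 0) :
    ∃ s : (Fin n → ℂ) → p → ℂ, (∀ y ∈ UD n, AnalyticAt ℂ s y ∧ M y *ᵥ s y = 0) ∧ s w₀ i₀ ≠ 0 := by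
  have hw1 : ‖w₀‖ < 1 := (pi_norm_lt_iff one_pos).2 hw₀
  -- radii increasing to `1`, the first of which captures `w₀`
  set ρ : ℕ → ℝ := fun k => 1 - (1 - ‖w₀‖) / (k + 1) with hρ
  have hρ0 : ρ 0 = ‖w₀‖ := by simp [hρ]
  have hρm : Monotone ρ := by
    intro a b hab
    simp only [hρ]
    have : (a : ℝ) ≤ b := by exact_mod_cast hab
    have h2 : 0 ≤ 1 - ‖w₀‖ := by linarith
    gcongr
  have hρnn : ∀ k, 0 ≤ ρ k := fun k => (norm_nonneg w₀).trans (hρ0 ▸ hρm (Nat.zero_le k))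
  have hρ1 : ∀ k, ρ k < 1 := fun k => by
    have : 0 < (1 - ‖w₀‖) / ((k : ℝ) + 1) := div_pos (by linarith) (by positivity)
    simp only [hρ]; linarith
  have hρlim : Tendsto ρ atTop (𝓝 1) := by
    have : Tendsto (fun k : ℕ => (1 - ‖w₀‖) / ((k : ℝ) + 1)) atTop (𝓝 0) :=
      tendsto_const_nhds.div_atTop (tendsto_atTop_add_const_right _ _ tendsto_natCast_atTop_atTop)
    simpa [hρ] using this.const_sub 1
  have hMk : ∀ k, ∀ y ∈ PD n (ρ k), AnMatAt M y := fun k y hy =>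
    hM y fun i => (hy i).trans_lt (hρ1 k)
  have hw₀K : w₀ ∈ PD n (ρ 0) := fun i => by rw [hρ0]; exact norm_le_pi_norm w₀ i
  -- the initial section
  obtain ⟨s0, hs0, hs0w⟩ : ∃ s0 : (Fin n → ℂ) → p → ℂ, (∀ y ∈ PD n (ρ 0), AnalyticAt ℂ s0 y ∧
      ∀ᶠ z in 𝓝 y, M z *ᵥ s0 z = 0) ∧ s0 w₀ = c w₀ := by
    obtain ⟨m, _, S, hS⟩ := (propAB_PD n (ρ 0)).1 q p M (hMk 0)
    obtain ⟨e, -, hce⟩ := (hS w₀ hw₀K).2.2 c hc hMc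
    refine ⟨fun z => S z *ᵥ e w₀, fun y hy => ⟨(hS y hy).1.mulVec analyticAt_const, ?_⟩,
      hce.self_of_nhds.symm⟩
    filter_upwards [(hS y hy).2.1] with z hz
    rw [Matrix.mulVec_mulVec, hz, Matrix.zero_mulVec]
  set η : ℝ := ‖c w₀ i₀‖ / 4 with hη
  have hη0 : 0 < η := div_pos (norm_pos_iff.2 hi₀) (by norm_num)
  let T : ℕ → Type := fun k => {s : (Fin n → ℂ) → p → ℂ // ∀ y ∈ PD n (ρ k), AnalyticAt ℂ s y ∧
      ∀ᶠ z in 𝓝 y, M z *ᵥ s z = 0}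
  have hstep : ∀ k (s : T k), ∃ s' : T (k + 1), ∀ y ∈ PD n (ρ k),
      ‖s'.1 y - s.1 y‖ ≤ η * (1 / 2) ^ k := by
    intro k s
    obtain ⟨s', h1, h2⟩ := extend_section (hρnn k) (hρm k.le_succ) (hMk (k + 1)) s.2
      (ε := η * (1 / 2) ^ k) (by positivity)
    exact ⟨⟨s', h1⟩, h2⟩
  choose nxt hnxt using hstep
  let σ : (k : ℕ) → T k := fun k => Nat.rec ⟨s0, hs0⟩ (fun k s => nxt k s) k
  obtain ⟨τ, hτdef⟩ : ∃ τ : ℕ → (Fin n → ℂ) → p → ℂ, ∀ k, τ k = (σ k).1 := ⟨_, fun _ => rfl⟩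
  have hσ : ∀ k, ∀ y ∈ PD n (ρ k), ‖τ (k + 1) y - τ k y‖ ≤ η * (1 / 2) ^ k :=
    fun k => by rw [hτdef, hτdef]; exact hnxt k (σ k)
  have hτ : ∀ k, ∀ y ∈ PD n (ρ k), AnalyticAt ℂ (τ k) y ∧ ∀ᶠ z in 𝓝 y, M z *ᵥ τ k z = 0 :=
    fun k => by rw [hτdef]; exact (σ k).2
  have hτ0 : τ 0 = s0 := hτdef 0
  have hsum : Summable fun k : ℕ => η * (1 / 2 : ℝ) ^ k :=
    (summable_geometric_of_lt_one (by norm_num) (by norm_num)).mul_left η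
  -- the telescoping series from index `j` on
  set D : ℕ → p → ℕ → (Fin n → ℂ) → ℂ :=
    fun j i l z => τ (j + l + 1) z i - τ (j + l) z i with hD
  have hDb : ∀ j i l, ∀ z ∈ PD n (ρ j), ‖D j i l z‖ ≤ η * (1 / 2) ^ (j + l) := by
    intro j i l z hz
    exact (norm_le_pi_norm (τ (j + l + 1) z - τ (j + l) z) i).trans
      (hσ (j + l) z (PD_mono (hρm (Nat.le_add_right j l)) hz))
  have hsumj : ∀ j, Summable fun l : ℕ => η * (1 / 2 : ℝ) ^ (j + l) := fun j => by
    simpa only [add_comm] using (summable_nat_add_iff (f := fun k : ℕ => η * (1 / 2 : ℝ) ^ k) j).2 hsum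
  have hpart : ∀ j i z N, ∑ l ∈ Finset.range N, D j i l z = τ (j + N) z i - τ j z i := by
    intro j i z N
    induction N with
    | zero => simp
    | succ N ih => rw [Finset.sum_range_succ, ih]; simp only [hD, ← add_assoc]; ring
  have hlim : ∀ j i, ∀ z ∈ PD n (ρ j), Tendsto (fun k => τ k z i) atTop
      (𝓝 (τ j z i + ∑' l, D j i l z)) := by
    intro j i z hz
    have h1 : Summable fun l => D j i l z :=
      Summable.of_norm_bounded (hsumj j) fun l => hDb j i l z hz
    have h2 := h1.hasSum.tendsto_sum_nat.const_add (τ j z i)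
    simp only [hpart, add_sub_cancel] at h2
    rw [← tendsto_add_atTop_iff_nat j]
    simpa only [add_comm] using h2
  set s : (Fin n → ℂ) → p → ℂ := fun z i => limUnder atTop fun k => τ k z i with hs
  have hseq : ∀ j i, ∀ z ∈ PD n (ρ j), s z i = τ j z i + ∑' l, D j i l z := fun j i z hz =>
    (hlim j i z hz).limUnder_eq
  have hex : ∀ y ∈ UD n, ∃ j, ∀ i, ‖y i‖ < ρ j := by
    intro y hy
    obtain ⟨j, hj⟩ := (hρlim.eventually (lt_mem_nhds ((pi_norm_lt_iff one_pos).2 hy))).exists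
    exact ⟨j, fun i => (norm_le_pi_norm y i).trans_lt hj⟩
  refine ⟨s, fun y hy => ?_, ?_⟩
  · obtain ⟨j, hj⟩ := hex y hy
    set U : Set (Fin n → ℂ) := {z | ∀ i, ‖z i‖ < ρ j} with hU
    have hUo : IsOpen U := by
      simp only [hU, setOf_forall]
      exact isOpen_iInter_of_finite fun i => isOpen_lt (by fun_prop) continuous_const
    have hUK : U ⊆ PD n (ρ j) := fun z hz i => (hz i).le
    have hyU : y ∈ U := hj
    have han : ∀ k, ∀ z ∈ PD n (ρ k), ∀ i, AnalyticAt ℂ (fun z => τ k z i) z := fun k z hz i =>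
      analyticAt_pi_iff.1 (hτ k z hz).1 i
    have hmem : ∀ l, PD n (ρ j) ⊆ PD n (ρ (j + l)) := fun l => PD_mono (hρm (Nat.le_add_right j l))
    constructor
    · rw [analyticAt_pi_iff]
      intro i
      have h1 : AnalyticOnNhd ℂ (fun z => ∑' l, D j i l z) U :=
        analyticOnNhd_tsum hUo (fun l z hz =>
          (han (j + l + 1) z (hmem (l + 1) (hUK hz)) i).sub (han (j + l) z (hmem l (hUK hz)) i))
          (hsumj j) fun l z hz => hDb j i l z (hUK hz)
      refine ((han j y (hUK hyU) i).add (h1 y hyU)).congr ?_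
      filter_upwards [hUo.mem_nhds hyU] with z hz
      exact (hseq j i z (hUK hz)).symm
    · have h1 : Tendsto (fun k => M y *ᵥ τ k y) atTop (𝓝 (M y *ᵥ s y)) := by
        have h2 : Tendsto (fun k => τ k y) atTop (𝓝 (s y)) := tendsto_pi_nhds.2 fun i => by
          rw [hseq j i y (hUK hyU)]; exact hlim j i y (hUK hyU)
        exact ((Continuous.matrix_mulVec continuous_const continuous_id).tendsto (s y)).comp h2
      refine tendsto_nhds_unique h1 (tendsto_const_nhds.congr' ?_)
      filter_upwards [eventually_ge_atTop j] with k hk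
      exact (hτ k y (PD_mono (hρm hk) (hUK hyU))).2.self_of_nhds.symm
  · intro h0
    have h1 := hseq 0 i₀ w₀ hw₀K
    have h2 : τ 0 w₀ i₀ = c w₀ i₀ := by rw [hτ0, hs0w]
    have h3 : ‖∑' l, D 0 i₀ l w₀‖ ≤ 2 * η := by
      refine tsum_of_norm_bounded (f := fun l => D 0 i₀ l w₀) (g := fun l => η * (1 / 2 : ℝ) ^ l) ?_ fun l => ?_
      · have := (hasSum_geometric_of_lt_one (r := (1 / 2 : ℝ)) (by norm_num) (by norm_num)).mul_left η
        rwa [show (1 - 1 / 2 : ℝ)⁻¹ = 2 by norm_num, mul_comm] at this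
      · simpa using hDb 0 i₀ l w₀ hw₀K
    rw [h0, h2] at h1
    have h4 : ‖c w₀ i₀‖ = ‖∑' l, D 0 i₀ l w₀‖ := by
      rw [← norm_neg, neg_eq_of_add_eq_zero_right h1.symm]
    rw [← h4] at h3
    linarith [norm_pos_iff.2 hi₀]

end Exhaust

/-! ### A slowly decaying radial factor -/

/-- Scales growing at least geometrically and fast enough compared with the prescribed widths `d k`. -/
lemma exists_scale (d : ℕ → ℝ) (hd : ∀ k, 0 < d k) :
    ∃ Λ : ℕ → ℝ, 1 ≤ Λ 0 ∧ (∀ k, 2 * Λ k ≤ Λ (k + 1)) ∧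
      ∀ k : ℕ, 3 * (2 * (k : ℝ) + 4) < Λ k * d k := by
  let C : ℕ → ℝ := fun k => (3 * (2 * (k : ℝ) + 4) + 1) / d k
  let Λ : ℕ → ℝ := fun k => Nat.rec (max 1 (C 0)) (fun k l => max (2 * l) (C (k + 1))) k
  have hC : ∀ k, C k ≤ Λ k := by
    intro k
    cases k with
    | zero => exact le_max_right _ _
    | succ k => exact le_max_right _ _
  refine ⟨Λ, le_max_left _ _, fun k => le_max_left _ _, fun k => ?_⟩
  have h1 : C k * d k = 3 * (2 * (k : ℝ) + 4) + 1 := div_mul_cancel₀ _ (hd k).ne'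
  have h2 := mul_le_mul_of_nonneg_right (hC k) (hd k).le
  linarith

lemma scale_ge {Λ : ℕ → ℝ} (h0 : 1 ≤ Λ 0) (h2 : ∀ k, 2 * Λ k ≤ Λ (k + 1)) (N k : ℕ) :
    1 ≤ Λ N ∧ 2 ^ k * Λ N ≤ Λ (N + k) := by
  constructor
  · induction N with
    | zero => exact h0
    | succ N ih => linarith [h2 N]
  · induction k with
    | zero => simp
    | succ k ih => rw [pow_succ, ← add_assoc]; linarith [h2 (N + k)]

lemma scale_inv_le {Λ : ℕ → ℝ} (h0 : 1 ≤ Λ 0) (h2 : ∀ k, 2 * Λ k ≤ Λ (k + 1)) (N k : ℕ) :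
    (Λ (k + N))⁻¹ ≤ (Λ N)⁻¹ * (1 / 2) ^ k := by
  obtain ⟨h, h'⟩ := scale_ge h0 h2 N k
  rw [one_div, inv_pow, ← mul_inv, mul_comm (Λ N), add_comm]
  exact inv_anti₀ (by positivity) h'

lemma summable_scale_inv {Λ : ℕ → ℝ} (h0 : 1 ≤ Λ 0) (h2 : ∀ k, 2 * Λ k ≤ Λ (k + 1)) :
    Summable fun k => (Λ k)⁻¹ := by
  refine Summable.of_nonneg_of_le (fun k => ?_) (fun k => ?_)
    ((summable_geometric_two).mul_left (Λ 0)⁻¹)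
  · have := (scale_ge h0 h2 k 0).1
    positivity
  · simpa using scale_inv_le h0 h2 0 k

/-- If `β k` is bounded both by `1 / Λ k` and by `2 / (t + 1)`, splitting the sum at the first `N` with
`t + 1 < Λ N` bounds it by about `2 N / (t + 1)` plus a geometric tail. -/
lemma tsum_scale_bound {Λ : ℕ → ℝ} (h0 : 1 ≤ Λ 0) (h2 : ∀ k, 2 * Λ k ≤ Λ (k + 1))
    {β : ℕ → ℝ} {t : ℝ} (ht : 0 ≤ t) (hβ0 : ∀ k, 0 ≤ β k) (hβ : ∀ k, β k ≤ (Λ k)⁻¹)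
    (hβt : ∀ k, (t + 1) * β k ≤ 2) :
    ∃ M : ℕ, (∑' k, β k) * Λ M ≤ 2 * (M : ℝ) + 4 ∧ (t + 1) * (∑' k, β k) ≤ 2 * (M : ℝ) + 4 := by
  have hs : Summable β := (summable_scale_inv h0 h2).of_nonneg_of_le hβ0 hβ
  have hex : ∃ N, t + 1 < Λ N := by
    obtain ⟨N, hN⟩ := pow_unbounded_of_one_lt (t + 1) (one_lt_two)
    refine ⟨N, hN.trans_le ?_⟩
    have := (scale_ge h0 h2 0 N).2
    rw [zero_add] at this
    have h3 : (0:ℝ) < 2 ^ N := by positivity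
    nlinarith
  classical
  have htail : ∀ N, ∑' k, β (k + N) ≤ 2 * (Λ N)⁻¹ := by
    intro N
    have h1 : Summable fun k => β (k + N) := (summable_nat_add_iff N).2 hs
    have h3 : ∑' k, β (k + N) ≤ ∑' k, (Λ N)⁻¹ * (1 / 2 : ℝ) ^ k :=
      h1.tsum_le_tsum (fun k => (hβ _).trans (scale_inv_le h0 h2 N k))
        (summable_geometric_two.mul_left _)
    rw [tsum_mul_left, tsum_geometric_two] at h3
    linarith
  have key : ∀ N, t + 1 < Λ N → (t + 1) * (∑' k, β k) ≤ 2 * N + 2 := by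
    intro N hN
    rw [← hs.sum_add_tsum_nat_add N, mul_add, Finset.mul_sum]
    have h1 : ∑ i ∈ Finset.range N, (t + 1) * β i ≤ ∑ i ∈ Finset.range N, 2 :=
      Finset.sum_le_sum fun i _ => hβt i
    have h3 : (t + 1) * ∑' k, β (k + N) ≤ Λ N * (2 * (Λ N)⁻¹) :=
      mul_le_mul hN.le (htail N) (tsum_nonneg fun _ => hβ0 _) (by linarith)
    have h4 : Λ N * (2 * (Λ N)⁻¹) = 2 := by
      have : Λ N ≠ 0 := by linarith
      field_simp
    simp at h1
    linarith
  have hN := Nat.find_spec hex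
  have hmin := fun m => Nat.find_min hex (m := m)
  have hk := key _ hN
  generalize Nat.find hex = N at hN hmin hk
  cases N with
  | zero =>
    refine ⟨0, ?_, ?_⟩
    · have h1 := htail 0
      simp only [add_zero] at h1
      have h3 : 2 * (Λ 0)⁻¹ * Λ 0 = 2 := by
        have : Λ 0 ≠ 0 := by linarith
        field_simp
      have h4 := mul_le_mul_of_nonneg_right h1 (by linarith : 0 ≤ Λ 0)
      norm_num
      linarith
    · norm_num at hk ⊢
      linarith
  | succ M =>
    have hM := hmin M (Nat.lt_succ_self M)
    push Not at hM
    push_cast at hk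
    refine ⟨M, ?_, by linarith⟩
    have h5 : Λ M * (∑' k, β k) ≤ (t + 1) * (∑' k, β k) :=
      mul_le_mul_of_nonneg_right hM (tsum_nonneg hβ0)
    linarith

/-- The branch `z ^ (-1/2)` on the right half-plane. -/
noncomputable def invSqrt (z : ℂ) : ℂ := z ^ (-(1 / 2) : ℂ)

lemma invSqrt_sq {z : ℂ} (hz : 0 < z.re) : invSqrt z ^ 2 = z⁻¹ := by
  have h0 : z ≠ 0 := by rintro rfl; simp at hz
  rw [invSqrt, ← Complex.cpow_nat_mul, ← Complex.cpow_neg_one]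
  norm_num

lemma invSqrt_norm_sq {z : ℂ} (hz : 0 < z.re) : ‖invSqrt z‖ ^ 2 = ‖z‖⁻¹ := by
  rw [← norm_pow, invSqrt_sq hz, norm_inv]

lemma invSqrt_ofReal {x : ℝ} (hx : 0 < x) : invSqrt (x : ℂ) = ((Real.sqrt x)⁻¹ : ℝ) := by
  rw [invSqrt, Real.sqrt_eq_rpow, ← Real.rpow_neg hx.le, Complex.ofReal_cpow hx.le]
  norm_num

lemma analyticAt_invSqrt {z : ℂ} (hz : 0 < z.re) : AnalyticAt ℂ invSqrt z := by
  have : AnalyticAt ℂ (fun z : ℂ => z ^ (-(1 / 2) : ℂ)) z :=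
    analyticAt_id.cpow analyticAt_const (Or.inl hz)
  exact this

lemma invSqrt_im_bound {z : ℂ} (hz : 0 < z.re) :
    |(invSqrt z).im| ≤ |z.im| * ‖invSqrt z‖ ^ 3 := by
  have hsq := invSqrt_sq hz
  have hn := invSqrt_norm_sq hz
  set b := invSqrt z
  have hzn : 0 < ‖z‖ := hz.trans_le ((le_abs_self _).trans (Complex.abs_re_le_norm z))
  have hb : 0 < ‖b‖ := by
    have : 0 < ‖b‖ ^ 2 := by rw [hn]; positivity
    rcases (norm_nonneg b).lt_or_eq with h | h
    · exact h
    · rw [← h] at this; simp at this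
  have h1 : 2 * b.re * b.im = - z.im * ‖b‖ ^ 4 := by
    have := congrArg Complex.im hsq
    rw [sq, Complex.mul_im, Complex.inv_im, Complex.normSq_eq_norm_sq] at this
    have h4 : ‖b‖ ^ 4 = (‖z‖ ^ 2)⁻¹ := by
      rw [← inv_pow, ← hn]; ring
    rw [h4, ← div_eq_mul_inv]; linarith
  have h2 : 0 < b.re ^ 2 - b.im ^ 2 := by
    have := congrArg Complex.re hsq
    rw [sq, Complex.mul_re, Complex.inv_re, Complex.normSq_eq_norm_sq] at this
    have : b.re ^ 2 - b.im ^ 2 = z.re / ‖z‖ ^ 2 := by linarith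
    rw [this]; positivity
  have h3 : ‖b‖ ^ 2 = b.re ^ 2 + b.im ^ 2 := by
    rw [← Complex.normSq_eq_norm_sq, Complex.normSq_apply]; ring
  have h4 : ‖b‖ ≤ 2 * |b.re| := by
    refine abs_le_of_sq_le_sq' ?_ (by positivity) |>.2
    rw [mul_pow, sq_abs]; nlinarith
  have h5 : ‖b‖ * |b.im| ≤ |z.im| * ‖b‖ ^ 4 := by
    have h6 : |2 * b.re * b.im| = |z.im| * ‖b‖ ^ 4 := by
      rw [h1, abs_mul, abs_neg, abs_of_nonneg (by positivity : 0 ≤ ‖b‖ ^ 4)]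
    rw [← h6, abs_mul, abs_mul, abs_two]
    exact mul_le_mul_of_nonneg_right h4 (abs_nonneg _)
  have : ‖b‖ * |b.im| ≤ ‖b‖ * (|z.im| * ‖b‖ ^ 3) := by linarith
  exact le_of_mul_le_mul_left this hb

/-- Bounds on one summand of the radial factor at a point of the strip `|Im w| < 1` whose real part has
norm `t`. The bound for the imaginary part of `w j * b` gains a factor of order `t + 1` over that for its
modulus. -/
lemma term_bounds {n : ℕ} {w : Fin n → ℂ} (hy : ∑ j, (w j).im ^ 2 < 1) {l : ℝ} (hl : 1 ≤ l)
    {t : ℝ} (ht : 0 ≤ t) (htw : t ^ 2 = ∑ j, (w j).re ^ 2) {b : ℂ}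
    (hb : b = invSqrt ((∑ j, w j ^ 2) + ((l ^ 2 + 1 : ℝ) : ℂ))) :
    ‖b‖ ≤ l⁻¹ ∧ (t + 1) * ‖b‖ ≤ 2 ∧ ∀ j, ‖w j * b‖ ≤ (t + 1) * ‖b‖ ∧
      |(w j * b).im| ≤ 3 * ‖b‖ := by
  set z := (∑ j, w j ^ 2) + ((l ^ 2 + 1 : ℝ) : ℂ) with hz
  have hre : z.re = t ^ 2 - ∑ j, (w j).im ^ 2 + (l ^ 2 + 1) := by
    rw [hz, htw, ← Finset.sum_sub_distrib, Complex.add_re, Complex.re_sum, Complex.ofReal_re]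
    congr 1
    exact Finset.sum_congr rfl fun j _ => by rw [sq, Complex.mul_re]; ring
  have him : z.im = 2 * ∑ j, (w j).re * (w j).im := by
    rw [hz, Finset.mul_sum, Complex.add_im, Complex.im_sum, Complex.ofReal_im, add_zero]
    exact Finset.sum_congr rfl fun j _ => by rw [sq, Complex.mul_im]; ring
  have hzre : t ^ 2 + l ^ 2 < z.re := by rw [hre]; linarith
  have hzpos : 0 < z.re := lt_of_le_of_lt (by positivity) hzre
  have hzim : |z.im| ≤ 2 * t := by
    rw [him, abs_mul, abs_two]
    have h1 : (∑ j, (w j).re * (w j).im) ^ 2 ≤ t ^ 2 := by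
      have := Finset.sum_mul_sq_le_sq_mul_sq Finset.univ (fun j => (w j).re) (fun j => (w j).im)
      rw [← htw] at this
      refine this.trans ?_
      have := sq_nonneg t
      nlinarith
    have := abs_le_of_sq_le_sq h1 ht
    linarith
  have hbn := invSqrt_norm_sq hzpos
  have hbi := invSqrt_im_bound hzpos
  rw [← hb] at hbn hbi
  have hzn : t ^ 2 + l ^ 2 < ‖z‖ := hzre.trans_le ((le_abs_self _).trans (Complex.abs_re_le_norm z))
  have hb0 := norm_nonneg b
  have hb2 : ‖b‖ ^ 2 * (t ^ 2 + l ^ 2) ≤ 1 := by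
    rw [hbn, inv_mul_le_one₀ (lt_of_le_of_lt (by positivity) hzn)]
    exact hzn.le
  have hb1 : ‖b‖ ≤ l⁻¹ := by
    rw [← one_div, le_div_iff₀ (by linarith)]
    refine abs_le_of_sq_le_sq' ?_ zero_le_one |>.2
    nlinarith [mul_nonneg (sq_nonneg ‖b‖) (sq_nonneg t)]
  have htb : ‖b‖ ^ 2 * t ^ 2 ≤ 1 := by
    nlinarith [mul_nonneg (sq_nonneg ‖b‖) (sq_nonneg l)]
  have hlb : ‖b‖ ^ 2 ≤ ‖b‖ ^ 2 * l ^ 2 := by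
    have : 1 ≤ l ^ 2 := one_le_pow₀ hl
    nlinarith [sq_nonneg ‖b‖]
  refine ⟨hb1, ?_, fun j => ?_⟩
  · refine abs_le_of_sq_le_sq' ?_ zero_le_two |>.2
    have h1 : (t + 1) ^ 2 ≤ 2 * (t ^ 2 + 1) := by nlinarith [sq_nonneg (t - 1)]
    have h2 := mul_le_mul_of_nonneg_right h1 (sq_nonneg ‖b‖)
    rw [mul_pow]
    nlinarith
  · have hx : |(w j).re| ≤ t := by
      refine abs_le_of_sq_le_sq ?_ ht
      rw [htw]
      exact Finset.single_le_sum (f := fun j => (w j).re ^ 2) (fun i _ => sq_nonneg _)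
        (Finset.mem_univ j)
    have hyj : |(w j).im| ≤ 1 := by
      refine abs_le_of_sq_le_sq ?_ zero_le_one
      refine le_trans ?_ (hy.le.trans (by norm_num))
      exact Finset.single_le_sum (f := fun j => (w j).im ^ 2) (fun i _ => sq_nonneg _)
        (Finset.mem_univ j)
    constructor
    · rw [norm_mul]
      refine mul_le_mul_of_nonneg_right ?_ hb0
      exact (Complex.norm_le_abs_re_add_abs_im _).trans (by linarith)
    · rw [Complex.mul_im]
      have h1 : |(w j).re * b.im| ≤ t * (2 * t * ‖b‖ ^ 3) := by
        rw [abs_mul]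
        refine mul_le_mul hx (hbi.trans ?_) (abs_nonneg _) ht
        exact mul_le_mul_of_nonneg_right hzim (by positivity)
      have h2 : |(w j).im * b.re| ≤ 1 * ‖b‖ := by
        rw [abs_mul]
        exact mul_le_mul hyj (Complex.abs_re_le_norm b) (abs_nonneg _) zero_le_one
      have h3 : t * (2 * t * ‖b‖ ^ 3) ≤ 2 * ‖b‖ := by
        have := mul_le_mul_of_nonneg_right htb hb0
        nlinarith
      have := abs_add_le ((w j).re * b.im) ((w j).im * b.re)
      linarith

/-- The slowly decaying radial factor `∑ₖ (u + Λₖ² + 1)^(-1/2)`. -/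
noncomputable def radial (Λ : ℕ → ℝ) (u : ℂ) : ℂ :=
  ∑' k, invSqrt (u + ((Λ k ^ 2 + 1 : ℝ) : ℂ))

lemma radial_term_norm_le {l : ℝ} (hl : 1 ≤ l) {u : ℂ} (hu : -1 < u.re) :
    ‖invSqrt (u + ((l ^ 2 + 1 : ℝ) : ℂ))‖ ≤ l⁻¹ := by
  have hre : l ^ 2 < (u + ((l ^ 2 + 1 : ℝ) : ℂ)).re := by
    rw [Complex.add_re, Complex.ofReal_re]; linarith
  have hpos := lt_of_le_of_lt (sq_nonneg l) hre
  have hn : l ^ 2 ≤ ‖u + ((l ^ 2 + 1 : ℝ) : ℂ)‖ :=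
    hre.le.trans ((le_abs_self _).trans (Complex.abs_re_le_norm _))
  refine abs_le_of_sq_le_sq' ?_ (by positivity) |>.2
  rw [invSqrt_norm_sq hpos, inv_pow]
  exact inv_anti₀ (by positivity) hn

lemma analyticOnNhd_radial {Λ : ℕ → ℝ} (h0 : 1 ≤ Λ 0) (h2 : ∀ k, 2 * Λ k ≤ Λ (k + 1)) :
    AnalyticOnNhd ℂ (radial Λ) {u | -1 < u.re} := by
  have hΛ : ∀ k, 1 ≤ Λ k := fun k => (scale_ge h0 h2 k 0).1
  refine analyticOnNhd_tsum (isOpen_lt continuous_const Complex.continuous_re) (fun k u hu => ?_)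
    (summable_scale_inv h0 h2) (fun k u hu => radial_term_norm_le (hΛ k) hu)
  refine AnalyticAt.comp' (analyticAt_invSqrt ?_) (analyticAt_id.add analyticAt_const)
  rw [mem_setOf_eq] at hu
  simp only [id, Complex.add_re, Complex.ofReal_re]
  nlinarith [sq_nonneg (Λ k)]

lemma summable_radial {Λ : ℕ → ℝ} (h0 : 1 ≤ Λ 0) (h2 : ∀ k, 2 * Λ k ≤ Λ (k + 1))
    {u : ℂ} (hu : -1 < u.re) : Summable fun k => invSqrt (u + ((Λ k ^ 2 + 1 : ℝ) : ℂ)) :=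
  Summable.of_norm_bounded (summable_scale_inv h0 h2)
    fun k => radial_term_norm_le (scale_ge h0 h2 k 0).1 hu

/-- The map `w ↦ w · radial Λ (∑ wᵢ²)` sends the strip into a neighbourhood of the real points with
the prescribed widths `d`. -/
lemma radial_strip {n : ℕ} {Λ : ℕ → ℝ} (h0 : 1 ≤ Λ 0) (h2 : ∀ k, 2 * Λ k ≤ Λ (k + 1))
    {d : ℕ → ℝ} (hd : ∀ k, 0 < d k) (hΛ : ∀ k : ℕ, 3 * (2 * (k : ℝ) + 4) < Λ k * d k)
    {w : Fin n → ℂ} (hy : ∑ j, (w j).im ^ 2 < 1) :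
    ∃ M : ℕ, ∀ j, |(w j * radial Λ (∑ i, w i ^ 2)).re| ≤ 2 * (M : ℝ) + 4 ∧
      |(w j * radial Λ (∑ i, w i ^ 2)).im| < d M := by
  obtain ⟨t, ht, htw⟩ : ∃ t : ℝ, 0 ≤ t ∧ t ^ 2 = ∑ j, (w j).re ^ 2 :=
    ⟨Real.sqrt (∑ j, (w j).re ^ 2), Real.sqrt_nonneg _,
      Real.sq_sqrt (Finset.sum_nonneg fun i _ => sq_nonneg _)⟩
  have hu : -1 < (∑ i, w i ^ 2).re := by
    have : (∑ i, w i ^ 2).re = t ^ 2 - ∑ j, (w j).im ^ 2 := by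
      rw [htw, ← Finset.sum_sub_distrib, Complex.re_sum]
      exact Finset.sum_congr rfl fun j _ => by rw [sq, Complex.mul_re]; ring
    rw [this]; nlinarith [sq_nonneg t]
  set u := ∑ i, w i ^ 2
  have hT := fun k => term_bounds (l := Λ k) hy (scale_ge h0 h2 k 0).1 ht htw rfl
  obtain ⟨M, hM1, hM2⟩ := tsum_scale_bound h0 h2 ht (fun k => norm_nonneg _)
    (fun k => (hT k).1) (fun k => (hT k).2.1)
  have hs := summable_radial h0 h2 hu
  have hsn : Summable fun k => ‖invSqrt (u + ((Λ k ^ 2 + 1 : ℝ) : ℂ))‖ :=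
    (summable_scale_inv h0 h2).of_nonneg_of_le (fun _ => norm_nonneg _) (fun k => (hT k).1)
  refine ⟨M, fun j => ?_⟩
  have hrw : w j * radial Λ u = ∑' k, w j * invSqrt (u + ((Λ k ^ 2 + 1 : ℝ) : ℂ)) :=
    (tsum_mul_left).symm
  have hs' := hs.mul_left (w j)
  constructor
  · refine (Complex.abs_re_le_norm _).trans (le_trans ?_ hM2)
    rw [hrw, ← tsum_mul_left]
    exact tsum_of_norm_bounded (hsn.mul_left _).hasSum fun k => ((hT k).2.2 j).1
  · have h3 : |(w j * radial Λ u).im| ≤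
        3 * ∑' k, ‖invSqrt (u + ((Λ k ^ 2 + 1 : ℝ) : ℂ))‖ := by
      rw [hrw, Complex.im_tsum hs', ← tsum_mul_left, ← Real.norm_eq_abs]
      exact tsum_of_norm_bounded (hsn.mul_left _).hasSum fun k => ((hT k).2.2 j).2
    have hΛM := (scale_ge h0 h2 M 0).1
    refine h3.trans_lt ?_
    have : Λ M * (3 * ∑' k, ‖invSqrt (u + ((Λ k ^ 2 + 1 : ℝ) : ℂ))‖) < Λ M * d M := by
      have := hΛ M
      have : 0 < (M:ℝ) + 1 := by positivity
      linarith
    exact lt_of_mul_lt_mul_left this (by linarith)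

/-! ### Real-analytic inversion of the radial map -/

/-- The real-analytic implicit function theorem in one variable. -/
lemma analytic_implicit {f : ℝ × ℝ → ℝ} {s₀ A₀ D : ℝ} (hf : AnalyticAt ℝ f (s₀, A₀))
    (hD : HasDerivAt (fun A => f (s₀, A)) D A₀) (hD0 : D ≠ 0) :
    ∃ φ : ℝ → ℝ, AnalyticAt ℝ φ s₀ ∧ φ s₀ = A₀ ∧ ∀ᶠ s in 𝓝 s₀, f (s, φ s) = f (s₀, A₀) := by
  have cdf : ContDiffAt ℝ (⊤ : WithTop ℕ∞) f (s₀, A₀) := hf.contDiffAt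
  have h1 : HasDerivAt (fun A => f (s₀, A)) (fderiv ℝ f (s₀, A₀) (0, 1)) A₀ := by
    have h2 := hf.differentiableAt.hasFDerivAt
    have h3 : HasDerivAt (fun A : ℝ => (s₀, A)) ((0 : ℝ), (1 : ℝ)) A₀ :=
      (hasDerivAt_const _ _).prodMk (hasDerivAt_id _)
    exact h2.comp_hasDerivAt A₀ h3
  have hDe := h1.unique hD
  have hinv : (fderiv ℝ f (s₀, A₀) ∘L .inr ℝ ℝ ℝ).IsInvertible := by
    refine ⟨ContinuousLinearEquiv.unitsEquivAut ℝ (Units.mk0 D hD0), ?_⟩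
    ext
    simp [hDe]
  have pn : (⊤ : WithTop ℕ∞) ≠ 0 := by simp
  exact ⟨cdf.implicitFunction pn hinv, (cdf.contDiffAt_implicitFunction pn hinv).analyticAt,
    cdf.implicitFunction_apply_self pn hinv, cdf.eventually_apply_implicitFunction pn hinv⟩

lemma re_radial_analyticAt {Λ : ℕ → ℝ} (h0 : 1 ≤ Λ 0) (h2 : ∀ k, 2 * Λ k ≤ Λ (k + 1))
    {s : ℝ} (hs : 0 ≤ s) : AnalyticAt ℝ (fun s : ℝ => (radial Λ (s : ℂ)).re) s := by
  have h1 : AnalyticAt ℝ (radial Λ) (s : ℂ) :=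
    (analyticOnNhd_radial h0 h2 _ (by simp only [mem_setOf_eq, Complex.ofReal_re]; linarith)).restrictScalars
  exact (Complex.reCLM.analyticAt _).comp' (h1.comp' (Complex.ofRealCLM.analyticAt s))

lemma radial_ofReal {Λ : ℕ → ℝ} {s : ℝ} (hs : 0 ≤ s) :
    radial Λ (s : ℂ) = ((∑' k, (Real.sqrt (s + (Λ k ^ 2 + 1)))⁻¹ : ℝ) : ℂ) := by
  rw [radial, Complex.ofReal_tsum]
  refine tsum_congr fun k => ?_
  rw [← Complex.ofReal_add, invSqrt_ofReal (by positivity)]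

lemma summable_radial_real {Λ : ℕ → ℝ} (h0 : 1 ≤ Λ 0) (h2 : ∀ k, 2 * Λ k ≤ Λ (k + 1))
    {s : ℝ} (hs : 0 ≤ s) : Summable fun k => (Real.sqrt (s + (Λ k ^ 2 + 1)))⁻¹ := by
  have h := summable_radial h0 h2 (u := (s : ℂ)) (by rw [Complex.ofReal_re]; linarith)
  rw [← Complex.summable_ofReal]
  refine h.congr fun k => ?_
  rw [← Complex.ofReal_add, invSqrt_ofReal (by positivity)]

lemma sqrt_term_lt {s L A B : ℝ} (hs : 0 ≤ s) (hL : 0 < L) (hA : 0 ≤ A) (hAB : A < B) :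
    A * (Real.sqrt (s * A ^ 2 + L))⁻¹ < B * (Real.sqrt (s * B ^ 2 + L))⁻¹ := by
  rw [← div_eq_mul_inv, ← div_eq_mul_inv, div_lt_div_iff₀ (by positivity) (by positivity)]
  have hB : 0 < B := hA.trans_lt hAB
  refine lt_of_pow_lt_pow_left₀ 2 (by positivity) ?_
  rw [mul_pow, mul_pow, Real.sq_sqrt (by positivity), Real.sq_sqrt (by positivity)]
  have : A ^ 2 < B ^ 2 := pow_lt_pow_left₀ hAB hA two_ne_zero
  nlinarith

lemma sqrt_term_le {s L A B : ℝ} (hs : 0 ≤ s) (hL : 0 < L) (hA : 0 ≤ A) (hAB : A ≤ B) :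
    A * (Real.sqrt (s * A ^ 2 + L))⁻¹ ≤ B * (Real.sqrt (s * B ^ 2 + L))⁻¹ := by
  rcases hAB.lt_or_eq with h | h
  · exact (sqrt_term_lt hs hL hA h).le
  · rw [h]

lemma sqrt_term_deriv {s L A : ℝ} (hs : 0 ≤ s) (hL : 0 < L) :
    ∃ D, 0 < D ∧ HasDerivAt (fun A => A * (Real.sqrt (s * A ^ 2 + L))⁻¹) D A := by
  have hp : 0 < s * A ^ 2 + L := by positivity
  have h1 : HasDerivAt (fun A => s * A ^ 2 + L) (s * (2 * A)) A := by
    simpa using ((hasDerivAt_pow 2 A).const_mul s).add_const L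
  have h3 := (hasDerivAt_id A).mul ((h1.sqrt hp.ne').inv (Real.sqrt_pos.2 hp).ne')
  refine ⟨_, ?_, h3⟩
  set r := Real.sqrt (s * A ^ 2 + L) with hr
  have hr0 : 0 < r := Real.sqrt_pos.2 hp
  have hr2 : r ^ 2 = s * A ^ 2 + L := Real.sq_sqrt hp.le
  have : 1 * r⁻¹ + id A * (-(s * (2 * A) / (2 * r)) / r ^ 2) = L / r ^ 3 := by
    simp only [id]
    field_simp
    rw [hr2]; ring
  refine lt_of_lt_of_eq ?_ this.symm
  positivity

/-- The function `A ↦ A v(s A²)` with `v = radial Λ`. For `s = ∑ xⱼ²`, the value `1` means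
that `A x` is mapped to `x` by `w ↦ w · v(∑ wⱼ²)`. -/
noncomputable def radEq (Λ : ℕ → ℝ) (s A : ℝ) : ℝ := A * (radial Λ ((s * A ^ 2 : ℝ) : ℂ)).re

lemma radEq_hasSum {Λ : ℕ → ℝ} (h0 : 1 ≤ Λ 0) (h2 : ∀ k, 2 * Λ k ≤ Λ (k + 1)) {s : ℝ}
    (hs : 0 ≤ s) (A : ℝ) :
    HasSum (fun k => A * (Real.sqrt (s * A ^ 2 + (Λ k ^ 2 + 1)))⁻¹) (radEq Λ s A) := by
  have hsA : 0 ≤ s * A ^ 2 := by positivity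
  rw [radEq, radial_ofReal hsA, Complex.ofReal_re]
  exact (summable_radial_real h0 h2 hsA).hasSum.mul_left A

lemma radEq_strictMono {Λ : ℕ → ℝ} (h0 : 1 ≤ Λ 0) (h2 : ∀ k, 2 * Λ k ≤ Λ (k + 1)) {s : ℝ}
    (hs : 0 ≤ s) {A B : ℝ} (hA : 0 ≤ A) (hAB : A < B) : radEq Λ s A < radEq Λ s B :=
  hasSum_lt (i := 0)
    (fun k => (sqrt_term_lt hs (by positivity : 0 < Λ k ^ 2 + 1) hA hAB).le)
    (sqrt_term_lt hs (by positivity : 0 < Λ 0 ^ 2 + 1) hA hAB)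
    (radEq_hasSum h0 h2 hs A) (radEq_hasSum h0 h2 hs B)

lemma radEq_analyticAt {Λ : ℕ → ℝ} (h0 : 1 ≤ Λ 0) (h2 : ∀ k, 2 * Λ k ≤ Λ (k + 1)) {s : ℝ}
    (hs : 0 ≤ s) (A : ℝ) : AnalyticAt ℝ (fun p : ℝ × ℝ => radEq Λ p.1 p.2) (s, A) := by
  have h1 : AnalyticAt ℝ (fun p : ℝ × ℝ => p.1 * p.2 ^ 2) (s, A) :=
    analyticAt_fst.mul (analyticAt_snd.pow 2)
  have h3 := AnalyticAt.fun_comp (g := fun s : ℝ => (radial Λ (s : ℂ)).re)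
    (f := fun p : ℝ × ℝ => p.1 * p.2 ^ 2) (x := (s, A))
    (re_radial_analyticAt h0 h2 (by positivity)) h1
  exact analyticAt_snd.mul h3

lemma radEq_hasDerivAt {Λ : ℕ → ℝ} (h0 : 1 ≤ Λ 0) (h2 : ∀ k, 2 * Λ k ≤ Λ (k + 1)) {s : ℝ}
    (hs : 0 ≤ s) {A : ℝ} (hA : 0 < A) : ∃ D, D ≠ 0 ∧ HasDerivAt (radEq Λ s) D A := by
  have hd : DifferentiableAt ℝ (radEq Λ s) A := by
    have h1 := (radEq_analyticAt h0 h2 hs A).differentiableAt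
    exact h1.comp A ((differentiableAt_const s).prodMk differentiableAt_id)
  obtain ⟨D, hD, hD'⟩ := sqrt_term_deriv (A := A) hs (by positivity : 0 < Λ 0 ^ 2 + 1)
  refine ⟨_, ?_, hd.hasDerivAt⟩
  have h3 := hd.hasDerivAt.sub hD'
  have hmono : MonotoneOn (radEq Λ s - fun A => A * (Real.sqrt (s * A ^ 2 + (Λ 0 ^ 2 + 1)))⁻¹)
      (Ioi 0) := by
    intro a ha b hb hab
    have ha' := ((hasSum_nat_add_iff' 1).2 (radEq_hasSum h0 h2 hs a))
    have hb' := ((hasSum_nat_add_iff' 1).2 (radEq_hasSum h0 h2 hs b))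
    have := hasSum_le (fun k => sqrt_term_le hs (by positivity) (le_of_lt ha) hab) ha' hb'
    simpa using this
  have hacc : AccPt A (𝓟 (Ioi 0)) := by
    have : Ioi (0:ℝ) ∈ 𝓝 A := Ioi_mem_nhds hA
    have h4 : ∀ᶠ y in 𝓝[≠] A, y ∈ Ioi (0:ℝ) := mem_nhdsWithin_of_mem_nhds this
    exact accPt_iff_frequently_nhdsNE.2 h4.frequently
  have := h3.hasDerivWithinAt.nonneg_of_monotoneOn hacc hmono
  linarith

lemma exists_radEq_eq_one {Λ : ℕ → ℝ} (h0 : 1 ≤ Λ 0) (h2 : ∀ k, 2 * Λ k ≤ Λ (k + 1)) {s : ℝ}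
    (hs : 0 ≤ s) : ∃ A, 0 < A ∧ radEq Λ s A = 1 := by
  have hc : Continuous (radEq Λ s) := by
    rw [continuous_iff_continuousAt]
    intro A
    have h1 := (radEq_analyticAt h0 h2 hs A).continuousAt
    exact ContinuousAt.comp (f := fun A : ℝ => (s, A)) h1 (by fun_prop)
  have hz : radEq Λ s 0 = 0 := by simp [radEq]
  obtain ⟨N, hN⟩ := exists_nat_ge (Real.sqrt (s + 1))
  set B : ℝ := ∑ k ∈ Finset.range N, (Λ k ^ 2 + 1) + 1 with hB
  have hB1 : 1 ≤ B := by
    have : 0 ≤ ∑ k ∈ Finset.range N, (Λ k ^ 2 + 1) := Finset.sum_nonneg fun _ _ => by positivity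
    linarith
  have hr : 0 < Real.sqrt (s + 1) := Real.sqrt_pos.2 (by linarith)
  have hBig : 1 ≤ radEq Λ s B := by
    have h3 := sum_le_hasSum (Finset.range N) (fun k _ => by positivity) (radEq_hasSum h0 h2 hs B)
    refine le_trans ?_ h3
    have h4 : ∑ k ∈ Finset.range N, (Real.sqrt (s + 1))⁻¹ ≤
        ∑ k ∈ Finset.range N, B * (Real.sqrt (s * B ^ 2 + (Λ k ^ 2 + 1)))⁻¹ := by
      refine Finset.sum_le_sum fun k hk => ?_
      have h5 : Λ k ^ 2 + 1 ≤ B ^ 2 := by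
        have : Λ k ^ 2 + 1 ≤ ∑ k ∈ Finset.range N, (Λ k ^ 2 + 1) :=
          Finset.single_le_sum (f := fun k => Λ k ^ 2 + 1) (fun _ _ => by positivity) hk
        nlinarith
      rw [← div_eq_mul_inv, ← one_div, div_le_div_iff₀ hr (by positivity)]
      rw [one_mul]
      refine (Real.sqrt_le_sqrt (y := (s + 1) * B ^ 2) (by linarith)).trans ?_
      rw [Real.sqrt_mul (by linarith), Real.sqrt_sq (by linarith), mul_comm]
    refine le_trans ?_ h4
    rw [Finset.sum_const, Finset.card_range, nsmul_eq_mul, ← div_eq_mul_inv, le_div_iff₀ hr]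
    linarith
  obtain ⟨A, hA, hA1⟩ := intermediate_value_Icc (by linarith : (0:ℝ) ≤ B) hc.continuousOn
    (⟨by rw [hz]; exact zero_le_one, hBig⟩ : (1:ℝ) ∈ Icc _ _)
  refine ⟨A, lt_of_le_of_ne hA.1 ?_, hA1⟩
  rintro rfl
  rw [hz] at hA1
  exact zero_ne_one hA1

/-- A scalar factor `A` such that `x ↦ A(x) x` is a right inverse of `w ↦ w · radial Λ (∑ wᵢ²)`. It
depends only on `∑ xⱼ²` and solves `radEq Λ (∑ xⱼ²) A = 1`. -/
lemma exists_radial_inverse {n : ℕ} {Λ : ℕ → ℝ} (h0 : 1 ≤ Λ 0) (h2 : ∀ k, 2 * Λ k ≤ Λ (k + 1)) :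
    ∃ A : (Fin n → ℝ) → ℝ, ∀ x, AnalyticAt ℝ A x ∧
      (A x : ℂ) * radial Λ (∑ j, ((A x * x j : ℝ) : ℂ) ^ 2) = 1 := by
  choose! α hα0 hα using fun s : ℝ => fun hs : 0 ≤ s => exists_radEq_eq_one h0 h2 hs
  have hq : ∀ x : Fin n → ℝ, 0 ≤ ∑ j, x j ^ 2 := fun x => Finset.sum_nonneg fun _ _ => sq_nonneg _
  refine ⟨fun x => α (∑ j, x j ^ 2), fun x => ⟨?_, ?_⟩⟩
  · set s := ∑ j, x j ^ 2 with hs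
    obtain ⟨D, hD0, hD⟩ := radEq_hasDerivAt h0 h2 (hq x) (hα0 _ (hq x))
    obtain ⟨φ, hφ, hφ0, hφe⟩ := analytic_implicit (radEq_analyticAt h0 h2 (hq x) _) hD hD0
    have hqa : AnalyticAt ℝ (fun x : Fin n → ℝ => ∑ j, x j ^ 2) x :=
      Finset.analyticAt_fun_sum _ fun j _ =>
        ((ContinuousLinearMap.proj (R := ℝ) (φ := fun _ : Fin n => ℝ) j).analyticAt x).pow 2
    have h3 : AnalyticAt ℝ (fun x : Fin n → ℝ => φ (∑ j, x j ^ 2)) x :=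
      AnalyticAt.fun_comp (g := φ) hφ hqa
    refine h3.congr ?_
    have hpos : ∀ᶠ s' in 𝓝 s, 0 < φ s' :=
      hφ.continuousAt.eventually (lt_mem_nhds (by rw [hφ0]; exact hα0 _ (hq x)))
    filter_upwards [hqa.continuousAt.eventually (hφe.and hpos)] with y hy
    obtain ⟨hy1, hy2⟩ := hy
    replace hy1 := hy1.trans (hα _ (hq x))
    by_contra hne
    rcases lt_or_gt_of_ne hne with h | h
    · have := radEq_strictMono h0 h2 (hq y) hy2.le h
      rw [hy1, hα _ (hq y)] at this
      exact lt_irrefl _ this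
    · have := radEq_strictMono h0 h2 (hq y) (hα0 _ (hq y)).le h
      rw [hy1, hα _ (hq y)] at this
      exact lt_irrefl _ this
  · have h3 := hα _ (hq x)
    set a := α (∑ j, x j ^ 2)
    have h4 : ∑ j, ((a * x j : ℝ) : ℂ) ^ 2 = (((∑ j, x j ^ 2) * a ^ 2 : ℝ) : ℂ) := by
      rw [Finset.sum_mul, Complex.ofReal_sum]
      exact Finset.sum_congr rfl fun j _ => by push_cast; ring
    rw [radEq, radial_ofReal (mul_nonneg (hq x) (sq_nonneg _)), Complex.ofReal_re] at h3
    show (a : ℂ) * radial Λ (∑ j, ((a * x j : ℝ) : ℂ) ^ 2) = 1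
    rw [h4, radial_ofReal (mul_nonneg (hq x) (sq_nonneg _)), ← Complex.ofReal_mul, h3,
      Complex.ofReal_one]

/-! ### Holomorphic maps of the polydisc into a neighbourhood of the real points -/

/-- A neighbourhood of the real points contains a tube of positive width over each bounded box. -/
lemma exists_tube {n : ℕ} {O : Set (Fin n → ℂ)} (hO : IsOpen O)
    (hreal : ∀ x : Fin n → ℝ, (fun j => (x j : ℂ)) ∈ O) (R : ℝ) :
    ∃ δ > 0, ∀ z : Fin n → ℂ, (∀ j, |(z j).re| ≤ R) → (∀ j, |(z j).im| < δ) → z ∈ O := by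
  have hc : Continuous fun (x : Fin n → ℝ) (j : Fin n) => (x j : ℂ) := by fun_prop
  have hK : IsCompact ((fun (x : Fin n → ℝ) (j : Fin n) => (x j : ℂ)) ''
      (Set.pi univ fun _ => Icc (-R) R)) :=
    (isCompact_univ_pi fun _ => isCompact_Icc).image hc
  obtain ⟨δ, hδ, hsub⟩ := hK.exists_thickening_subset_open hO
    (by rintro _ ⟨x, -, rfl⟩; exact hreal x)
  refine ⟨δ, hδ, fun z hre him => hsub ?_⟩
  rw [mem_thickening_iff]
  refine ⟨_, ⟨fun j => (z j).re, fun j _ => abs_le.1 (hre j), rfl⟩, ?_⟩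
  rw [dist_pi_lt_iff hδ]
  intro j
  rw [dist_eq_norm]
  have : z j - ((z j).re : ℂ) = (z j).im * Complex.I := by
    rw [sub_eq_iff_eq_add']
    exact (Complex.re_add_im (z j)).symm
  rw [this, norm_mul, Complex.norm_I, mul_one, Complex.norm_real]
  exact him j

/-- The conformal map `κ (log (1 + ξ) - log (1 - ξ))` of the unit disc onto a horizontal strip. -/
noncomputable def stripMap (κ : ℝ) (ξ : ℂ) : ℂ :=
  κ * (Complex.log (1 + ξ) - Complex.log (1 - ξ))

lemma re_one_add_pos {ξ : ℂ} (h : ‖ξ‖ < 1) : 0 < (1 + ξ).re := by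
  have := (abs_lt.1 ((Complex.abs_re_le_norm ξ).trans_lt h)).1
  rw [Complex.add_re, Complex.one_re]; linarith

lemma re_one_sub_pos {ξ : ℂ} (h : ‖ξ‖ < 1) : 0 < (1 - ξ).re := by
  have := (abs_lt.1 ((Complex.abs_re_le_norm ξ).trans_lt h)).2
  rw [Complex.sub_re, Complex.one_re]; linarith

lemma stripMap_analyticAt (κ : ℝ) {ξ : ℂ} (h : ‖ξ‖ < 1) : AnalyticAt ℂ (stripMap κ) ξ := by
  have h1 : AnalyticAt ℂ (fun ξ : ℂ => Complex.log (1 + ξ)) ξ :=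
    (analyticAt_const.add analyticAt_id).clog (Or.inl (re_one_add_pos h))
  have h2 : AnalyticAt ℂ (fun ξ : ℂ => Complex.log (1 - ξ)) ξ :=
    (analyticAt_const.sub analyticAt_id).clog (Or.inl (re_one_sub_pos h))
  exact analyticAt_const.mul (h1.sub h2)

lemma stripMap_im {κ : ℝ} (hκ : 0 < κ) {ξ : ℂ} (h : ‖ξ‖ < 1) :
    |(stripMap κ ξ).im| ≤ κ * Real.pi := by
  have h1 := Complex.abs_arg_lt_pi_div_two_iff.2 (Or.inl (re_one_add_pos h))
  have h2 := Complex.abs_arg_lt_pi_div_two_iff.2 (Or.inl (re_one_sub_pos h))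
  rw [stripMap, Complex.im_ofReal_mul, Complex.sub_im, Complex.log_im, Complex.log_im, abs_mul,
    abs_of_pos hκ]
  refine mul_le_mul_of_nonneg_left ?_ hκ.le
  refine (abs_sub _ _).trans ?_
  linarith

/-- The real inverse of `stripMap`. -/
noncomputable def stripInv (κ s : ℝ) : ℝ := (Real.exp (s / κ) - 1) / (Real.exp (s / κ) + 1)

lemma abs_stripInv_lt (κ s : ℝ) : |stripInv κ s| < 1 := by
  have := Real.exp_pos (s / κ)
  rw [stripInv, abs_lt, lt_div_iff₀ (by linarith), div_lt_iff₀ (by linarith)]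
  constructor <;> linarith

lemma stripMap_stripInv {κ : ℝ} (hκ : κ ≠ 0) (s : ℝ) : stripMap κ (stripInv κ s : ℝ) = s := by
  have hE := Real.exp_pos (s / κ)
  have h1 : 1 + stripInv κ s = 2 * Real.exp (s / κ) / (Real.exp (s / κ) + 1) := by
    rw [stripInv]; field_simp; ring
  have h2 : 1 - stripInv κ s = 2 / (Real.exp (s / κ) + 1) := by
    rw [stripInv]; field_simp; ring
  have h := abs_lt.1 (abs_stripInv_lt κ s)
  have h3 : Real.log (1 + stripInv κ s) - Real.log (1 - stripInv κ s) = s / κ := by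
    rw [← Real.log_div (by linarith) (by linarith), h1, h2]
    rw [show 2 * Real.exp (s / κ) / (Real.exp (s / κ) + 1) / (2 / (Real.exp (s / κ) + 1))
      = Real.exp (s / κ) by field_simp]
    exact Real.log_exp _
  rw [stripMap, ← Complex.ofReal_one, ← Complex.ofReal_add, ← Complex.ofReal_sub,
    ← Complex.ofReal_log (by linarith), ← Complex.ofReal_log (by linarith), ← Complex.ofReal_sub,
    h3, ← Complex.ofReal_mul, mul_div_cancel₀ _ hκ]

lemma stripInv_analyticAt (κ s : ℝ) : AnalyticAt ℝ (stripInv κ) s := by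
  have h1 : AnalyticAt ℝ (fun s : ℝ => Real.exp (s / κ)) s :=
    AnalyticAt.rexp (analyticAt_id.div_const)
  have := Real.exp_pos (s / κ)
  exact (h1.sub analyticAt_const).div (h1.add analyticAt_const) (by positivity)

/-- For a neighbourhood `O` of the real points, a holomorphic map `Ψ` of the open unit polydisc into
`O` with a real-analytic right inverse `θ` over the real points. -/
theorem straighten {n : ℕ} {O : Set (Fin n → ℂ)} (hO : IsOpen O)
    (hreal : ∀ x : Fin n → ℝ, (fun j => (x j : ℂ)) ∈ O) :
    ∃ (Ψ : (Fin n → ℂ) → Fin n → ℂ) (θ : (Fin n → ℝ) → Fin n → ℂ),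
      (∀ ξ ∈ UD n, AnalyticAt ℂ Ψ ξ ∧ Ψ ξ ∈ O) ∧
      ∀ x, AnalyticAt ℝ θ x ∧ θ x ∈ UD n ∧ Ψ (θ x) = fun j => (x j : ℂ) := by
  choose d hd hdO using fun k : ℕ => exists_tube hO hreal (2 * (k : ℝ) + 4)
  obtain ⟨Λ, h0, h2, hΛ⟩ := exists_scale d hd
  obtain ⟨A, hA⟩ := exists_radial_inverse (n := n) h0 h2
  obtain ⟨κ, hκ, hκn⟩ : ∃ κ : ℝ, 0 < κ ∧ (n : ℝ) * (κ * Real.pi) ^ 2 < 1 := by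
    refine ⟨1 / (4 * (n + 1)), by positivity, ?_⟩
    have h1 : 1 / (4 * ((n:ℝ) + 1)) * Real.pi ≤ 1 / (n + 1) := by
      rw [div_mul_eq_mul_div, div_le_div_iff₀ (by positivity) (by positivity)]
      have := Real.pi_le_four
      nlinarith [(by positivity : (0:ℝ) ≤ n + 1)]
    have h3 : (1 / (4 * ((n:ℝ) + 1)) * Real.pi) ^ 2 ≤ (1 / (n + 1)) ^ 2 :=
      pow_le_pow_left₀ (by positivity) h1 2
    refine (mul_le_mul_of_nonneg_left h3 (by positivity)).trans_lt ?_
    rw [div_pow, one_pow, mul_one_div, div_lt_one (by positivity)]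
    nlinarith [(by positivity : (0:ℝ) ≤ n)]
  have hIm : ∀ ξ ∈ UD n, ∑ j, (stripMap κ (ξ j)).im ^ 2 < 1 := by
    intro ξ hξ
    refine lt_of_le_of_lt ?_ hκn
    have : ∑ j : Fin n, (stripMap κ (ξ j)).im ^ 2 ≤ ∑ j : Fin n, (κ * Real.pi) ^ 2 :=
      Finset.sum_le_sum fun j _ => sq_le_sq' (abs_le.1 (stripMap_im hκ (hξ j))).1
        (abs_le.1 (stripMap_im hκ (hξ j))).2
    simpa using this
  refine ⟨fun ξ j => stripMap κ (ξ j) * radial Λ (∑ i, stripMap κ (ξ i) ^ 2),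
    fun x j => (stripInv κ (A x * x j) : ℝ), fun ξ hξ => ⟨?_, ?_⟩, fun x => ⟨?_, ?_, ?_⟩⟩
  · have hS : ∀ j, AnalyticAt ℂ (fun ξ : Fin n → ℂ => stripMap κ (ξ j)) ξ := fun j =>
      AnalyticAt.fun_comp (g := stripMap κ) (f := fun ξ : Fin n → ℂ => ξ j)
        (stripMap_analyticAt κ (hξ j))
        ((ContinuousLinearMap.proj (R := ℂ) (φ := fun _ : Fin n => ℂ) j).analyticAt ξ)
    have hsum : AnalyticAt ℂ (fun ξ : Fin n → ℂ => ∑ i, stripMap κ (ξ i) ^ 2) ξ :=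
      Finset.analyticAt_fun_sum _ fun j _ => (hS j).pow 2
    have hre : (∑ i, stripMap κ (ξ i) ^ 2) ∈ {u : ℂ | -1 < u.re} := by
      have : (∑ i, stripMap κ (ξ i) ^ 2).re =
          ∑ i, (stripMap κ (ξ i)).re ^ 2 - ∑ i, (stripMap κ (ξ i)).im ^ 2 := by
        rw [← Finset.sum_sub_distrib, Complex.re_sum]
        exact Finset.sum_congr rfl fun j _ => by rw [sq, Complex.mul_re]; ring
      have h3 : 0 ≤ ∑ i, (stripMap κ (ξ i)).re ^ 2 := Finset.sum_nonneg fun _ _ => sq_nonneg _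
      rw [mem_setOf_eq, this]
      linarith [hIm ξ hξ]
    refine analyticAt_pi_iff.2 fun j => (hS j).mul ?_
    exact AnalyticAt.fun_comp (g := radial Λ) (analyticOnNhd_radial h0 h2 _ hre) hsum
  · obtain ⟨M, hM⟩ := radial_strip h0 h2 hd hΛ (hIm ξ hξ)
    exact hdO M _ (fun j => (hM j).1) (fun j => (hM j).2)
  · refine analyticAt_pi_iff.2 fun j => ?_
    have h3 : AnalyticAt ℝ (fun x : Fin n → ℝ => A x * x j) x := (hA x).1.mul
      ((ContinuousLinearMap.proj (R := ℝ) (φ := fun _ : Fin n => ℝ) j).analyticAt x)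
    have h4 := AnalyticAt.fun_comp (g := stripInv κ) (stripInv_analyticAt κ _) h3
    exact (Complex.ofRealCLM.analyticAt _).comp' h4
  · intro j
    rw [Complex.norm_real]
    exact abs_stripInv_lt _ _
  · funext j
    simp only [stripMap_stripInv hκ.ne']
    have := (hA x).2
    rw [Complex.ofReal_mul, mul_right_comm, this, one_mul]

/-! ### Complexification of real-analytic functions -/

/-- A real point regarded as a point of `ℂⁿ`. -/
abbrev realPt {n : ℕ} (x : Fin n → ℝ) : Fin n → ℂ := fun j => (x j : ℂ)

/-- The power series of `f` at `x₀`, evaluated at complex arguments. The radius shrinks by a factor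
`2 (n + 1)` because the multilinear coefficients are expanded in coordinates. -/
lemma exists_local_extension {n : ℕ} {f : (Fin n → ℝ) → ℝ} {x₀ : Fin n → ℝ}
    (hf : AnalyticAt ℝ f x₀) :
    ∃ r > 0, ∃ G : (Fin n → ℂ) → ℂ, AnalyticOnNhd ℂ G (ball (realPt x₀) r) ∧
      ∀ x : Fin n → ℝ, realPt x ∈ ball (realPt x₀) r → G (realPt x) = f x := by
  obtain ⟨p, R, hp⟩ := hf
  obtain ⟨ρ, hρ0, hρ⟩ := ENNReal.lt_iff_exists_nnreal_btwn.1 hp.r_pos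
  have hρpos : 0 < (ρ : ℝ) := by exact_mod_cast hρ0
  obtain ⟨C, hC, hpC⟩ := p.norm_mul_pow_le_of_lt_radius (hρ.trans_le hp.r_le)
  set r : ℝ := ρ / (2 * (n + 1)) with hr
  have hr0 : 0 < r := by positivity
  have hrρ : r ≤ ρ := by
    rw [hr]; exact div_le_self hρpos.le (by have : (0:ℝ) ≤ n := by positivity
                                            linarith)
  have hnr : (n : ℝ) * r ≤ ρ * (1 / 2) := by
    rw [hr, mul_div_assoc', div_le_iff₀ (by positivity)]
    nlinarith
  let a : (k : ℕ) → (Fin k → Fin n) → ℝ := fun k v => p k fun i => Pi.single (v i) 1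
  have ha : ∀ k v, |a k v| ≤ ‖p k‖ := by
    intro k v
    have := (p k).le_opNorm fun i => (Pi.single (v i) 1 : Fin n → ℝ)
    simpa [Pi.norm_single] using this
  let P : ℕ → (Fin n → ℂ) → ℂ := fun k z => ∑ v : Fin k → Fin n, (a k v : ℂ) * ∏ i, (z (v i) - x₀ (v i))
  have hP : ∀ k z, AnalyticAt ℂ (P k) z := by
    intro k z
    refine Finset.analyticAt_fun_sum _ fun v _ => analyticAt_const.mul ?_
    refine Finset.analyticAt_fun_prod _ fun i _ => AnalyticAt.sub ?_ analyticAt_const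
    exact (ContinuousLinearMap.proj (R := ℂ) (φ := fun _ : Fin n => ℂ) (v i)).analyticAt z
  have hPb : ∀ k, ∀ z ∈ ball (realPt x₀) r, ‖P k z‖ ≤ C * (1 / 2) ^ k := by
    intro k z hz
    have h1 : ∀ v : Fin k → Fin n, ‖(a k v : ℂ) * ∏ i, (z (v i) - x₀ (v i))‖ ≤ ‖p k‖ * r ^ k := by
      intro v
      rw [norm_mul, Complex.norm_real, norm_prod]
      refine mul_le_mul (ha k v) ?_ (Finset.prod_nonneg fun _ _ => norm_nonneg _) (norm_nonneg _)
      refine (Finset.prod_le_prod (fun _ _ => norm_nonneg _) (g := fun _ => r) fun i _ => ?_).trans ?_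
      · have h2 := norm_le_pi_norm (z - realPt x₀) (v i)
        rw [mem_ball, dist_eq_norm] at hz
        exact h2.trans hz.le
      · simp
    refine (norm_sum_le_of_le _ fun v _ => h1 v).trans ?_
    rw [Finset.sum_const, Finset.card_univ, Fintype.card_fun, Fintype.card_fin, Fintype.card_fin,
      nsmul_eq_mul, Nat.cast_pow]
    calc (n : ℝ) ^ k * (‖p k‖ * r ^ k) = ‖p k‖ * (n * r) ^ k := by rw [mul_pow]; ring
      _ ≤ ‖p k‖ * (ρ * (1 / 2)) ^ k := by gcongr
      _ = ‖p k‖ * ρ ^ k * (1 / 2) ^ k := by rw [mul_pow]; ring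
      _ ≤ C * (1 / 2) ^ k := by gcongr; exact hpC k
  refine ⟨r, hr0, fun z => ∑' k, P k z, ?_, ?_⟩
  · exact analyticOnNhd_tsum isOpen_ball (fun k z _ => hP k z) (summable_geometric_two.mul_left C) hPb
  · intro x hx
    have hxr : ‖x - x₀‖ < r := by
      rw [mem_ball, dist_pi_lt_iff hr0] at hx
      rw [← dist_eq_norm, dist_pi_lt_iff hr0]
      intro j
      have := hx j
      rwa [Complex.dist_of_im_eq (by simp), Complex.ofReal_re, Complex.ofReal_re] at this
    have hmem : x - x₀ ∈ Metric.eball (0 : Fin n → ℝ) R := by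
      rw [Metric.mem_eball, edist_zero_right]
      refine lt_trans ?_ hρ
      rw [enorm_lt_coe]
      exact_mod_cast hxr.trans_le hrρ
    have hs := hp.hasSum hmem
    rw [add_sub_cancel] at hs
    have hPk : ∀ k, P k (realPt x) = ((p k fun _ => x - x₀ : ℝ) : ℂ) := by
      intro k
      have h1 : (fun _ : Fin k => x - x₀) =
          fun i : Fin k => ∑ j : Fin n, (x j - x₀ j) • (Pi.single j (1:ℝ) : Fin n → ℝ) := by
        funext i l
        simp [Finset.sum_apply, Pi.single_apply]
      have h2 : (p k fun _ => x - x₀) =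
          ∑ v : Fin k → Fin n, (∏ i, (x (v i) - x₀ (v i))) * a k v := by
        rw [h1]
        rw [← ContinuousMultilinearMap.coe_coe, MultilinearMap.map_sum]
        refine Finset.sum_congr rfl fun v _ => ?_
        rw [MultilinearMap.map_smul_univ]
        rfl
      rw [h2, Complex.ofReal_sum]
      refine Finset.sum_congr rfl fun v _ => ?_
      push_cast
      ring
    show ∑' k, P k (realPt x) = f x
    simp_rw [hPk]
    rw [← Complex.ofReal_tsum, hs.tsum_eq]

/-- Identity theorem: a holomorphic function vanishing at the real points of `U` vanishes, by applying
the one-variable identity theorem to `t ↦ G (Re z + t Im z)`. -/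
lemma eq_zero_of_real {n : ℕ} {U : Set (Fin n → ℂ)} (hU : IsOpen U) (hconv : Convex ℝ U)
    (hre : ∀ z ∈ U, realPt (fun j => (z j).re) ∈ U) {G : (Fin n → ℂ) → ℂ}
    (hG : AnalyticOnNhd ℂ G U) (h0 : ∀ x : Fin n → ℝ, realPt x ∈ U → G (realPt x) = 0) :
    ∀ z ∈ U, G z = 0 := by
  intro z hz
  let x := realPt fun j => (z j).re
  let y := realPt fun j => (z j).im
  let ℓ : ℂ → Fin n → ℂ := fun c => x + c • y
  have hℓc : Continuous ℓ := by fun_prop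
  have hW : IsOpen (ℓ ⁻¹' U) := hU.preimage hℓc
  have hWc : Convex ℝ (ℓ ⁻¹' U) := by
    intro c hc c' hc' s t hs ht hst
    have h1 : ℓ (s • c + t • c') = s • ℓ c + t • ℓ c' := by
      funext j
      simp only [ℓ, Pi.add_apply, Pi.smul_apply, smul_eq_mul, Complex.real_smul]
      have : (s : ℂ) + t = 1 := by exact_mod_cast hst
      linear_combination (-(x j)) * this
    show ℓ (s • c + t • c') ∈ U
    rw [h1]
    exact hconv hc hc' hs ht hst
  have h0W : (0 : ℂ) ∈ ℓ ⁻¹' U := by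
    show x + (0:ℂ) • y ∈ U
    rw [zero_smul, add_zero]; exact hre z hz
  have hz' : ℓ Complex.I = z := by
    funext j
    simp only [ℓ, x, y, realPt, Pi.add_apply, Pi.smul_apply, smul_eq_mul]
    rw [mul_comm]; exact Complex.re_add_im (z j)
  have hIW : Complex.I ∈ ℓ ⁻¹' U := by show ℓ Complex.I ∈ U; rwa [hz']
  have hg : AnalyticOnNhd ℂ (G ∘ ℓ) (ℓ ⁻¹' U) := by
    intro c hc
    refine AnalyticAt.comp (hG _ hc) ?_
    exact analyticAt_const.add (analyticAt_id.smul analyticAt_const)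
  have hfreq : ∃ᶠ c in 𝓝[≠] (0:ℂ), (G ∘ ℓ) c = 0 := by
    have hev : ∀ᶠ c : ℝ in 𝓝[≠] (0:ℝ), (G ∘ ℓ) (c : ℂ) = 0 := by
      have h1 : ∀ᶠ c : ℝ in 𝓝 (0:ℝ), ℓ (c : ℂ) ∈ U := by
        have : ContinuousAt (fun c : ℝ => (c : ℂ)) 0 := Complex.continuous_ofReal.continuousAt
        refine this.eventually (p := fun y => ℓ y ∈ U) ?_
        simp only [Complex.ofReal_zero]
        exact hW.mem_nhds h0W
      filter_upwards [h1.filter_mono nhdsWithin_le_nhds] with c hc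
      have : ℓ c = realPt fun j => (z j).re + c * (z j).im := by
        funext j
        simp [ℓ, x, y, realPt]
      rw [Function.comp_apply, this]
      exact h0 _ (this ▸ hc)
    have htend : Tendsto (fun c : ℝ => (c : ℂ)) (𝓝[≠] 0) (𝓝[≠] 0) := by
      refine tendsto_nhdsWithin_iff.2 ⟨?_, ?_⟩
      · have : Tendsto (fun c : ℝ => (c : ℂ)) (𝓝 0) (𝓝 ((0:ℝ):ℂ)) :=
          Complex.continuous_ofReal.continuousAt
        rw [Complex.ofReal_zero] at this
        exact this.mono_left nhdsWithin_le_nhds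
      · filter_upwards [self_mem_nhdsWithin] with c hc
        simpa using hc
    exact htend.frequently hev.frequently
  have := hg.eqOn_zero_of_preconnected_of_frequently_eq_zero hWc.isPreconnected h0W hfreq hIW
  simpa [hz'] using this

lemma re_mem_ball {n : ℕ} {x : Fin n → ℝ} {r : ℝ} {z : Fin n → ℂ} (hz : z ∈ ball (realPt x) r) :
    realPt (fun j => (z j).re) ∈ ball (realPt x) r := by
  have hr : 0 < r := dist_nonneg.trans_lt hz
  rw [mem_ball, dist_pi_lt_iff hr] at hz ⊢
  intro j
  refine lt_of_le_of_lt ?_ (hz j)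
  rw [dist_eq_norm, dist_eq_norm, ← Complex.ofReal_sub, Complex.norm_real, Real.norm_eq_abs]
  have := Complex.abs_re_le_norm (z j - x j)
  simpa using this

/-- The local extensions on balls centred at real points agree on overlaps, since the intersection of
two such balls is convex and stable under taking real parts. -/
theorem exists_complexification {n : ℕ} {f : (Fin n → ℝ) → ℝ} (hf : ∀ x, AnalyticAt ℝ f x) :
    ∃ F : (Fin n → ℂ) → ℂ, ∀ x, AnalyticAt ℂ F (realPt x) ∧ F (realPt x) = f x := by
  choose r hr G hG hGf using fun x => exists_local_extension (hf x)
  classical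
  let F : (Fin n → ℂ) → ℂ := fun z =>
    if h : ∃ x, z ∈ ball (realPt x) (r x) then G h.choose z else 0
  have hF : ∀ x, ∀ z ∈ ball (realPt x) (r x), F z = G x z := by
    intro x z hz
    have h : ∃ x, z ∈ ball (realPt x) (r x) := ⟨x, hz⟩
    have hFz : F z = G h.choose z := dif_pos h
    rw [hFz]
    have hx' := h.choose_spec
    generalize h.choose = x' at hx'
    have := eq_zero_of_real (U := ball (realPt x') (r x') ∩ ball (realPt x) (r x))
      (isOpen_ball.inter isOpen_ball) ((convex_ball _ _).inter (convex_ball _ _))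
      (fun w hw => ⟨re_mem_ball hw.1, re_mem_ball hw.2⟩)
      (G := fun w => G x' w - G x w)
      (fun w hw => (hG x' w hw.1).sub (hG x w hw.2))
      (fun w hw => by rw [hGf x' w hw.1, hGf x w hw.2, sub_self]) z ⟨hx', hz⟩
    exact sub_eq_zero.1 this
  refine ⟨F, fun x => ⟨?_, ?_⟩⟩
  · refine (hG x _ (mem_ball_self (hr x))).congr ?_
    filter_upwards [ball_mem_nhds _ (hr x)] with z hz
    exact (hF x z hz).symm
  · rw [hF x _ (mem_ball_self (hr x)), hGf x x (mem_ball_self (hr x))]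

/-! ### Global real-analytic syzygies -/

/-- A local real-analytic syzygy of globally defined functions can be replaced by a global one, keeping
the `i₀`-th entry nonzero at the given point. -/
theorem global_syzygy {n : ℕ} {p : Type} [Fintype p] {b c : p → (Fin n → ℝ) → ℝ}
    (hb : ∀ o x, AnalyticAt ℝ (b o) x) {x₀ : Fin n → ℝ} (hc : ∀ o, AnalyticAt ℝ (c o) x₀)
    (hbc : ∀ᶠ y in 𝓝 x₀, ∑ o, b o y * c o y = 0) {i₀ : p} (hi₀ : c i₀ x₀ ≠ 0) :
    ∃ s : p → (Fin n → ℝ) → ℝ, (∀ o x, AnalyticAt ℝ (s o) x) ∧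
      (∀ x, ∑ o, b o x * s o x = 0) ∧ s i₀ x₀ ≠ 0 := by
  choose F hFa hFb using fun o => exists_complexification (hb o)
  choose r hr E hE hEc using fun o => exists_local_extension (hc o)
  set O : Set (Fin n → ℂ) := ⋂ o, {z | AnalyticAt ℂ (F o) z} with hOdef
  have hO : IsOpen O := isOpen_iInter_of_finite fun o => isOpen_analyticAt ℂ (F o)
  have hreal : ∀ x : Fin n → ℝ, (fun j => (x j : ℂ)) ∈ O := fun x =>
    mem_iInter.2 fun o => hFa o x
  obtain ⟨Ψ, θ, hΨ, hθ⟩ := straighten hO hreal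
  -- the relation between the holomorphic extensions near the real point
  have hrel : ∀ᶠ z in 𝓝 (realPt x₀), ∑ o, F o z * E o z = 0 := by
    obtain ⟨ε₁, hε₁, h1⟩ := Metric.isOpen_iff.1 hO _ (hreal x₀)
    obtain ⟨ε₂, hε₂, h2⟩ := Metric.eventually_nhds_iff.1 hbc
    have h3 : ∀ᶠ ε in 𝓝[>] (0:ℝ), ∀ o, ε < r o :=
      eventually_all.2 fun o => (eventually_lt_nhds (hr o)).filter_mono nhdsWithin_le_nhds
    have h4 : ∀ᶠ ε in 𝓝[>] (0:ℝ), ε < ε₁ ∧ ε < ε₂ ∧ 0 < ε :=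
      ((eventually_lt_nhds hε₁).filter_mono nhdsWithin_le_nhds).and
        (((eventually_lt_nhds hε₂).filter_mono nhdsWithin_le_nhds).and self_mem_nhdsWithin)
    obtain ⟨ε, hεr, hεε₁, hεε₂, hε⟩ := (h3.and h4).exists
    have h5 := eq_zero_of_real (U := ball (realPt x₀) ε) isOpen_ball (convex_ball _ _)
      (fun z hz => re_mem_ball hz) (G := fun z => ∑ o, F o z * E o z)
      (fun z hz => Finset.analyticAt_fun_sum _ fun o _ =>
        (mem_iInter.1 (h1 (ball_subset_ball hεε₁.le hz)) o :
          AnalyticAt ℂ (F o) z).mul (hE o z (ball_subset_ball (hεr o).le hz)))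
      (fun x hx => by
        have hx2 : dist x x₀ < ε₂ := by
          refine lt_of_le_of_lt ?_ hεε₂
          rw [mem_ball, dist_pi_lt_iff hε] at hx
          refine (dist_pi_le_iff hε.le).2 fun j => ?_
          have := (hx j).le
          rwa [Complex.dist_of_im_eq (by simp), Complex.ofReal_re, Complex.ofReal_re] at this
        have h6 : ∑ o, F o (realPt x) * E o (realPt x) = ((∑ o, b o x * c o x : ℝ) : ℂ) := by
          rw [Complex.ofReal_sum]
          refine Finset.sum_congr rfl fun o _ => ?_
          rw [hFb, hEc o x (ball_subset_ball (hεr o).le hx), Complex.ofReal_mul]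
        rw [h6, h2 hx2, Complex.ofReal_zero])
    filter_upwards [ball_mem_nhds _ hε] with z hz using h5 z hz
  obtain ⟨hθa, hθU, hΨθ⟩ := hθ x₀
  have hΨc : ContinuousAt Ψ (θ x₀) := (hΨ _ hθU).1.continuousAt
  have hM : ∀ y ∈ UD n, AnMatAt (fun ξ => (Matrix.of fun (_ : Unit) o => F o (Ψ ξ))) y := by
    intro y hy i o
    exact AnalyticAt.fun_comp (g := F o) (mem_iInter.1 (hΨ y hy).2 o) (hΨ y hy).1
  have hcan : AnalyticAt ℂ (fun ξ o => E o (Ψ ξ)) (θ x₀) := by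
    refine analyticAt_pi_iff.2 fun o => AnalyticAt.fun_comp (g := E o) ?_ (hΨ _ hθU).1
    rw [hΨθ]
    exact hE o _ (mem_ball_self (hr o))
  have hMc : ∀ᶠ ξ in 𝓝 (θ x₀), Matrix.mulVec (Matrix.of fun (_ : Unit) o => F o (Ψ ξ))
      (fun o => E o (Ψ ξ)) = 0 := by
    have : ∀ᶠ ξ in 𝓝 (θ x₀), ∑ o, F o (Ψ ξ) * E o (Ψ ξ) = 0 :=
      hΨc.eventually (p := fun z => ∑ o, F o z * E o z = 0) (by rw [hΨθ]; exact hrel)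
    filter_upwards [this] with ξ hξ
    funext i
    simpa [Matrix.mulVec, dotProduct] using hξ
  obtain ⟨s, hs, hs0⟩ := exists_global_section hM hθU hcan hMc (i₀ := i₀) (by
    rw [hΨθ, hEc i₀ x₀ (mem_ball_self (hr i₀))]
    exact_mod_cast hi₀)
  set σ := s (θ x₀) i₀ with hσ
  refine ⟨fun o x => ((starRingEnd ℂ σ) * s (θ x) o).re, fun o x => ?_, fun x => ?_, ?_⟩
  · have h1 : AnalyticAt ℝ (fun ξ => s ξ o) (θ x) :=
      (analyticAt_pi_iff.1 (hs _ (hθ x).2.1).1 o).restrictScalars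
    have h2 := AnalyticAt.fun_comp (g := fun ξ => s ξ o) h1 (hθ x).1
    exact (Complex.reCLM.analyticAt _).comp' (analyticAt_const.mul h2)
  · have h1 := congrFun (hs _ (hθ x).2.1).2 ()
    simp only [Matrix.mulVec, dotProduct, Matrix.of_apply, Pi.zero_apply] at h1
    rw [(hθ x).2.2] at h1
    have h2 : ∑ o, b o x * ((starRingEnd ℂ σ) * s (θ x) o).re =
        ((starRingEnd ℂ σ) * ∑ o, F o (realPt x) * s (θ x) o).re := by
      rw [Finset.mul_sum, Complex.re_sum]
      refine Finset.sum_congr rfl fun o _ => ?_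
      rw [hFb, mul_left_comm, Complex.re_ofReal_mul]
    rw [h2, h1, mul_zero, Complex.zero_re]
  · simp only
    rw [← hσ, mul_comm, Complex.mul_conj, Complex.ofReal_re]
    exact ne_of_gt (Complex.normSq_pos.2 hs0)

/-! ### Comparison of the three sets -/

lemma C1_subset_C2 (n : ℕ) (a : Set (ORn n)) : C1 n a ⊆ C2 n a := by
  intro g hg x
  obtain ⟨h, hx, hm⟩ := hg {x} isCompact_singleton
  exact ⟨h, hx x rfl, hm⟩

/-- On a compact set, finitely many multipliers `hᵢ` have no common zero, and `∑ hᵢ²` is then a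
multiplier without zeros there. -/
lemma C2_subset_C1 (n : ℕ) (a : Ideal (ORn n)) : C2 n (a : Set (ORn n)) ⊆ C1 n a := by
  intro g hg K hK
  choose h hh hm using hg
  obtain ⟨t, -, ht⟩ := hK.elim_nhds_subcover
    (fun x => {y | (h x : (Fin n → ℝ) → ℝ) y ≠ 0})
    (fun x _ => ((h x).2 x).continuousAt.eventually_ne (hh x))
  have heval : ∀ y, ((∑ x ∈ t, h x * h x : ORn n) : (Fin n → ℝ) → ℝ) y =
      ∑ x ∈ t, (h x : (Fin n → ℝ) → ℝ) y * (h x : (Fin n → ℝ) → ℝ) y := by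
    intro y
    rw [AddSubmonoidClass.coe_finset_sum, Finset.sum_apply]
    rfl
  refine ⟨∑ x ∈ t, h x * h x, fun y hy => ?_, ?_⟩
  · rw [heval]
    obtain ⟨x, hxt, hxy⟩ := mem_iUnion₂.1 (ht hy)
    exact (Finset.sum_pos' (fun i _ => mul_self_nonneg ((h i : (Fin n → ℝ) → ℝ) y))
      ⟨x, hxt, mul_self_pos.2 hxy⟩).ne'
  · rw [Finset.sum_mul]
    refine a.sum_mem fun x _ => ?_
    rw [mul_assoc]
    exact a.mul_mem_left _ (hm x)

lemma C2_subset_saturation (n : ℕ) (a : Set (ORn n)) : C2 n a ⊆ saturation n a := by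
  intro g hg x
  obtain ⟨h, hx, hm⟩ := hg x
  refine ⟨{y | (h : (Fin n → ℝ) → ℝ) y ≠ 0}, ?_, hx, 1, fun _ => h * g,
    fun _ y => ((h : (Fin n → ℝ) → ℝ) y)⁻¹, fun _ => hm, fun _ y hy => (h.2 y).inv hy,
    fun y hy => ?_⟩
  · have hc : Continuous (h : (Fin n → ℝ) → ℝ) :=
      continuous_iff_continuousAt.2 fun y => (h.2 y).continuousAt
    exact isOpen_ne_fun hc continuous_const
  · rw [mem_setOf_eq] at hy
    rw [Fin.sum_univ_one, Subring.coe_mul, Pi.mul_apply, inv_mul_cancel_left₀ hy]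

/-- A local expression `g = ∑ cᵢ aᵢ` is the syzygy `(1, c₁, …, c_r)` of `(g, -a₁, …, -a_r)`, whose
first entry does not vanish; a global syzygy with the same property yields the multiplier. -/
lemma saturation_subset_C2 (n : ℕ) (a : Ideal (ORn n)) :
    saturation n (a : Set (ORn n)) ⊆ C2 n a := by
  intro g hg x
  obtain ⟨U, hU, hxU, r, A, c, hA, hc, hgc⟩ := hg x
  obtain ⟨s, hs, hs0, hsx⟩ := global_syzygy (p := Option (Fin r)) (x₀ := x) (i₀ := none)
    (b := fun o => o.elim (g : (Fin n → ℝ) → ℝ) fun i y => -(A i : (Fin n → ℝ) → ℝ) y)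
    (c := fun o => o.elim (fun _ => 1) c)
    (by rintro (_ | i) y
        · exact g.2 y
        · exact ((A i).2 y).neg)
    (by rintro (_ | i)
        · exact analyticAt_const
        · exact hc i x hxU)
    (by filter_upwards [hU.mem_nhds hxU] with y hy
        rw [Fintype.sum_option]
        simp only [Option.elim_none, Option.elim_some, hgc y hy, mul_one, neg_mul,
          Finset.sum_neg_distrib]
        simp [mul_comm])
    one_ne_zero
  refine ⟨⟨s none, hs none⟩, hsx, ?_⟩
  have heq : (⟨s none, hs none⟩ : ORn n) * g = ∑ i, (⟨s (some i), hs (some i)⟩ : ORn n) * A i := by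
    ext y
    rw [AddSubmonoidClass.coe_finset_sum, Finset.sum_apply]
    simp only [Subring.coe_mul, Pi.mul_apply]
    have := hs0 y
    rw [Fintype.sum_option] at this
    simp only [Option.elim_none, Option.elim_some, neg_mul, Finset.sum_neg_distrib] at this
    rw [mul_comm]
    simp only [mul_comm (s (some _) y)]
    linarith
  rw [heq]
  exact a.sum_mem fun i _ => a.mul_mem_left _ (hA i)

theorem stmt_4 (n : ℕ) (a : Ideal (ORn n)) :
    saturation n (a : Set (ORn n)) = C1 n (a : Set (ORn n)) ∧
    C1 n (a : Set (ORn n)) = C2 n (a : Set (ORn n)) := by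
  have h12 : C1 n (a : Set (ORn n)) = C2 n (a : Set (ORn n)) :=
    (C1_subset_C2 n a).antisymm (C2_subset_C1 n a)
  refine ⟨?_, h12⟩
  rw [h12]
  exact (saturation_subset_C2 n a).antisymm (C2_subset_saturation n a)
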